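/- arXiv:2501.10333 — 2 statements merged into one kernel-verified Lean document; each statement's English description precedes it below -/
import Mathlib

section
/- There exists an integer M such that for all integers m ≥ M and all integers n with 2 ≤ n ≤ m-2, one has δ_0(n,m) > (log n)/(2·log m). -/
/-- `Llcm n m` is the least common multiple of the integers strictly between `n` and `m`,
i.e. of `{n+1, ..., m-1}`. -/
def Llcm (n m : ℕ) : ℕ := (Finset.Ioo n m).lcm id

/-- `delta r n m` is the density `δ_r(n,m)` of positive integers with exactly `r`
divisors in the open interval `(n, m)`: the proportion of `x ∈ {1, ..., Llcm n m}`
having exactly `r` divisors `d` with `n < d < m`. -/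
def delta (r n m : ℕ) : ℚ :=
  (((Finset.Icc 1 (Llcm n m)).filter
      (fun x => ((Finset.Ioo n m).filter (fun d => d ∣ x)).card = r)).card : ℚ) /
    (Llcm n m : ℚ)

open Finset in
lemma card_filter_Icc_mul_of_periodic (p : ℕ → Prop) [DecidablePred p] {T : ℕ}
    (hp : Function.Periodic p T) (K : ℕ) :
    #{x ∈ Icc 1 (K * T) | p x} = K * #{x ∈ Icc 1 T | p x} := by
  have hcount (N : ℕ) (hN : Function.Periodic p N) : #{x ∈ Icc 1 N | p x} = Nat.count p N := by
    rw [← Nat.filter_Ico_card_eq_of_periodic 1 N p hN, add_comm 1 N]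
    rfl
  have hmul (K : ℕ) : Function.Periodic p (K * T) := by simpa using hp.nat_mul K
  rw [hcount _ (hmul K), hcount _ hp]
  induction K with
  | zero => simp
  | succ K ih =>
    rw [add_mul, one_mul, Nat.count_add, ih, add_mul, one_mul]
    congr 1
    simp only [add_comm (K * T), hmul K _]

lemma periodic_card_divisors_Ioo (n m r : ℕ) :
    Function.Periodic (fun x ↦ ((Finset.Ioo n m).filter (fun d => d ∣ x)).card = r)
      (Llcm n m) := by
  intro x
  have : (Finset.Ioo n m).filter (fun d => d ∣ x + Llcm n m)
      = (Finset.Ioo n m).filter (fun d => d ∣ x) :=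
    Finset.filter_congr fun d hd ↦ (Nat.dvd_add_left (Finset.dvd_lcm hd : id d ∣ Llcm n m))
  simp only [this]

lemma periodic_coprime (D : ℕ) : Function.Periodic (fun x ↦ Nat.Coprime D x) D := by
  intro x
  simp

lemma Llcm_pos (n m : ℕ) : 0 < Llcm n m := by
  refine Nat.pos_of_ne_zero ?_
  rw [Llcm, Ne, Finset.lcm_eq_zero_iff]
  simp

lemma primeFactors_factorial_sub_one (m : ℕ) :
    (Nat.factorial (m - 1)).primeFactors = m.primesBelow := by
  ext p
  simp only [Nat.mem_primeFactors, Nat.mem_primesBelow]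
  constructor
  · rintro ⟨hp, h, -⟩
    have := (hp.dvd_factorial).1 h
    have := hp.two_le
    exact ⟨by omega, hp⟩
  · rintro ⟨h, hp⟩
    exact ⟨hp, hp.dvd_factorial.2 (by omega), Nat.factorial_ne_zero _⟩

open Finset in
/-- Counting the multiples `a * y` with `a ≤ n` and `y` free of prime factors below `m`. -/
lemma sum_inv_mul_prod_le_delta {n m : ℕ} (hnm : n < m) :
    (∑ a ∈ Icc 1 n, (a : ℚ)⁻¹) * ∏ p ∈ m.primesBelow, (1 - (p : ℚ)⁻¹) ≤ delta 0 n m := by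
  set D := (m - 1).factorial with hD
  set L := Llcm n m with hL
  have hDpos : 0 < D := Nat.factorial_pos _
  have hLpos : 0 < L := Llcm_pos n m
  set good : ℕ → Prop := fun x ↦ #{d ∈ Ioo n m | d ∣ x} = 0 with hgood
  have key : ∑ a ∈ Icc 1 n, (n.factorial / a * L) * D.totient
      ≤ (n.factorial * D) * #{x ∈ Icc 1 L | good x} := by
    rw [← card_filter_Icc_mul_of_periodic good (periodic_card_divisors_Ioo n m 0)]
    have hcop (K : ℕ) : K * D.totient = #{y ∈ Icc 1 (K * D) | D.Coprime y} := by
      rw [card_filter_Icc_mul_of_periodic _ (periodic_coprime D),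
        ← Nat.filter_coprime_Ico_eq_totient D 1, add_comm 1 D]
      rfl
    simp_rw [hcop]
    rw [← card_sigma]
    have hsmall {d y : ℕ} (h0 : 0 < d) (hd : d < m) (hy : D.Coprime y) : d.Coprime y :=
      Nat.Coprime.coprime_dvd_left (Nat.dvd_factorial h0 (by omega)) hy
    refine card_le_card_of_injOn (fun x ↦ x.1 * x.2) ?_ ?_
    · rintro ⟨a, y⟩ h
      simp only [mem_coe, mem_sigma, mem_Icc, mem_filter] at h ⊢
      obtain ⟨⟨ha1, han⟩, ⟨hy1, hy⟩, hc⟩ := h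
      refine ⟨⟨Nat.mul_pos ha1 hy1, ?_⟩, ?_⟩
      · calc a * y ≤ a * (n.factorial / a * L * D) := Nat.mul_le_mul_left _ hy
          _ = (a * (n.factorial / a)) * D * L := by ring
          _ = n.factorial * D * L := by
            rw [Nat.mul_div_cancel' (Nat.dvd_factorial ha1 han)]
      · simp only [hgood, card_eq_zero, filter_eq_empty_iff, mem_Ioo]
        rintro d ⟨h1, h2⟩ hd
        have := Nat.le_of_dvd ha1 ((hsmall (by omega) h2 hc).dvd_of_dvd_mul_right hd)
        omega
    · rintro ⟨a, y⟩ h ⟨b, z⟩ h' heq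
      simp only [mem_coe, mem_sigma, mem_Icc, mem_filter] at h h' heq
      obtain ⟨⟨ha1, han⟩, ⟨hy1, hy⟩, hc⟩ := h
      obtain ⟨⟨hb1, hbn⟩, ⟨hz1, hz⟩, hc'⟩ := h'
      have h1 : a ∣ b := (hsmall ha1 (by omega) hc').dvd_of_dvd_mul_right
        (heq ▸ Dvd.intro _ rfl)
      have h2 : b ∣ a := (hsmall hb1 (by omega) hc).dvd_of_dvd_mul_right
        (heq ▸ Dvd.intro _ rfl)
      obtain rfl := Nat.dvd_antisymm h1 h2
      obtain rfl := Nat.eq_of_mul_eq_mul_left ha1 heq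
      rfl
  have hq : (∑ a ∈ Icc 1 n, ((n.factorial : ℚ) / a * L) * D.totient)
      ≤ (n.factorial * D) * #{x ∈ Icc 1 L | good x} := by
    refine le_trans (le_of_eq ?_) (by exact_mod_cast key :
      ((∑ a ∈ Icc 1 n, (n.factorial / a * L) * D.totient : ℕ) : ℚ) ≤ _)
    push_cast
    refine sum_congr rfl fun a ha ↦ ?_
    obtain ⟨h1, h2⟩ := mem_Icc.1 ha
    rw [Nat.cast_div (Nat.dvd_factorial h1 h2) (by positivity)]
  have htot : (D.totient : ℚ) = D * ∏ p ∈ m.primesBelow, (1 - (p : ℚ)⁻¹) := by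
    rw [Nat.totient_eq_mul_prod_factors, hD, primeFactors_factorial_sub_one]
  have hn0 : (0 : ℚ) < n.factorial := by exact_mod_cast Nat.factorial_pos n
  have hD0 : (0 : ℚ) < D := by exact_mod_cast hDpos
  have hL0 : (0 : ℚ) < L := by exact_mod_cast hLpos
  change _ ≤ (#{x ∈ Icc 1 L | good x} : ℚ) / L
  rw [le_div_iff₀ hL0]
  refine le_of_mul_le_mul_left (le_trans (le_of_eq ?_) hq) (mul_pos hn0 hD0)
  rw [← sum_mul, htot]
  simp_rw [div_eq_mul_inv]
  rw [← sum_mul, ← mul_sum]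
  ring

section Mertens

open Finset Filter Topology Real

/-- The logarithm of the Euler factor `(1 - 1/p)⁻¹` at a prime `p`, and zero elsewhere. -/
noncomputable def primeWeight (k : ℕ) : ℝ := if k.Prime then -log (1 - (k : ℝ)⁻¹) else 0

lemma primeWeight_of_prime {p : ℕ} (hp : p.Prime) : primeWeight p = -log (1 - (p : ℝ)⁻¹) :=
  if_pos hp

lemma primeWeight_bounds {p : ℕ} (hp : p.Prime) :
    (p : ℝ)⁻¹ ≤ primeWeight p ∧ primeWeight p ≤ ((p : ℝ) - 1)⁻¹ := by
  have h2 : (2 : ℝ) ≤ p := by exact_mod_cast hp.two_le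
  have hpos : 0 < 1 - (p : ℝ)⁻¹ := by
    have := inv_lt_one_of_one_lt₀ (by linarith : (1 : ℝ) < p)
    linarith
  rw [primeWeight_of_prime hp]
  constructor
  · have := log_le_sub_one_of_pos hpos
    linarith
  · have := one_sub_inv_le_log_of_pos hpos
    have h : (1 - (p : ℝ)⁻¹)⁻¹ - 1 = ((p : ℝ) - 1)⁻¹ := by
      have : (p : ℝ) - 1 ≠ 0 := by linarith
      field_simp
      ring
    linarith

lemma primeWeight_nonneg (k : ℕ) : 0 ≤ primeWeight k := by
  by_cases hk : k.Prime
  · exact le_trans (by positivity) (primeWeight_bounds hk).1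
  · simp [primeWeight, hk]

/-- The error made when replacing `log p / (p - 1)` by `log p / p`. -/
noncomputable def primeError (k : ℕ) : ℝ := if k.Prime then log k / (k * (k - 1)) else 0

lemma primeError_nonneg (k : ℕ) : 0 ≤ primeError k := by
  unfold primeError
  split_ifs with hk
  · have h2 : (2 : ℝ) ≤ k := by exact_mod_cast hk.two_le
    have := log_nonneg (by linarith : (1 : ℝ) ≤ k)
    have : (0 : ℝ) ≤ k - 1 := by linarith
    positivity
  · exact le_rfl

lemma summable_primeError : Summable primeError := by
  refine Summable.of_nonneg_of_le primeError_nonneg (fun k ↦ ?_)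
    ((summable_nat_rpow_inv.2 (by norm_num : (1 : ℝ) < 3 / 2)).mul_left 4)
  unfold primeError
  split_ifs with hk
  · have h2 : (2 : ℝ) ≤ k := by exact_mod_cast hk.two_le
    have h0 : (0 : ℝ) < k := by linarith
    have hlog := log_le_rpow_div h0.le (by norm_num : (0 : ℝ) < 1 / 2)
    rw [div_le_iff₀ (by nlinarith)]
    have hpow : ((k : ℝ) ^ (3 / 2 : ℝ))⁻¹ * (k * k) = (k : ℝ) ^ (1 / 2 : ℝ) := by
      rw [← sq, ← rpow_two, ← rpow_neg h0.le, ← rpow_add h0]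
      norm_num
    have hk2 : (k : ℝ) * k / 2 ≤ k * (k - 1) := by nlinarith
    calc log k ≤ (k : ℝ) ^ (1 / 2 : ℝ) / (1 / 2) := hlog
      _ = 4 * ((k : ℝ) ^ (3 / 2 : ℝ))⁻¹ * (k * k / 2) := by rw [← hpow]; ring
      _ ≤ _ := by gcongr
  · positivity

lemma sum_primeError_le (s : Finset ℕ) : ∑ k ∈ s, primeError k ≤ ∑' k, primeError k :=
  summable_primeError.sum_le_tsum s fun k _ ↦ primeError_nonneg k

lemma log_factorial_eq_sum (n : ℕ) :
    log n.factorial = ∑ p ∈ n.primesLE, (n.factorial.factorization p : ℝ) * log p := by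
  conv_lhs => rw [← Nat.prod_factorization_pow_eq_self n.factorial_ne_zero]
  have hsupp : n.factorial.factorization.support ⊆ n.primesLE := by
    intro p hp
    rw [Nat.support_factorization, Nat.mem_primeFactors] at hp
    have := hp.1.dvd_factorial.1 hp.2.1
    simp [Nat.primesLE, Nat.mem_primesBelow, hp.1]
    omega
  rw [Finsupp.prod_of_support_subset _ hsupp _ (by simp), Nat.cast_prod, log_prod]
  · exact sum_congr rfl fun p _ ↦ by rw [Nat.cast_pow, log_pow]
  · intro p hp
    have := (Nat.mem_primesBelow.1 hp).2.pos
    positivity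

lemma log_sub_one_le_sum_log_div_sub_one {n : ℕ} (hn : n ≠ 0) :
    log n - 1 ≤ ∑ p ∈ n.primesLE, log p / (p - 1) := by
  have hn0 : (1 : ℝ) ≤ n := by exact_mod_cast Nat.one_le_iff_ne_zero.2 hn
  have h1 := Stirling.le_log_factorial_stirling hn
  have h2 : 0 ≤ log (n : ℝ) := log_nonneg hn0
  have h3 : 0 ≤ log (2 * π) := log_nonneg (by nlinarith [pi_gt_three])
  have h4 : log n.factorial ≤ n * ∑ p ∈ n.primesLE, log p / (p - 1) := by
    rw [log_factorial_eq_sum, mul_sum]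
    refine sum_le_sum fun p hp ↦ ?_
    have hp' := (Nat.mem_primesBelow.1 hp).2
    have hv := Nat.factorization_factorial_le_div_pred hp' n
    have hp2 : (2 : ℝ) ≤ p := by exact_mod_cast hp'.two_le
    have hv' : (n.factorial.factorization p : ℝ) ≤ n / (p - 1) := by
      refine (by exact_mod_cast hv : (n.factorial.factorization p : ℝ) ≤ (n / (p - 1) : ℕ)).trans ?_
      refine Nat.cast_div_le.trans (le_of_eq ?_)
      rw [Nat.cast_sub hp'.one_le, Nat.cast_one]
    have hlog : 0 ≤ log (p : ℝ) := log_nonneg (by linarith)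
    calc _ ≤ (n : ℝ) / (p - 1) * log p := by gcongr
      _ = _ := by ring
  have h5 : (n : ℝ) * (log n - 1) ≤ n * ∑ p ∈ n.primesLE, log p / (p - 1) := by linarith
  exact le_of_mul_le_mul_left h5 (by linarith)

lemma sum_log_div_le (n : ℕ) (hn : n ≠ 0) :
    ∑ p ∈ n.primesLE, log p / p ≤ log n + log 4 := by
  have hn0 : (1 : ℝ) ≤ n := by exact_mod_cast Nat.one_le_iff_ne_zero.2 hn
  have h1 : log n.factorial ≤ n * log n := by
    rw [← log_pow]
    exact log_le_log (by exact_mod_cast n.factorial_pos) (by exact_mod_cast n.factorial_le_pow)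
  have h2 := Chebyshev.theta_le_log4_mul_x (Nat.cast_nonneg n : (0 : ℝ) ≤ n)
  rw [Chebyshev.theta_eq_sum_primesLE_log] at h2
  have h3 : n * ∑ p ∈ n.primesLE, log p / p ≤ log n.factorial + ∑ p ∈ n.primesLE, log p := by
    rw [log_factorial_eq_sum, mul_sum, ← sum_add_distrib]
    refine sum_le_sum fun p hp ↦ ?_
    have hp' := (Nat.mem_primesBelow.1 hp).2
    have hpn : p ≤ n := Nat.lt_succ_iff.1 (Nat.mem_primesBelow.1 hp).1
    have hv : n / p ≤ n.factorial.factorization p := by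
      rw [Nat.factorization_factorial hp' (Nat.lt_succ_self _)]
      refine le_trans (by simp) (single_le_sum (f := fun i ↦ n / p ^ i) (fun _ _ ↦ Nat.zero_le _)
        (mem_Ico.2 ⟨le_rfl, Nat.succ_lt_succ (Nat.log_pos hp'.one_lt hpn)⟩ : 1 ∈ _))
    have hv' : (n : ℝ) / p ≤ n.factorial.factorization p + 1 := by
      have : (n : ℝ) / p < (n / p : ℕ) + 1 := by
        rw [← Nat.floor_div_eq_div (K := ℝ)]
        exact Nat.lt_floor_add_one _
      have hc : ((n / p : ℕ) : ℝ) ≤ n.factorial.factorization p := by exact_mod_cast hv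
      linarith
    have hp2 : (2 : ℝ) ≤ p := by exact_mod_cast hp'.two_le
    have hlog : 0 ≤ log (p : ℝ) := log_nonneg (by linarith)
    calc (n : ℝ) * (log p / p) = n / p * log p := by ring
      _ ≤ (n.factorial.factorization p + 1) * log p := by gcongr
      _ = _ := by ring
  have h5 : (n : ℝ) * ∑ p ∈ n.primesLE, log p / p ≤ n * (log n + log 4) := by linarith
  exact le_of_mul_le_mul_left h5 (by linarith)

lemma sum_range_succ_eq_sum_primesLE {f : ℕ → ℝ} (hf : ∀ k, ¬ k.Prime → f k = 0) (n : ℕ) :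
    ∑ k ∈ range (n + 1), f k = ∑ p ∈ n.primesLE, f p := by
  rw [Nat.primesLE, Nat.primesBelow, sum_filter]
  exact sum_congr rfl fun k _ ↦ by split_ifs with h; exacts [rfl, hf k h]

/-- Mertens' first theorem. -/
lemma exists_abs_sum_primeWeight_mul_log_sub_log_le :
    ∃ C, ∀ n : ℕ, n ≠ 0 → |∑ k ∈ range (n + 1), primeWeight k * log k - log n| ≤ C := by
  refine ⟨log 4 + 1 + ∑' k, primeError k, fun n hn ↦ ?_⟩
  have hE := sum_primeError_le n.primesLE
  have hlog4 : 0 ≤ log 4 := log_nonneg (by norm_num)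
  have h1 := log_sub_one_le_sum_log_div_sub_one hn
  have h2 := sum_log_div_le n hn
  rw [sum_range_succ_eq_sum_primesLE (by intro k hk; simp [primeWeight, hk])]
  have h3 : ∑ p ∈ n.primesLE, log p / (p - 1)
      = ∑ p ∈ n.primesLE, log p / p + ∑ p ∈ n.primesLE, primeError p := by
    rw [← sum_add_distrib]
    refine sum_congr rfl fun p hp ↦ ?_
    have hp' := (Nat.mem_primesBelow.1 hp).2
    have hp2 : (2 : ℝ) ≤ p := by exact_mod_cast hp'.two_le
    have : (p : ℝ) - 1 ≠ 0 := by linarith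
    rw [primeError, if_pos hp']
    field_simp
    ring
  have h4 : ∑ p ∈ n.primesLE, log p / p ≤ ∑ p ∈ n.primesLE, primeWeight p * log p := by
    refine sum_le_sum fun p hp ↦ ?_
    have hp' := (Nat.mem_primesBelow.1 hp).2
    have hp2 : (2 : ℝ) ≤ p := by exact_mod_cast hp'.two_le
    have hlog : 0 ≤ log (p : ℝ) := log_nonneg (by linarith)
    rw [div_eq_inv_mul]
    exact mul_le_mul_of_nonneg_right (primeWeight_bounds hp').1 hlog
  have h5 : ∑ p ∈ n.primesLE, primeWeight p * log p ≤ ∑ p ∈ n.primesLE, log p / (p - 1) := by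
    refine sum_le_sum fun p hp ↦ ?_
    have hp' := (Nat.mem_primesBelow.1 hp).2
    have hp2 : (2 : ℝ) ≤ p := by exact_mod_cast hp'.two_le
    have hlog : 0 ≤ log (p : ℝ) := log_nonneg (by linarith)
    rw [div_eq_inv_mul]
    exact mul_le_mul_of_nonneg_right (primeWeight_bounds hp').2 hlog
  rw [abs_le]
  constructor <;> linarith

/-- Partial summation: bounded error in `∑ a k * log k` yields convergence of
`∑ a k - log log n`. -/
lemma exists_tendsto_sum_sub_log_log {a : ℕ → ℝ} {C : ℝ}
    (hC : ∀ n : ℕ, n ≠ 0 → |∑ k ∈ range (n + 1), a k * log k - log n| ≤ C) :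
    ∃ b, Tendsto (fun n : ℕ ↦ ∑ k ∈ range (n + 1), a k - log (log n)) atTop (𝓝 b) := by
  set D : ℕ → ℝ := fun n ↦ ∑ k ∈ range (n + 1), a k * log k - log n with hD
  set T : ℕ → ℝ := fun n ↦ ∑ k ∈ range (n + 1), a k - log (log n) - D n / log n with hT
  set K := C + log 2 with hK
  have hstep (n : ℕ) (hn : 2 ≤ n) :
      |T (n + 1) - T n| ≤ K * ((log n)⁻¹ - (log (n + 1 : ℕ))⁻¹) := by
    have hn2 : (2 : ℝ) ≤ n := by exact_mod_cast hn
    set v := log (n : ℝ) with hv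
    set u := log ((n + 1 : ℕ) : ℝ) with hu
    have hv0 : 0 < v := log_pos (by linarith)
    have hvu : v ≤ u := log_le_log (by linarith) (by push_cast; linarith)
    have hu0 : 0 < u := hv0.trans_le hvu
    have huv : u - v ≤ log 2 := by
      rw [hu, hv, ← log_div (by positivity) (by positivity)]
      refine log_le_log (by positivity) ?_
      rw [div_le_iff₀ (by linarith)]
      push_cast
      linarith
    have hdiff : T (n + 1) - T n
        = D n * (v⁻¹ - u⁻¹) + ((u - v) / u - (log u - log v)) := by
      have hD1 : D (n + 1) = D n + a (n + 1) * u - (u - v) := by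
        simp only [hD, sum_range_succ _ (n + 1), ← hu, ← hv]
        ring
      simp only [hT, hD1, sum_range_succ _ (n + 1), ← hu, ← hv]
      field_simp
      ring
    have hlog1 : (u - v) / u ≤ log u - log v := by
      have := one_sub_inv_le_log_of_pos (div_pos hu0 hv0)
      rw [log_div hu0.ne' hv0.ne', inv_div] at this
      rwa [sub_div, div_self hu0.ne']
    have hlog2 : log u - log v ≤ (u - v) / v := by
      have := log_le_sub_one_of_pos (div_pos hu0 hv0)
      rw [log_div hu0.ne' hv0.ne'] at this
      rwa [sub_div, div_self hv0.ne']
    have hinv : 0 ≤ v⁻¹ - u⁻¹ := sub_nonneg.2 (inv_anti₀ hv0 hvu)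
    have h1 : |D n * (v⁻¹ - u⁻¹)| ≤ C * (v⁻¹ - u⁻¹) := by
      rw [abs_mul, abs_of_nonneg hinv]
      exact mul_le_mul_of_nonneg_right (hC n (by omega)) hinv
    have h2 : |(u - v) / u - (log u - log v)| ≤ log 2 * (v⁻¹ - u⁻¹) := by
      rw [abs_of_nonpos (by linarith)]
      calc _ ≤ (u - v) / v - (u - v) / u := by linarith
        _ = (u - v) * (v⁻¹ - u⁻¹) := by ring
        _ ≤ _ := mul_le_mul_of_nonneg_right huv hinv
    rw [hdiff, hK, add_mul]
    exact (abs_add_le _ _).trans (add_le_add h1 h2)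
  have hloginv : Tendsto (fun n : ℕ ↦ (log (n : ℝ))⁻¹) atTop (𝓝 0) :=
    tendsto_inv_atTop_zero.comp (tendsto_log_atTop.comp tendsto_natCast_atTop_atTop)
  have hanti : Antitone fun n : ℕ ↦ T (n + 2) + K * (log (n + 2 : ℕ))⁻¹ := by
    refine antitone_nat_of_succ_le fun n ↦ ?_
    have := (abs_le.1 (hstep (n + 2) (by omega))).2
    rw [show n + 1 + 2 = n + 2 + 1 by ring]
    linarith
  have hmono : Monotone fun n : ℕ ↦ T (n + 2) - K * (log (n + 2 : ℕ))⁻¹ := by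
    refine monotone_nat_of_le_succ fun n ↦ ?_
    have := (abs_le.1 (hstep (n + 2) (by omega))).1
    rw [show n + 1 + 2 = n + 2 + 1 by ring]
    linarith
  have hK0 : 0 ≤ K := add_nonneg ((abs_nonneg _).trans (hC 1 one_ne_zero))
    (log_nonneg (by norm_num))
  have hbdd : BddBelow (Set.range fun n : ℕ ↦ T (n + 2) + K * (log (n + 2 : ℕ))⁻¹) := by
    refine ⟨T (0 + 2) - K * (log (0 + 2 : ℕ))⁻¹, ?_⟩
    rintro _ ⟨n, rfl⟩
    refine (hmono (Nat.zero_le n)).trans ?_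
    have : 0 ≤ K * (log (n + 2 : ℕ))⁻¹ :=
      mul_nonneg hK0 (inv_nonneg.2 (log_nonneg (by push_cast; linarith [(n.cast_nonneg : (0 : ℝ) ≤ n)])))
    simp only
    linarith
  have hlim := tendsto_atTop_ciInf hanti hbdd
  rw [tendsto_add_atTop_iff_nat (f := fun n : ℕ ↦ T n + K * (log (n : ℝ))⁻¹) 2] at hlim
  refine ⟨_, ((hlim.sub (hloginv.const_mul K)).add
    (?_ : Tendsto (fun n : ℕ ↦ D n / log n) atTop (𝓝 0))).congr fun n ↦ ?_⟩
  · refine squeeze_zero_norm' ?_ (by simpa using hloginv.const_mul C)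
    filter_upwards [eventually_ge_atTop 1] with n hn
    have : 0 ≤ log (n : ℝ) := log_nonneg (by exact_mod_cast hn)
    rw [norm_eq_abs, abs_div, abs_of_nonneg this, div_eq_mul_inv]
    exact mul_le_mul_of_nonneg_right (hC n (by omega)) (by positivity)
  · simp only [hT]
    ring

lemma rpow_neg_one_add_le {ε : ℝ} (hε : 0 < ε) (n : ℕ) :
    ((n + 2 : ℕ) : ℝ) ^ (-(1 + ε))
      ≤ (((n + 1 : ℕ) : ℝ) ^ (-ε) - ((n + 2 : ℕ) : ℝ) ^ (-ε)) / ε := by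
  set x : ℝ := ((n + 2 : ℕ) : ℝ) with hx
  have hx2 : 2 ≤ x := by rw [hx]; push_cast; linarith [(n.cast_nonneg : (0 : ℝ) ≤ n)]
  have hx1 : ((n + 1 : ℕ) : ℝ) = x * (1 - x⁻¹) := by
    rw [mul_sub, mul_inv_cancel₀ (by linarith), hx]
    push_cast
    ring
  have hy : 0 < 1 - x⁻¹ := by
    have := inv_lt_one_of_one_lt₀ (by linarith : (1 : ℝ) < x)
    linarith
  have h1 : 1 + ε * x⁻¹ ≤ (1 - x⁻¹) ^ (-ε) := by
    rw [rpow_def_of_pos hy]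
    have h2 := add_one_le_exp (log (1 - x⁻¹) * -ε)
    have h3 := log_le_sub_one_of_pos hy
    nlinarith
  rw [hx1, mul_rpow (by linarith) hy.le, le_div_iff₀ hε, neg_add, rpow_add (by linarith),
    rpow_neg_one]
  have h4 : 0 ≤ x ^ (-ε) := by positivity
  nlinarith

lemma tsum_rpow_neg_one_add_le {ε : ℝ} (hε : 0 < ε) :
    ∑' n : ℕ, (n : ℝ) ^ (-(1 + ε)) ≤ 1 + ε⁻¹ := by
  have hsum : Summable fun n : ℕ ↦ (n : ℝ) ^ (-(1 + ε)) :=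
    summable_nat_rpow.2 (by linarith)
  rw [← hsum.sum_add_tsum_nat_add 2]
  have h0 : ∑ i ∈ range 2, (i : ℝ) ^ (-(1 + ε)) = 1 := by
    rw [sum_range_succ, sum_range_one, Nat.cast_zero, zero_rpow (by linarith)]
    simp
  rw [h0]
  refine add_le_add_right (Real.tsum_le_of_sum_range_le (fun n ↦ by positivity) fun N ↦ ?_) _
  calc ∑ n ∈ range N, ((n + 2 : ℕ) : ℝ) ^ (-(1 + ε))
      ≤ ∑ n ∈ range N, (((n + 1 : ℕ) : ℝ) ^ (-ε) - ((n + 1 + 1 : ℕ) : ℝ) ^ (-ε)) / ε :=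
        sum_le_sum fun n _ ↦ rpow_neg_one_add_le hε n
    _ = (1 - ((N + 1 : ℕ) : ℝ) ^ (-ε)) / ε := by
      rw [← sum_div, sum_range_sub' fun n : ℕ ↦ ((n + 1 : ℕ) : ℝ) ^ (-ε)]
      simp
    _ ≤ ε⁻¹ := by
      rw [div_eq_mul_inv]
      refine mul_le_of_le_one_left (by positivity) ?_
      have : (0 : ℝ) ≤ ((N + 1 : ℕ) : ℝ) ^ (-ε) := by positivity
      linarith

/-- The truncated Euler product is bounded by the zeta function. -/
lemma sum_neg_log_one_sub_rpow_le {ε : ℝ} (hε : 0 < ε) (N : ℕ) :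
    ∑ p ∈ N.primesBelow, -log (1 - (p : ℝ) ^ (-(1 + ε))) ≤ log (1 + ε⁻¹) := by
  let f : ℕ →* ℝ :=
    { toFun := fun k ↦ (k : ℝ) ^ (-(1 + ε))
      map_one' := by simp
      map_mul' := fun a b ↦ by
        rw [Nat.cast_mul, mul_rpow (Nat.cast_nonneg a) (Nat.cast_nonneg b)] }
  have hf (k : ℕ) : f k = (k : ℝ) ^ (-(1 + ε)) := rfl
  have hsum : Summable f := summable_nat_rpow.2 (by linarith)
  have hlt {p : ℕ} (hp : p.Prime) : 0 < 1 - f p := by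
    rw [hf, sub_pos]
    exact rpow_lt_one_of_one_lt_of_neg (by exact_mod_cast hp.one_lt) (by linarith)
  have hprod : ∏ p ∈ N.primesBelow, (1 - f p)⁻¹ ≤ 1 + ε⁻¹ := by
    rw [EulerProduct.prod_primesBelow_geometric_eq_tsum_smoothNumbers hsum]
    refine le_trans ?_ (tsum_rpow_neg_one_add_le hε)
    exact hsum.tsum_subtype_le (f := fun n ↦ f n) _ (fun n ↦ by rw [hf]; positivity)
  have hpos : 0 < ∏ p ∈ N.primesBelow, (1 - f p)⁻¹ :=
    prod_pos fun p hp ↦ inv_pos.2 (hlt (Nat.mem_primesBelow.1 hp).2)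
  refine le_trans (le_of_eq ?_) (log_le_log hpos hprod)
  rw [log_prod fun p hp ↦ (inv_pos.2 (hlt (Nat.mem_primesBelow.1 hp).2)).ne']
  exact sum_congr rfl fun p _ ↦ by rw [log_inv, hf]

lemma primeWeight_mul_rpow_le {ε : ℝ} (hε : 0 < ε) {p : ℕ} (hp : p.Prime) :
    primeWeight p * (p : ℝ) ^ (-ε)
      ≤ -log (1 - (p : ℝ) ^ (-(1 + ε))) + ε * primeError p := by
  have hp2 : (2 : ℝ) ≤ p := by exact_mod_cast hp.two_le
  have hp0 : (0 : ℝ) < p := by linarith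
  set q := (p : ℝ) ^ (-ε) with hq
  set y := (p : ℝ)⁻¹ with hy
  have hq1 : q ≤ 1 := rpow_le_one_of_one_le_of_nonpos (by linarith) (by linarith)
  have hq0 : 0 < q := rpow_pos_of_pos hp0 _
  have hy0 : 0 < y := inv_pos.2 hp0
  have hy1 : 0 < 1 - y := by
    have := inv_lt_one_of_one_lt₀ (by linarith : (1 : ℝ) < p)
    linarith
  have hqy : 0 < 1 - y * q := by nlinarith
  have hpow : (p : ℝ) ^ (-(1 + ε)) = y * q := by
    rw [neg_add, rpow_add hp0, rpow_neg_one]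
  rw [hpow]
  have hqlog : 1 - q ≤ ε * log p := by
    have := add_one_le_exp (log p * -ε)
    rw [hq, rpow_def_of_pos hp0]
    linarith
  have htangent : log (1 - y * q) - log (1 - y) ≤ (1 - q) * ((p : ℝ) - 1)⁻¹ := by
    rw [← log_div hqy.ne' hy1.ne']
    refine (log_le_sub_one_of_pos (div_pos hqy hy1)).trans (le_of_eq ?_)
    have h1 : (p : ℝ) - 1 ≠ 0 := by linarith
    have h2 : 1 - y = y * (p - 1) := by
      rw [hy]; field_simp
    rw [h2, hy]
    field_simp
    ring
  have hw := (primeWeight_bounds hp).1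
  have herr : primeError p = log p * (((p : ℝ) - 1)⁻¹ - y) := by
    have h1 : (p : ℝ) - 1 ≠ 0 := by linarith
    rw [primeError, if_pos hp, hy]
    field_simp
    ring
  have hpos : 0 ≤ ((p : ℝ) - 1)⁻¹ - y := sub_nonneg.2 (inv_anti₀ (by linarith) (by linarith))
  have hw' := primeWeight_of_prime hp
  rw [← hy] at hw hw'
  calc primeWeight p * q = primeWeight p - (1 - q) * primeWeight p := by ring
    _ ≤ primeWeight p - (1 - q) * y := by nlinarith
    _ ≤ -log (1 - y * q) + (1 - q) * (((p : ℝ) - 1)⁻¹ - y) := by rw [hw']; linarith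
    _ ≤ -log (1 - y * q) + ε * log p * (((p : ℝ) - 1)⁻¹ - y) := by gcongr
    _ = _ := by rw [herr]; ring

lemma sum_primeWeight_mul_rpow_le {ε : ℝ} (hε : 0 < ε) (N : ℕ) :
    ∑ k ∈ range N, primeWeight k * (k : ℝ) ^ (-ε)
      ≤ log (1 + ε⁻¹) + ε * ∑' k, primeError k := by
  calc ∑ k ∈ range N, primeWeight k * (k : ℝ) ^ (-ε)
      = ∑ p ∈ N.primesBelow, primeWeight p * (p : ℝ) ^ (-ε) := by
        rw [Nat.primesBelow, sum_filter]
        exact sum_congr rfl fun k _ ↦ by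
          split_ifs with h
          · rfl
          · simp [primeWeight, h]
    _ ≤ ∑ p ∈ N.primesBelow, (-log (1 - (p : ℝ) ^ (-(1 + ε))) + ε * primeError p) :=
        sum_le_sum fun p hp ↦ primeWeight_mul_rpow_le hε (Nat.mem_primesBelow.1 hp).2
    _ ≤ _ := by
        rw [sum_add_distrib, ← mul_sum]
        have := sum_neg_log_one_sub_rpow_le hε N
        have := sum_primeError_le N.primesBelow
        gcongr

open MeasureTheory Set in
lemma integral_exp_neg_mul_log :
    IntegrableOn (fun u : ℝ ↦ exp (-u) * log u) (Ioi 0) ∧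
      ∫ u in Ioi (0 : ℝ), exp (-u) * log u = -eulerMascheroniConstant := by
  have h1 := Complex.hasDerivAt_GammaIntegral (s := 1) (by simp)
  have h2 : Complex.Gamma =ᶠ[𝓝 1] Complex.GammaIntegral := by
    have : {s : ℂ | 0 < s.re} ∈ 𝓝 (1 : ℂ) :=
      (isOpen_lt continuous_const Complex.continuous_re).mem_nhds (by simp)
    filter_upwards [this] with s hs using Complex.Gamma_eq_integral hs
  have h3 := (h1.congr_of_eventuallyEq h2).unique Complex.hasDerivAt_Gamma_one
  have h4 : ∫ u in Ioi (0 : ℝ), exp (-u) * log u = -eulerMascheroniConstant := by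
    apply Complex.ofReal_injective
    rw [← integral_complex_ofReal, Complex.ofReal_neg, ← h3]
    refine integral_congr_ae (Eventually.of_forall fun t ↦ ?_)
    simp [mul_comm]
  refine ⟨?_, h4⟩
  by_contra h
  rw [integral_undef h] at h4
  linarith [one_half_lt_eulerMascheroniConstant]

open MeasureTheory Set in
lemma integral_mul_exp_neg_mul_log_add {ε : ℝ} (hε : 0 < ε) (c : ℝ) :
    IntegrableOn (fun t : ℝ ↦ ε * exp (-ε * t) * (log t + c)) (Ioi 0) ∧
      ∫ t in Ioi (0 : ℝ), ε * exp (-ε * t) * (log t + c)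
        = -eulerMascheroniConstant - log ε + c := by
  obtain ⟨hi, hv⟩ := integral_exp_neg_mul_log
  set g : ℝ → ℝ := fun u ↦ ε * (exp (-u) * log u + (c - log ε) * exp (-u)) with hg
  have hexp : IntegrableOn (fun u : ℝ ↦ (c - log ε) * exp (-u)) (Ioi 0) := by
    have := (integrableOn_exp_mul_Ioi (a := -1) (by norm_num) 0).const_mul (c - log ε)
    simpa [IntegrableOn] using this
  have hgi : IntegrableOn g (Ioi 0) := (hi.add hexp).const_mul ε
  have heq : EqOn (fun t : ℝ ↦ ε * exp (-ε * t) * (log t + c)) (fun t ↦ g (ε * t)) (Ioi 0) := by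
    intro t ht
    simp only [hg]
    rw [log_mul hε.ne' (ne_of_gt ht), neg_mul]
    ring
  have hg0 : ∫ u in Ioi (0 : ℝ), g u = ε * (-eulerMascheroniConstant + (c - log ε)) := by
    simp only [hg]
    rw [integral_const_mul, integral_add hi hexp, hv, integral_const_mul, integral_exp_neg_Ioi]
    simp
  constructor
  · rw [integrableOn_congr_fun heq measurableSet_Ioi, integrableOn_Ioi_comp_mul_left_iff g 0 hε]
    simpa using hgi
  · rw [setIntegral_congr_fun measurableSet_Ioi heq, integral_comp_mul_left_Ioi g 0 hε, mul_zero,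
      hg0, smul_eq_mul]
    field_simp
    ring

lemma tendsto_log_log_succ_sub :
    Tendsto (fun n : ℕ ↦ log (log (n + 1 : ℕ)) - log (log n)) atTop (𝓝 0) := by
  have hloginv : Tendsto (fun n : ℕ ↦ log 2 * (log (n : ℝ))⁻¹) atTop (𝓝 0) := by
    simpa using (tendsto_inv_atTop_zero.comp
      (tendsto_log_atTop.comp tendsto_natCast_atTop_atTop)).const_mul (log 2)
  refine squeeze_zero' ?_ ?_ hloginv
  all_goals
    filter_upwards [eventually_ge_atTop 2] with n hn
    have hn2 : (2 : ℝ) ≤ n := by exact_mod_cast hn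
    set v := log (n : ℝ) with hv
    set u := log ((n + 1 : ℕ) : ℝ) with hu
    have hv0 : 0 < v := log_pos (by linarith)
    have hvu : v ≤ u := log_le_log (by linarith) (by push_cast; linarith)
  · exact sub_nonneg.2 (log_le_log hv0 hvu)
  · have huv : u - v ≤ log 2 := by
      rw [hu, hv, ← log_div (by positivity) (by positivity)]
      refine log_le_log (by positivity) ?_
      rw [div_le_iff₀ (by linarith)]
      push_cast
      linarith
    have h1 := log_le_sub_one_of_pos (div_pos (hv0.trans_le hvu) hv0)
    rw [log_div (hv0.trans_le hvu).ne' hv0.ne'] at h1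
    refine h1.trans ?_
    rw [← div_eq_mul_inv, ← div_self hv0.ne', ← sub_div]
    gcongr

open MeasureTheory Set in
lemma integral_le_of_forall_le_sum {ε T : ℝ} (hε : 0 < ε) (hT : 1 ≤ T) {L : ℝ → ℝ}
    (hL : IntegrableOn (fun t ↦ ε * exp (-ε * t) * L t) (Ioi T))
    (hle : ∀ t, T < t → L t ≤ ∑ k ∈ Finset.range (⌊exp t⌋₊ + 1), primeWeight k) :
    ∫ t in Ioi T, ε * exp (-ε * t) * L t ≤ log (1 + ε⁻¹) + ε * ∑' k, primeError k := by
  set w : ℝ → ℝ := fun t ↦ ε * exp (-ε * t) with hw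
  have hwi (a : ℝ) : IntegrableOn w (Ioi a) :=
    (integrableOn_exp_mul_Ioi (neg_lt_zero.2 hε) a).const_mul ε
  have hw0 (t : ℝ) : 0 ≤ w t := by positivity
  have hwint (a : ℝ) : ∫ t in Ioi a, w t = exp (-ε * a) := by
    simp only [hw]
    rw [integral_const_mul, integral_exp_mul_Ioi (neg_lt_zero.2 hε)]
    field_simp
  have hNlim : Tendsto (fun N : ℕ ↦ log (N : ℝ)) atTop atTop :=
    tendsto_log_atTop.comp tendsto_natCast_atTop_atTop
  refine le_of_tendsto (intervalIntegral_tendsto_integral_Ioi T hL hNlim) ?_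
  filter_upwards [hNlim.eventually_ge_atTop T] with N hN
  refine le_trans ?_ (sum_primeWeight_mul_rpow_le hε (N + 1))
  rw [intervalIntegral.integral_of_le hN]
  set F : ℕ → ℝ → ℝ := fun k t ↦ primeWeight k * (Ici (log (k : ℝ))).indicator w t with hF
  have hF0 (k : ℕ) (t : ℝ) : 0 ≤ F k t :=
    mul_nonneg (primeWeight_nonneg k) (indicator_nonneg (fun t _ ↦ hw0 t) t)
  have hFi (k : ℕ) : IntegrableOn (F k) (Ioi 0) :=
    ((hwi 0).indicator measurableSet_Ici).const_mul _
  have hFint (k : ℕ) : ∫ t in Ioi 0, F k t = primeWeight k * (k : ℝ) ^ (-ε) := by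
    by_cases hk : k.Prime
    · have hk1 : (1 : ℝ) < k := by exact_mod_cast hk.one_lt
      have hsub : Set.Ioi (0 : ℝ) ∩ Set.Ici (log (k : ℝ)) = Set.Ici (log (k : ℝ)) :=
        Set.inter_eq_right.2 fun t ht ↦ (log_pos hk1).trans_le ht
      simp only [hF]
      rw [integral_const_mul, setIntegral_indicator measurableSet_Ici, hsub,
        integral_Ici_eq_integral_Ioi, hwint, rpow_def_of_pos (by linarith)]
      ring_nf
    · simp [hF, primeWeight, hk]
  have hsumi : IntegrableOn (fun t ↦ ∑ k ∈ Finset.range (N + 1), F k t) (Ioi 0) :=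
    integrable_finsetSum _ fun k _ ↦ hFi k
  calc ∫ t in Ioc T (log N), w t * L t
      ≤ ∫ t in Ioc T (log N), ∑ k ∈ Finset.range (N + 1), F k t := by
        refine setIntegral_mono_on (hL.mono_set Ioc_subset_Ioi_self)
          (hsumi.mono_set fun t ht ↦ (zero_lt_one.trans_le hT).trans ht.1) measurableSet_Ioc ?_
        intro t ht
        have hN0 : (0 : ℝ) < N := by
          rcases Nat.eq_zero_or_pos N with rfl | h
          · simp at hN; linarith
          · exact_mod_cast h
        have hfl : ⌊exp t⌋₊ ≤ N := by
          refine Nat.floor_le_of_le ?_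
          rw [← exp_log hN0]
          exact exp_le_exp.2 ht.2
        calc w t * L t ≤ w t * ∑ k ∈ Finset.range (⌊exp t⌋₊ + 1), primeWeight k :=
              mul_le_mul_of_nonneg_left (hle t ht.1) (hw0 t)
          _ = ∑ k ∈ Finset.range (⌊exp t⌋₊ + 1), F k t := by
              rw [Finset.mul_sum]
              refine Finset.sum_congr rfl fun k hk ↦ ?_
              by_cases hk' : k.Prime
              · have hkt : log (k : ℝ) ≤ t := by
                  rw [log_le_iff_le_exp (by exact_mod_cast hk'.pos)]
                  exact (Nat.le_floor_iff (exp_pos t).le).1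
                    (Nat.lt_succ_iff.1 (Finset.mem_range.1 hk))
                simp only [hF]
                rw [indicator_of_mem (Set.mem_Ici.2 hkt), mul_comm]
              · simp [hF, primeWeight, hk']
          _ ≤ _ := Finset.sum_le_sum_of_subset_of_nonneg
              (Finset.range_mono (Nat.succ_le_succ hfl)) fun k _ _ ↦ hF0 k t
    _ ≤ ∫ t in Ioi 0, ∑ k ∈ Finset.range (N + 1), F k t :=
        setIntegral_mono_set hsumi
          (Eventually.of_forall fun t ↦ Finset.sum_nonneg fun k _ ↦ hF0 k t)
          (Eventually.of_forall fun t (ht : t ∈ Ioc T (log N)) ↦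
            ((zero_lt_one.trans_le hT).trans ht.1 : (0 : ℝ) < t))
    _ = _ := by
        rw [integral_finsetSum _ fun k _ ↦ hFi k]
        exact Finset.sum_congr rfl fun k _ ↦ hFint k

open MeasureTheory Set in
/-- The upper bound half of the identification of the constant in Mertens' third theorem. -/
lemma le_eulerMascheroniConstant_of_tendsto {b : ℝ}
    (hb : Tendsto (fun n : ℕ ↦ ∑ k ∈ Finset.range (n + 1), primeWeight k - log (log n))
      atTop (𝓝 b)) : b ≤ eulerMascheroniConstant := by
  refine le_of_forall_pos_le_add fun η hη ↦ ?_
  have hev : ∀ᶠ t : ℝ in atTop,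
      log t + (b - η) ≤ ∑ k ∈ Finset.range (⌊exp t⌋₊ + 1), primeWeight k := by
    have h1 := (hb.sub tendsto_log_log_succ_sub).eventually_const_lt
      (by linarith : b - η < b - 0)
    have h2 := (tendsto_nat_floor_atTop.comp tendsto_exp_atTop).eventually h1
    filter_upwards [h2, eventually_gt_atTop 0] with t ht ht0
    simp only [Function.comp_apply] at ht
    have h3 : t ≤ log ((⌊exp t⌋₊ + 1 : ℕ) : ℝ) := by
      rw [le_log_iff_exp_le (by positivity)]
      push_cast
      exact (Nat.lt_floor_add_one _).le
    have h4 := log_le_log ht0 h3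
    linarith
  obtain ⟨T₀, hT₀⟩ := eventually_atTop.1 hev
  set T := max T₀ 1 with hT
  have hT1 : 1 ≤ T := le_max_right _ _
  set M := log T + |b| with hM
  have hlogT : 0 ≤ log T := log_nonneg hT1
  have hM0 : 0 ≤ M := add_nonneg hlogT (abs_nonneg b)
  have hbound (ε : ℝ) (hε : 0 < ε) :
      b ≤ eulerMascheroniConstant + η + ε * (1 + ∑' k, primeError k + M * T) := by
    obtain ⟨hi, hv⟩ := integral_mul_exp_neg_mul_log_add hε (b - η)
    have hi' := hi.mono_set (Ioi_subset_Ioi (by linarith : (0 : ℝ) ≤ T))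
    have h1 := integral_le_of_forall_le_sum (L := fun t ↦ log t + (b - η)) hε hT1 hi'
      fun t ht ↦ hT₀ t ((le_max_left _ _).trans ht.le)
    have h2 : ∫ t in Ioc 0 T, ε * exp (-ε * t) * (log t + (b - η)) ≤ ε * M * T := by
      calc _ ≤ ∫ t in Ioc 0 T, ε * M := by
            refine setIntegral_mono_on (hi.mono_set Ioc_subset_Ioi_self)
              (integrableOn_const measure_Ioc_lt_top.ne) measurableSet_Ioc fun t ht ↦ ?_
            have h3 : log t + (b - η) ≤ M := by
              have := log_le_log ht.1 ht.2
              have := le_abs_self b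
              linarith
            have h4 : ε * exp (-ε * t) ≤ ε :=
              mul_le_of_le_one_right hε.le (exp_le_one_iff.2 (by nlinarith [ht.1]))
            exact (mul_le_mul_of_nonneg_left h3 (by positivity)).trans
              (mul_le_mul_of_nonneg_right h4 hM0)
        _ = _ := by
            simp [le_trans zero_le_one hT1]
            ring
    rw [← Ioc_union_Ioi_eq_Ioi (by linarith : (0 : ℝ) ≤ T),
      setIntegral_union (Ioc_disjoint_Ioi le_rfl) measurableSet_Ioi
        (hi.mono_set Ioc_subset_Ioi_self) hi'] at hv
    have h5 : log (1 + ε⁻¹) + log ε ≤ ε := by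
      rw [← log_mul (by positivity) hε.ne', add_mul, inv_mul_cancel₀ hε.ne', one_mul]
      linarith [log_le_sub_one_of_pos (by linarith : 0 < ε + 1)]
    nlinarith
  have hlim : Tendsto (fun ε : ℝ ↦ eulerMascheroniConstant + η
      + ε * (1 + ∑' k, primeError k + M * T)) (𝓝[>] 0) (𝓝 (eulerMascheroniConstant + η)) := by
    have : Continuous fun ε : ℝ ↦ eulerMascheroniConstant + η
      + ε * (1 + ∑' k, primeError k + M * T) := by fun_prop
    simpa using (this.tendsto 0).mono_left nhdsWithin_le_nhds
  exact ge_of_tendsto hlim (eventually_mem_nhdsWithin.mono fun ε hε ↦ hbound ε hε)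

/-- A weak form of Mertens' third theorem; the sharp constant in place of `2` is `exp γ`. -/
lemma eventually_inv_lt_prod_one_sub_inv :
    ∀ᶠ m : ℕ in atTop, (2 * log m)⁻¹ < ∏ p ∈ m.primesBelow, (1 - (p : ℝ)⁻¹) := by
  obtain ⟨C, hC⟩ := exists_abs_sum_primeWeight_mul_log_sub_log_le
  obtain ⟨b, hb⟩ := exists_tendsto_sum_sub_log_log hC
  have hb2 : b < log 2 := by
    linarith [le_eulerMascheroniConstant_of_tendsto hb, eulerMascheroniConstant_lt_two_thirds,
      log_two_gt_d9]
  filter_upwards [hb.eventually_lt_const hb2, eventually_ge_atTop 2] with m hm hm2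
  have hlog : 0 < log (m : ℝ) := log_pos (by exact_mod_cast hm2)
  have hpos : ∀ p ∈ m.primesBelow, 0 < 1 - (p : ℝ)⁻¹ := fun p hp ↦
    sub_pos.2 (inv_lt_one_of_one_lt₀ (by exact_mod_cast (Nat.mem_primesBelow.1 hp).2.one_lt))
  rw [← log_lt_log_iff (by positivity) (prod_pos hpos), log_prod fun p hp ↦ (hpos p hp).ne',
    log_inv, log_mul two_ne_zero hlog.ne']
  have h1 : ∑ p ∈ m.primesBelow, log (1 - (p : ℝ)⁻¹) = -∑ k ∈ range m, primeWeight k := by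
    rw [Nat.primesBelow, sum_filter, ← sum_neg_distrib]
    exact sum_congr rfl fun k _ ↦ by
      unfold primeWeight
      split_ifs <;> simp
  rw [sum_range_succ] at hm
  linarith [primeWeight_nonneg m]

end Mertens

/-- There is `M` such that for all `m ≥ M` and all `n` with `2 ≤ n ≤ m-2`,
`δ_0(n,m) > (log n)/(2·log m)`. -/
theorem delta_zero_lower_bound :
    ∃ M : ℕ, ∀ m : ℕ, M ≤ m → ∀ n : ℕ, 2 ≤ n → n + 2 ≤ m →
      Real.log n / (2 * Real.log m) < ((delta 0 n m : ℚ) : ℝ) := by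
  obtain ⟨M, hM⟩ := Filter.eventually_atTop.1 eventually_inv_lt_prod_one_sub_inv
  refine ⟨M, fun m hm n hn hnm ↦ ?_⟩
  have h1 := hM m hm
  have h2 : Real.log n ≤ ∑ a ∈ Finset.Icc 1 n, (a : ℝ)⁻¹ := by
    have h := log_add_one_le_harmonic n
    rw [harmonic_eq_sum_Icc] at h
    push_cast at h
    refine le_trans (Real.log_le_log ?_ ?_) h
    · exact_mod_cast (by omega : 0 < n)
    · linarith
  have h3 : 0 < Real.log n := Real.log_pos (by exact_mod_cast hn)
  have h4 : (((∑ a ∈ Finset.Icc 1 n, (a : ℚ)⁻¹) * ∏ p ∈ m.primesBelow, (1 - (p : ℚ)⁻¹) : ℚ) : ℝ)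
      ≤ ((delta 0 n m : ℚ) : ℝ) := by
    exact_mod_cast sum_inv_mul_prod_le_delta (by omega : n < m)
  push_cast at h4
  have h5 : (0 : ℝ) ≤ (2 * Real.log m)⁻¹ := by
    have := Real.log_natCast_nonneg m
    positivity
  calc Real.log n / (2 * Real.log m) = Real.log n * (2 * Real.log m)⁻¹ := div_eq_mul_inv _ _
    _ < Real.log n * ∏ p ∈ m.primesBelow, (1 - (p : ℝ)⁻¹) := mul_lt_mul_of_pos_left h1 h3
    _ ≤ (∑ a ∈ Finset.Icc 1 n, (a : ℝ)⁻¹) * ∏ p ∈ m.primesBelow, (1 - (p : ℝ)⁻¹) :=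
      mul_le_mul_of_nonneg_right h2 (h5.trans h1.le)
    _ ≤ _ := h4
end

section
/- There exists a real constant c > 0 with the following property: for every real C > 0 there is an N such that for every integer n ≥ N there exist an integer t with t ≥ C·exp(n^c) and integers m_1 < m_1' < m_2 < m_2' < ⋯ < m_t < m_t', all at least n+2, such that δ_1(n, m_j + 1) > δ_1(n, m_j) and δ_1(n, m_j' + 1) < δ_1(n, m_j') for every 1 ≤ j ≤ t. In particular, the sequence (δ_1(n,m))_{m ≥ n+2} has superpolynomially many (in n) local maxima, and is thus very far from unimodal. -/
/-- Terms of the series `(s - 1) ζ(s) = 1 + ∑ zetaTerm s (k + 1)`, convergent for `0 < re s`. -/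
noncomputable def zetaTerm (s : ℂ) (k : ℕ) : ℂ :=
  (s - 1) * (k : ℂ) ^ (-s) + ((k + 1 : ℕ) : ℂ) ^ (1 - s) - (k : ℂ) ^ (1 - s)

lemma norm_zetaTerm_le {s : ℂ} (hs : 0 < s.re) {k : ℕ} (hk : 1 ≤ k) :
    ‖zetaTerm s k‖ ≤ ‖s - 1‖ * ‖s‖ * (k : ℝ) ^ (-s.re - 1) := by
  have hk0 : (0 : ℝ) < k := by exact_mod_cast hk
  have hder : ∀ (r : ℂ) (x : ℝ), 0 < x →
      HasDerivAt (fun y : ℝ => (y : ℂ) ^ r) (r * (x : ℂ) ^ (r - 1)) x := by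
    intro r x hx
    have h1 : HasDerivAt (fun z : ℂ => z ^ r) (r * (x : ℂ) ^ (r - 1) * 1) (x : ℂ) :=
      (hasDerivAt_id (x : ℂ)).cpow_const (Or.inl (by simpa using hx))
    simpa using h1.comp_ofReal
  have hneg : ∀ x ∈ Set.Icc (k : ℝ) (k + 1),
      ‖(x : ℂ) ^ (-s) - (k : ℂ) ^ (-s)‖ ≤ ‖s‖ * (k : ℝ) ^ (-s.re - 1) := by
    intro x hx
    have := (convex_Icc (k : ℝ) (k + 1)).norm_image_sub_le_of_norm_hasDerivWithin_le
      (f := fun y : ℝ => (y : ℂ) ^ (-s)) (f' := fun y : ℝ => -s * (y : ℂ) ^ (-s - 1))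
      (C := ‖s‖ * (k : ℝ) ^ (-s.re - 1))
      (fun y hy => (hder (-s) y (hk0.trans_le hy.1)).hasDerivWithinAt)
      (fun y hy => by
        have hy0 := hk0.trans_le hy.1
        rw [norm_mul, norm_neg, Complex.norm_cpow_eq_rpow_re_of_pos hy0]
        gcongr
        exact Real.rpow_le_rpow_of_nonpos hk0 hy.1 (by simp; linarith))
      (Set.left_mem_Icc.2 (by linarith)) hx
    refine this.trans (mul_le_of_le_one_right (by positivity) ?_)
    rw [Real.norm_eq_abs, abs_le]
    constructor <;> linarith [hx.1, hx.2]
  have key := (convex_Icc (k : ℝ) (k + 1)).norm_image_sub_le_of_norm_hasDerivWithin_le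
      (f := fun y : ℝ => (y : ℂ) ^ (1 - s) - (1 - s) * (k : ℂ) ^ (-s) * y)
      (f' := fun y : ℝ => (1 - s) * ((y : ℂ) ^ (-s) - (k : ℂ) ^ (-s)))
      (C := ‖s - 1‖ * (‖s‖ * (k : ℝ) ^ (-s.re - 1)))
      (fun y hy => by
        have h1 := hder (1 - s) y (hk0.trans_le hy.1)
        have h2 : HasDerivAt (fun y : ℝ => (1 - s) * (k : ℂ) ^ (-s) * y)
          ((1 - s) * (k : ℂ) ^ (-s)) y := by
          simpa using ((hasDerivAt_id (y : ℂ)).const_mul ((1 - s) * (k : ℂ) ^ (-s))).comp_ofReal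
        have h3 := (h1.fun_sub h2).hasDerivWithinAt (s := Set.Icc (k : ℝ) (k + 1))
        refine h3.congr_deriv ?_
        rw [show 1 - s - 1 = -s by ring]; ring)
      (fun y hy => by
        rw [norm_mul, norm_sub_rev 1 s]
        gcongr
        exact hneg y hy)
      (Set.left_mem_Icc.2 (by linarith)) (Set.right_mem_Icc.2 (by linarith))
  have : zetaTerm s k = ((k + 1 : ℝ) : ℂ) ^ (1 - s) - (1 - s) * (k : ℂ) ^ (-s) * (k + 1 : ℝ) -
      (((k : ℝ) : ℂ) ^ (1 - s) - (1 - s) * (k : ℂ) ^ (-s) * (k : ℝ)) := by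
    unfold zetaTerm; push_cast; ring
  rw [this]
  simpa [mul_assoc] using key

lemma zetaTerm_summable {s : ℂ} (hs : 0 < s.re) : Summable fun k : ℕ => zetaTerm s (k + 1) := by
  refine Summable.of_norm_bounded (g := fun k : ℕ => ‖s - 1‖ * ‖s‖ * ((k + 1 : ℕ) : ℝ) ^ (-s.re - 1))
    ?_ (fun k => norm_zetaTerm_le hs (by omega))
  refine Summable.mul_left _ ?_
  exact (summable_nat_add_iff 1).2 (Real.summable_nat_rpow.2 (by linarith))

lemma sum_zetaTerm (s : ℂ) (M : ℕ) : ∑ k ∈ Finset.range M, zetaTerm s (k + 1) =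
    (s - 1) * ∑ k ∈ Finset.range M, ((k + 1 : ℕ) : ℂ) ^ (-s) + ((M + 1 : ℕ) : ℂ) ^ (1 - s) - 1 := by
  induction M with
  | zero => simp
  | succ M ih =>
    rw [Finset.sum_range_succ, ih, Finset.sum_range_succ, zetaTerm]
    ring

lemma riemannZeta₁_eq_of_one_lt {s : ℂ} (hs : 1 < s.re) :
    riemannZeta₁ s = 1 + ∑' k : ℕ, zetaTerm s (k + 1) := by
  have hs1 : s ≠ 1 := by rintro rfl; simp at hs
  have h1 := (zetaTerm_summable (by linarith : 0 < s.re)).hasSum.tendsto_sum_nat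
  have h2 : Summable fun k : ℕ => ((k + 1 : ℕ) : ℂ) ^ (-s) := by
    have := (summable_nat_add_iff 1).2 (Complex.summable_one_div_nat_cpow.2 hs)
    refine this.congr fun k => ?_
    rw [Complex.cpow_neg, one_div]
  have h3 := h2.hasSum.tendsto_sum_nat
  have h4 : Filter.Tendsto (fun M : ℕ => ((M + 1 : ℕ) : ℂ) ^ (1 - s)) Filter.atTop (nhds 0) := by
    rw [tendsto_zero_iff_norm_tendsto_zero]
    have h5 : Filter.Tendsto (fun M : ℕ => ((M + 1 : ℕ) : ℝ) ^ (-(s.re - 1)))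
        Filter.atTop (nhds 0) :=
      (tendsto_rpow_neg_atTop (by linarith)).comp
        (tendsto_natCast_atTop_atTop.comp (Filter.tendsto_add_atTop_nat 1))
    refine h5.congr fun M => ?_
    rw [Complex.norm_natCast_cpow_of_pos (by omega)]
    simp
  have h6 := ((h3.const_mul (s - 1)).add h4).sub_const 1
  simp_rw [sum_zetaTerm] at h1
  have h7 := tendsto_nhds_unique h1 h6
  rw [h7]
  have h8 : riemannZeta s = ∑' k : ℕ, ((k + 1 : ℕ) : ℂ) ^ (-s) := by
    rw [zeta_eq_tsum_one_div_nat_add_one_cpow hs]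
    congr 1; ext k
    rw [Complex.cpow_neg, one_div]; push_cast; rfl
  rw [← h8, riemannZeta_eq_inv_sub_mul hs1]
  have := sub_ne_zero_of_ne hs1
  field_simp
  ring

lemma riemannZeta₁_eq {s : ℂ} (hs : 0 < s.re) :
    riemannZeta₁ s = 1 + ∑' k : ℕ, zetaTerm s (k + 1) := by
  have hopen : IsOpen {z : ℂ | 0 < z.re} := isOpen_lt continuous_const Complex.continuous_re
  have hdiff : DifferentiableOn ℂ (fun z => ∑' k : ℕ, zetaTerm z (k + 1)) {z : ℂ | 0 < z.re} := by
    intro z hz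
    have hz' : 0 < z.re := hz
    set U : Set ℂ := {w : ℂ | z.re / 2 < w.re} ∩ Metric.ball 0 (‖z‖ + 1) with hU
    have hUo : IsOpen U :=
      (isOpen_lt continuous_const Complex.continuous_re).inter Metric.isOpen_ball
    have hzU : z ∈ U := ⟨by simp only [Set.mem_ofPred_eq]; linarith, by simp⟩
    have : DifferentiableOn ℂ (fun z => ∑' k : ℕ, zetaTerm z (k + 1)) U := by
      refine Complex.differentiableOn_tsum_of_summable_norm
        (u := fun k : ℕ => (‖z‖ + 2) * (‖z‖ + 1) * ((k + 1 : ℕ) : ℝ) ^ (-(z.re / 2) - 1)) ?_ ?_ hUo ?_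
      · refine Summable.mul_left _ ?_
        exact (summable_nat_add_iff 1).2 (Real.summable_nat_rpow.2 (by linarith))
      · intro k w _
        unfold zetaTerm
        have h0 : ((k + 1 : ℕ) : ℂ) ≠ 0 := by exact_mod_cast (by omega : k + 1 ≠ 0)
        have h1 : ((k + 1 + 1 : ℕ) : ℂ) ≠ 0 := by exact_mod_cast (by omega : k + 1 + 1 ≠ 0)
        refine DifferentiableAt.differentiableWithinAt ?_
        fun_prop (disch := first | exact Or.inl h0 | exact Or.inl h1)
      · intro k w hw
        have hw1 : z.re / 2 < w.re := hw.1
        have hw2 : ‖w‖ < ‖z‖ + 1 := by simpa using hw.2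
        refine (norm_zetaTerm_le (by linarith) (by omega)).trans ?_
        have hk : (1 : ℝ) ≤ ((k + 1 : ℕ) : ℝ) := by exact_mod_cast Nat.le_add_left 1 k
        have : ‖w - 1‖ ≤ ‖z‖ + 2 := by
          have := norm_sub_le w 1; simp at this; linarith
        gcongr
    exact (this.differentiableAt (hUo.mem_nhds hzU)).differentiableWithinAt
  have hA : AnalyticOnNhd ℂ riemannZeta₁ {z : ℂ | 0 < z.re} :=
    differentiable_riemannZeta₁.differentiableOn.analyticOnNhd hopen
  have hB : AnalyticOnNhd ℂ (fun z => 1 + ∑' k : ℕ, zetaTerm z (k + 1)) {z : ℂ | 0 < z.re} :=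
    ((differentiableOn_const 1).add hdiff).analyticOnNhd hopen
  refine hA.eqOn_of_preconnected_of_eventuallyEq hB
    (convex_halfSpace_re_gt 0).isPreconnected (z₀ := 2) (by simp) ?_ hs
  have : {z : ℂ | 1 < z.re} ∈ nhds (2 : ℂ) :=
    (isOpen_lt continuous_const Complex.continuous_re).mem_nhds (by simp)
  filter_upwards [this] with z hz using riemannZeta₁_eq_of_one_lt hz

lemma exists_norm_riemannZeta_le : ∃ C : ℝ, 1 ≤ C ∧ ∀ L : ℝ, 2 ≤ L → ∀ s : ℂ, 1 - 1 / L ≤ s.re →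
    s.re ≤ 3 → 1 / 2 ≤ |s.im| → |s.im| ≤ 3 * Real.exp L → ‖riemannZeta s‖ ≤ C * L := by
  set K : ℝ := ∑' k : ℕ, ((k + 1 : ℕ) : ℝ) ^ (-(5 / 4 : ℝ)) with hK
  have hKs : Summable fun k : ℕ => ((k + 1 : ℕ) : ℝ) ^ (-(5 / 4 : ℝ)) :=
    (summable_nat_add_iff 1).2 (Real.summable_nat_rpow.2 (by norm_num))
  have hK0 : 0 ≤ K := tsum_nonneg fun k => by positivity
  refine ⟨20 * Real.exp 8 + 6 * K, ?_, ?_⟩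
  · have := Real.one_le_exp (show (0 : ℝ) ≤ 8 by norm_num); linarith
  intro L hL s hs1 hs3 him1 him2
  have hL0 : 0 < L := by linarith
  have hLinv : 1 / L ≤ 1 / 2 := one_div_le_one_div_of_le (by norm_num) hL
  have hre : 0 < s.re := by linarith
  have hne : s ≠ 1 := by rintro rfl; norm_num at him1
  have hne' := sub_ne_zero_of_ne hne
  have hs1norm : 1 / 2 ≤ ‖s - 1‖ := by
    have := Complex.abs_im_le_norm (s - 1); simp at this; linarith
  have hsnorm : ‖s‖ ≤ 6 * Real.exp L := by
    have h1 := Complex.norm_le_abs_re_add_abs_im s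
    rw [abs_of_pos hre] at h1
    have := Real.one_le_exp hL0.le
    linarith
  set X : ℝ := Real.exp (8 * L) with hX
  have hX0 : 0 < X := Real.exp_pos _
  have hX1 : 1 ≤ X := Real.one_le_exp (by positivity)
  set M : ℕ := ⌊X⌋₊ with hM
  have hMX : (M : ℝ) ≤ X := Nat.floor_le hX0.le
  have hXM : X < M + 1 := Nat.lt_floor_add_one X
  have hXL : X ^ (1 / L) = Real.exp 8 := by
    rw [hX, ← Real.exp_mul]; congr 1; field_simp
  have hS : ‖∑ k ∈ Finset.range M, ((k + 1 : ℕ) : ℂ) ^ (-s)‖ ≤ Real.exp 8 * (1 + 8 * L) := by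
    calc _ ≤ ∑ k ∈ Finset.range M, Real.exp 8 * ((k + 1 : ℕ) : ℝ)⁻¹ := by
          refine norm_sum_le_of_le _ fun k hk => ?_
          have hkM : ((k + 1 : ℕ) : ℝ) ≤ X :=
            (by exact_mod_cast Finset.mem_range.1 hk : ((k + 1 : ℕ) : ℝ) ≤ M).trans hMX
          have hk1 : (1 : ℝ) ≤ ((k + 1 : ℕ) : ℝ) := by exact_mod_cast Nat.le_add_left 1 k
          rw [Complex.norm_natCast_cpow_of_pos (by omega), Complex.neg_re]
          calc ((k + 1 : ℕ) : ℝ) ^ (-s.re) ≤ ((k + 1 : ℕ) : ℝ) ^ (1 / L + -1) :=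
                Real.rpow_le_rpow_of_exponent_le hk1 (by linarith)
            _ = ((k + 1 : ℕ) : ℝ) ^ (1 / L) * ((k + 1 : ℕ) : ℝ)⁻¹ := by
                rw [Real.rpow_add (by linarith), Real.rpow_neg_one]
            _ ≤ Real.exp 8 * ((k + 1 : ℕ) : ℝ)⁻¹ := by
                rw [← hXL]; gcongr
      _ = Real.exp 8 * ((harmonic M : ℚ) : ℝ) := by
          rw [← Finset.mul_sum, harmonic]; push_cast; rfl
      _ ≤ Real.exp 8 * (1 + Real.log M) := by gcongr; exact harmonic_le_one_add_log M
      _ ≤ Real.exp 8 * (1 + 8 * L) := by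
          gcongr
          rcases Nat.eq_zero_or_pos M with h | h
          · rw [h]; simp; positivity
          · rw [← Real.log_exp (8 * L)]
            exact Real.log_le_log (by exact_mod_cast h) hMX
  have hP : ‖((M + 1 : ℕ) : ℂ) ^ (1 - s)‖ ≤ 2 * Real.exp 8 := by
    rw [Complex.norm_natCast_cpow_of_pos (by omega)]
    have h1 : (1 : ℝ) ≤ ((M + 1 : ℕ) : ℝ) := by exact_mod_cast Nat.le_add_left 1 M
    calc ((M + 1 : ℕ) : ℝ) ^ (1 - s).re ≤ ((M + 1 : ℕ) : ℝ) ^ (1 / L) :=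
          Real.rpow_le_rpow_of_exponent_le h1 (by rw [Complex.sub_re, Complex.one_re]; linarith)
      _ ≤ (2 * X) ^ (1 / L) := by
          gcongr; push_cast; linarith
      _ = 2 ^ (1 / L) * Real.exp 8 := by rw [Real.mul_rpow (by norm_num) hX0.le, hXL]
      _ ≤ 2 ^ (1 : ℝ) * Real.exp 8 := by
          gcongr
          · norm_num
          · linarith
      _ = _ := by norm_num
  have hR : ‖∑' k : ℕ, zetaTerm s (k + M + 1)‖ ≤ ‖s - 1‖ * (6 * K) := by
    have hb : ∀ k : ℕ, ‖zetaTerm s (k + M + 1)‖ ≤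
        ‖s - 1‖ * ‖s‖ * (Real.exp (-2 * L) * ((k + 1 : ℕ) : ℝ) ^ (-(5 / 4 : ℝ))) := by
      intro k
      refine (norm_zetaTerm_le hre (by omega)).trans ?_
      gcongr
      have h1 : (1 : ℝ) ≤ ((k + M + 1 : ℕ) : ℝ) := by exact_mod_cast Nat.le_add_left 1 _
      calc ((k + M + 1 : ℕ) : ℝ) ^ (-s.re - 1) ≤ ((k + M + 1 : ℕ) : ℝ) ^ (-(1 / 4) + -(5 / 4 : ℝ)) :=
            Real.rpow_le_rpow_of_exponent_le h1 (by linarith)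
        _ = ((k + M + 1 : ℕ) : ℝ) ^ (-(1 / 4) : ℝ) * ((k + M + 1 : ℕ) : ℝ) ^ (-(5 / 4 : ℝ)) :=
            Real.rpow_add (by linarith) _ _
        _ ≤ X ^ (-(1 / 4) : ℝ) * ((k + 1 : ℕ) : ℝ) ^ (-(5 / 4 : ℝ)) := by
            gcongr ?_ * ?_
            · exact Real.rpow_le_rpow_of_nonpos hX0 (by push_cast; linarith [Nat.cast_nonneg (α := ℝ) k])
                (by norm_num)
            · exact Real.rpow_le_rpow_of_nonpos (by positivity) (by push_cast; linarith [Nat.cast_nonneg (α := ℝ) M])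
                (by norm_num)
        _ = _ := by rw [hX, ← Real.exp_mul]; congr 2; ring
    refine (tsum_of_norm_bounded ((hKs.hasSum.mul_left _).mul_left _) hb).trans ?_
    rw [← hK, mul_assoc]
    refine mul_le_mul_of_nonneg_left ?_ (norm_nonneg _)
    calc ‖s‖ * (Real.exp (-2 * L) * K) ≤ 6 * Real.exp L * (Real.exp (-2 * L) * K) := by gcongr
      _ = Real.exp (-L) * (6 * K) := by
          rw [show -L = L + -2 * L by ring, Real.exp_add]; ring
      _ ≤ 1 * (6 * K) := by
          gcongr
          exact Real.exp_le_one_iff.2 (by linarith)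
      _ = 6 * K := one_mul _
  have hZ : riemannZeta₁ s = (s - 1) * ∑ k ∈ Finset.range M, ((k + 1 : ℕ) : ℂ) ^ (-s) +
      (((M + 1 : ℕ) : ℂ) ^ (1 - s) + ∑' k : ℕ, zetaTerm s (k + M + 1)) := by
    rw [riemannZeta₁_eq hre, ← (zetaTerm_summable hre).sum_add_tsum_nat_add M, sum_zetaTerm]
    ring
  have hinv : ‖(s - 1)⁻¹‖ ≤ 2 := by
    rw [norm_inv]
    exact inv_le_of_inv_le₀ (by norm_num) (by linarith)
  have hz : riemannZeta s = ∑ k ∈ Finset.range M, ((k + 1 : ℕ) : ℂ) ^ (-s) +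
      (s - 1)⁻¹ * ((M + 1 : ℕ) : ℂ) ^ (1 - s) + (s - 1)⁻¹ * ∑' k : ℕ, zetaTerm s (k + M + 1) := by
    rw [riemannZeta_eq_inv_sub_mul hne, hZ]
    field_simp
    ring
  have h3 : ‖(s - 1)⁻¹ * ∑' k : ℕ, zetaTerm s (k + M + 1)‖ ≤ 6 * K := by
    rw [norm_mul, norm_inv, inv_mul_le_iff₀ (by linarith)]
    exact hR
  have h2 : ‖(s - 1)⁻¹ * ((M + 1 : ℕ) : ℂ) ^ (1 - s)‖ ≤ 2 * (2 * Real.exp 8) := by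
    rw [norm_mul]; gcongr
  rw [hz]
  refine (norm_add₃_le).trans ?_
  have he := Real.exp_pos 8
  nlinarith [mul_nonneg hK0 hL0.le]

lemma riemannZeta_three_four_one {x : ℝ} (hx : 0 < x) (y : ℝ) :
    1 ≤ ‖riemannZeta (1 + x)‖ ^ 3 * ‖riemannZeta (1 + x + Complex.I * y)‖ ^ 4 *
      ‖riemannZeta (1 + x + 2 * Complex.I * y)‖ := by
  have := DirichletCharacter.norm_LFunction_product_ge_one (N := 1) 1 hx y
  simpa [DirichletCharacter.LFunctionTrivChar, DirichletCharacter.LFunction_modOne_eq] using this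

lemma exists_norm_deriv_riemannZeta_le : ∃ C : ℝ, 1 ≤ C ∧
    (∀ L : ℝ, 2 ≤ L → ∀ s : ℂ, 1 - 1 / L ≤ s.re →
      s.re ≤ 3 → 1 / 2 ≤ |s.im| → |s.im| ≤ 3 * Real.exp L → ‖riemannZeta s‖ ≤ C * L) ∧
    ∀ L : ℝ, 2 ≤ L → ∀ s : ℂ, 1 - 1 / (2 * L) ≤ s.re →
      s.re ≤ 2 → 1 ≤ |s.im| → |s.im| ≤ Real.exp L → ‖deriv riemannZeta s‖ ≤ 2 * C * L ^ 2 := by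
  obtain ⟨C, hC1, hC⟩ := exists_norm_riemannZeta_le
  refine ⟨C, hC1, hC, fun L hL s h1 h2 h3 h4 => ?_⟩
  have hL0 : 0 < L := by linarith
  have hr : 0 < 1 / (2 * L) := by positivity
  have hr4 : 1 / (2 * L) ≤ 1 / 4 := one_div_le_one_div_of_le (by norm_num) (by linarith)
  have h2L : 1 / L = 1 / (2 * L) + 1 / (2 * L) := by field_simp; norm_num
  have hexp := Real.one_le_exp hL0.le
  have hball : ∀ z ∈ Metric.closedBall s (1 / (2 * L)), |z.re - s.re| ≤ 1 / (2 * L) ∧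
      |z.im - s.im| ≤ 1 / (2 * L) := by
    intro z hz
    rw [mem_closedBall_iff_norm] at hz
    exact ⟨(by simpa using Complex.abs_re_le_norm (z - s) : |z.re - s.re| ≤ ‖z - s‖).trans hz,
      (by simpa using Complex.abs_im_le_norm (z - s) : |z.im - s.im| ≤ ‖z - s‖).trans hz⟩
  have him : ∀ z ∈ Metric.closedBall s (1 / (2 * L)), 1 / 2 ≤ |z.im| ∧ |z.im| ≤ 3 * Real.exp L := by
    intro z hz
    have := (hball z hz).2
    have h5 := abs_sub_abs_le_abs_sub z.im s.im
    have h6 := abs_sub_abs_le_abs_sub s.im z.im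
    rw [abs_sub_comm] at h6
    constructor <;> linarith
  have := Complex.norm_deriv_le_of_forall_mem_sphere_norm_le (f := riemannZeta) (c := s)
    (C := C * L) hr ?_ ?_
  · refine this.trans (le_of_eq ?_)
    field_simp
  · refine DifferentiableOn.diffContOnCl_ball (U := {1}ᶜ) ?_ ?_
    · exact fun z hz => (differentiableAt_riemannZeta hz).differentiableWithinAt
    · rintro z hz rfl
      have := (him _ hz).1
      norm_num at this
  · intro z hz
    have hz' := Metric.sphere_subset_closedBall hz
    have h5 := abs_le.1 (hball z hz').1
    exact hC L hL z (by linarith) (by linarith) (him z hz').1 (him z hz').2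

lemma exists_norm_riemannZeta_one_add_le : ∃ C : ℝ, 1 ≤ C ∧ ∀ x : ℝ, 0 < x → x ≤ 1 →
    ‖riemannZeta (1 + x)‖ ≤ C / x := by
  have hc : Continuous fun x : ℝ => riemannZeta₁ (1 + x) :=
    differentiable_riemannZeta₁.continuous.comp (by fun_prop)
  obtain ⟨C, hC⟩ := (isCompact_Icc (a := (0 : ℝ)) (b := 1)).exists_bound_of_continuousOn
    hc.continuousOn
  refine ⟨max C 1, le_max_right _ _, fun x hx hx1 => ?_⟩
  rw [riemannZeta_eq_inv_sub_mul (by simpa using hx.ne'), norm_mul, add_sub_cancel_left, norm_inv,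
    Complex.norm_real, Real.norm_of_nonneg hx.le, inv_mul_eq_div]
  gcongr
  exact (hC x ⟨hx.le, hx1⟩).trans (le_max_left _ _)

lemma exists_riemannZeta_lower_bound : ∃ κ C : ℝ, 0 < κ ∧ κ ≤ 1 / 4 ∧ 0 < C ∧
    ∀ L : ℝ, 2 ≤ L → ∀ s : ℂ, 1 - κ / L ^ 9 ≤ s.re → s.re ≤ 2 → 1 ≤ |s.im| →
      |s.im| ≤ Real.exp L → riemannZeta s ≠ 0 ∧ ‖riemannZeta s‖ ≤ C * L ^ 9 ∧
        ‖deriv riemannZeta s / riemannZeta s‖ ≤ C * L ^ 9 := by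
  obtain ⟨C, hC1, hζ, hζ'⟩ := exists_norm_deriv_riemannZeta_le
  obtain ⟨D, hD1, hD⟩ := exists_norm_riemannZeta_one_add_le
  set κ : ℝ := 1 / (D ^ 3 * C * (16 * C) ^ 4) with hκ
  have hden : 0 < D ^ 3 * C * (16 * C) ^ 4 := by positivity
  have hκ0 : 0 < κ := by positivity
  have hκ4 : κ ≤ 1 / 4 := by
    refine one_div_le_one_div_of_le (by norm_num) ?_
    have h1 : 1 ≤ D ^ 3 := one_le_pow₀ hD1
    have h2 : 1 ≤ C ^ 4 := one_le_pow₀ hC1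
    have h3 : 1 ≤ D ^ 3 * C := one_le_mul_of_one_le_of_one_le h1 hC1
    have h4 : 4 ≤ (16 * C) ^ 4 := by rw [mul_pow]; nlinarith
    nlinarith
  refine ⟨κ, C + 1 / κ, hκ0, hκ4, by positivity, fun L hL s h1 h2 h3 h4 => ?_⟩
  have hL0 : 0 < L := by linarith
  have hL8 : (1 : ℝ) ≤ L ^ 8 := one_le_pow₀ (by linarith)
  set a : ℝ := κ / L ^ 9 with ha
  have ha0 : 0 < a := by positivity
  have haL : a ≤ 1 / (2 * L) := by
    rw [ha, div_le_div_iff₀ (by positivity) (by positivity)]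
    have : L ^ 9 = L * L ^ 8 := by ring
    nlinarith
  have ha1 : a ≤ 1 / 4 := haL.trans (one_div_le_one_div_of_le (by norm_num) (by linarith))
  have hlow : ∀ x : ℝ, a ≤ x → x ≤ 1 →
      16 * C * κ / L ^ 7 ≤ ‖riemannZeta (1 + x + Complex.I * s.im)‖ := by
    intro x hax hx1
    have hx0 := ha0.trans_le hax
    have h341 := riemannZeta_three_four_one hx0 s.im
    have hb : ‖riemannZeta (1 + x + 2 * Complex.I * s.im)‖ ≤ C * L := by
      refine hζ L hL _ ?_ ?_ ?_ ?_
      · have : 0 < L⁻¹ := by positivity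
        simp; linarith
      · simp; linarith
      · simp [abs_mul]; linarith
      · simp [abs_mul]; linarith
    refine le_of_pow_le_pow_left₀ (n := 4) (by norm_num) (norm_nonneg _) ?_
    set w := ‖riemannZeta (1 + x + Complex.I * s.im)‖ with hw
    have h5 : 1 ≤ (D / x) ^ 3 * w ^ 4 * (C * L) :=
      h341.trans (by gcongr; exact hD x hx0 hx1)
    have h6 : x ^ 3 ≤ D ^ 3 * C * L * w ^ 4 := by
      have : (D / x) ^ 3 * w ^ 4 * (C * L) = D ^ 3 * C * L * w ^ 4 / x ^ 3 := by
        field_simp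
      rwa [this, le_div_iff₀ (by positivity), one_mul] at h5
    have h7 : a ^ 3 ≤ D ^ 3 * C * L * w ^ 4 := (pow_le_pow_left₀ ha0.le hax 3).trans h6
    have h8 : (16 * C * κ / L ^ 7) ^ 4 * (D ^ 3 * C * L) = a ^ 3 := by
      have : κ * (D ^ 3 * C * (16 * C) ^ 4) = 1 := by rw [hκ]; field_simp
      calc (16 * C * κ / L ^ 7) ^ 4 * (D ^ 3 * C * L)
          = (κ * (D ^ 3 * C * (16 * C) ^ 4)) * (κ ^ 3 * L / L ^ 28) := by ring
        _ = a ^ 3 := by rw [this, ha]; field_simp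
    have h9 : 0 < D ^ 3 * C * L := by positivity
    rw [← h8] at h7
    nlinarith
  have hs_eq : ∀ σ : ℝ, ((1 : ℂ) + (σ - 1 : ℝ) + Complex.I * s.im) = σ + s.im * Complex.I := by
    intro σ; push_cast; ring
  have hder : ∀ σ : ℝ, 1 - a ≤ σ → σ ≤ 2 →
      ‖deriv riemannZeta (σ + s.im * Complex.I)‖ ≤ 2 * C * L ^ 2 := by
    intro σ h5 h6
    exact hζ' L hL _ (by simp; simp at haL; linarith) (by simpa using h6) (by simpa using h3)
      (by simpa using h4)
  have hself : ((s.re : ℂ) + s.im * Complex.I) = s := Complex.re_add_im s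
  have hmain : 12 * C * κ / L ^ 7 ≤ ‖riemannZeta s‖ := by
    rcases le_or_gt (1 + a) s.re with h | h
    · have := hlow (s.re - 1) (by linarith) (by linarith)
      rw [hs_eq, hself] at this
      refine le_trans ?_ this
      gcongr
      norm_num
    · have h5 := hlow a le_rfl (by linarith)
      have h6 := (convex_Icc (1 - a) (1 + a)).norm_image_sub_le_of_norm_hasDerivWithin_le
        (f := fun σ : ℝ => riemannZeta (σ + s.im * Complex.I))
        (f' := fun σ : ℝ => deriv riemannZeta (σ + s.im * Complex.I)) (C := 2 * C * L ^ 2)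
        (x := s.re) (y := 1 + a)
        (fun σ hσ => by
          have hne : ((σ : ℂ) + s.im * Complex.I) ≠ 1 := by
            intro he
            have := congrArg Complex.im he
            simp at this
            rw [this] at h3
            norm_num at h3
          have h7 := (differentiableAt_riemannZeta hne).hasDerivAt
          have h8 : HasDerivAt (fun z : ℂ => z + s.im * Complex.I) 1 (σ : ℂ) :=
            (hasDerivAt_id _).add_const _
          have h9 := (h7.comp (σ : ℂ) h8).comp_ofReal
          simpa using h9.hasDerivWithinAt)
        (fun σ hσ => hder σ hσ.1 (by linarith [hσ.2])) ⟨h1, h.le⟩ ⟨by linarith, le_rfl⟩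
      simp only [hself] at h6
      have h7 : ‖(1 + a) - s.re‖ ≤ 2 * a := by
        rw [Real.norm_of_nonneg (by linarith)]; linarith
      have h8 : ‖riemannZeta (((1 + a : ℝ) : ℂ) + s.im * Complex.I) - riemannZeta s‖ ≤
          2 * C * L ^ 2 * (2 * a) := h6.trans (by gcongr)
      have h9 : 2 * C * L ^ 2 * (2 * a) = 4 * C * κ / L ^ 7 := by
        rw [ha]; field_simp; norm_num
      have h10 := norm_sub_norm_le (riemannZeta (((1 + a : ℝ) : ℂ) + s.im * Complex.I))
        (riemannZeta s)
      rw [← hs_eq, show (1 + a - 1 : ℝ) = a by ring] at h8 h10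
      have h11 : 16 * C * κ / L ^ 7 = 12 * C * κ / L ^ 7 + 4 * C * κ / L ^ 7 := by ring
      linarith
  have hpos : 0 < 12 * C * κ / L ^ 7 := by positivity
  refine ⟨norm_pos_iff.1 (hpos.trans_le hmain), ?_, ?_⟩
  · refine (hζ L hL s ?_ (by linarith) (by linarith) (by linarith [Real.exp_pos L])).trans ?_
    · have : 1 / (2 * L) ≤ 1 / L := one_div_le_one_div_of_le hL0 (by linarith)
      linarith
    · have : L ^ 9 = L * L ^ 8 := by ring
      have : L ≤ L ^ 9 := by nlinarith
      have : 0 < 1 / κ := by positivity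
      nlinarith
  · rw [norm_div, div_le_iff₀ (hpos.trans_le hmain)]
    have h5 := hder s.re h1 h2
    rw [hself] at h5
    calc ‖deriv riemannZeta s‖ ≤ 2 * C * L ^ 2 := h5
      _ ≤ 12 * C * L ^ 2 := by nlinarith [sq_nonneg L]
      _ = (1 / κ) * L ^ 9 * (12 * C * κ / L ^ 7) := by field_simp
      _ ≤ (C + 1 / κ) * L ^ 9 * ‖riemannZeta s‖ := by gcongr; linarith

/-- The part of `-(logDeriv ζ) - ζ` near `re s = 1`, in which the poles at `s = 1` cancel. -/
noncomputable def zetaDiff (s : ℂ) : ℂ :=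
  -(deriv riemannZeta₁ s / riemannZeta₁ s) - riemannZeta₀ s

lemma zetaDiff_eq {s : ℂ} (hs : s ≠ 1) (hz : riemannZeta s ≠ 0) :
    zetaDiff s = -(deriv riemannZeta s / riemannZeta s) - riemannZeta s := by
  have hs' := sub_ne_zero_of_ne hs
  have h1 := riemannZeta_eq_inv_sub_mul hs
  have h2 := riemannZeta_eq_inv_sub_add hs
  have h3 := deriv_riemannZeta_eq_neg_inv_sub_sq_mul_add hs
  have hz1 : riemannZeta₁ s ≠ 0 := by
    intro h; rw [h, mul_zero] at h1; exact hz h1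
  have h4 : deriv riemannZeta s / riemannZeta s =
      -(s - 1)⁻¹ + deriv riemannZeta₁ s / riemannZeta₁ s := by
    rw [h3, h1]; field_simp
  rw [zetaDiff, h4, h2]; ring

lemma riemannZeta₁_ne_zero {s : ℂ} (h : s = 1 ∨ riemannZeta s ≠ 0) : riemannZeta₁ s ≠ 0 := by
  rcases eq_or_ne s 1 with rfl | hs
  · simp
  · have hz := h.resolve_left hs
    rw [riemannZeta_eq_inv_sub_mul hs] at hz
    exact right_ne_zero_of_mul hz

lemma differentiableAt_zetaDiff {s : ℂ} (h : riemannZeta₁ s ≠ 0) :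
    DifferentiableAt ℂ zetaDiff s := by
  have h1 : DifferentiableAt ℂ (deriv riemannZeta₁) s :=
    differentiable_riemannZeta₁.deriv s
  unfold zetaDiff
  exact ((h1.div (differentiable_riemannZeta₁ s) h).neg).sub (differentiable_riemannZeta₀ s)

lemma exists_zetaDiff_bound_of_abs_im_le_one : ∃ η B : ℝ, 0 < η ∧ ∀ s : ℂ, 1 - η ≤ s.re →
    s.re ≤ 2 → |s.im| ≤ 1 → riemannZeta₁ s ≠ 0 ∧ ‖zetaDiff s‖ ≤ B := by
  set K : Set ℂ := Set.Icc 1 2 ×ℂ Set.Icc (-1) 1 with hK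
  have hKc : IsCompact K := isCompact_Icc.reProdIm isCompact_Icc
  have hU : IsOpen {s : ℂ | riemannZeta₁ s ≠ 0} :=
    isOpen_ne_fun differentiable_riemannZeta₁.continuous continuous_const
  have hKU : K ⊆ {s : ℂ | riemannZeta₁ s ≠ 0} := by
    intro s hs
    exact riemannZeta₁_ne_zero (Or.inr (riemannZeta_ne_zero_of_one_le_re hs.1.1))
  obtain ⟨δ, hδ, hsub⟩ := hKc.exists_cthickening_subset_open hU hKU
  have hcont : ContinuousOn zetaDiff (Metric.cthickening δ K) := fun s hs =>
    (differentiableAt_zetaDiff (hsub hs)).continuousAt.continuousWithinAt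
  obtain ⟨B, hB⟩ := hKc.cthickening.exists_bound_of_continuousOn hcont
  refine ⟨δ, B, hδ, fun s h1 h2 h3 => ?_⟩
  have hs : s ∈ Metric.cthickening δ K := by
    refine Metric.mem_cthickening_of_dist_le s (⟨max s.re 1, s.im⟩ : ℂ) δ K ?_ ?_
    · rw [hK, Complex.mem_reProdIm]
      exact ⟨⟨le_max_right _ _, max_le h2 (by norm_num)⟩, abs_le.1 h3⟩
    · rw [Complex.dist_of_im_eq (show s.im = (⟨max s.re 1, s.im⟩ : ℂ).im from rfl), Real.dist_eq, abs_le]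
      rcases max_cases s.re 1 with h | h <;> rw [h.1] <;> constructor <;> linarith
  exact ⟨hsub hs, hB s hs⟩

lemma exists_zetaDiff_bound : ∃ κ B : ℝ, 0 < κ ∧ κ ≤ 1 / 4 ∧ 0 < B ∧ ∀ L : ℝ, 2 ≤ L → ∀ s : ℂ,
    1 - κ / L ^ 9 ≤ s.re → s.re ≤ 2 → |s.im| ≤ Real.exp L →
      riemannZeta₁ s ≠ 0 ∧ ‖zetaDiff s‖ ≤ B * L ^ 9 := by
  obtain ⟨η, B, hη, hB⟩ := exists_zetaDiff_bound_of_abs_im_le_one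
  obtain ⟨κ, C, hκ, hκ4, hC0, hC⟩ := exists_riemannZeta_lower_bound
  refine ⟨min κ η, |B| + 2 * C, lt_min hκ hη, (min_le_left _ _).trans hκ4, by positivity,
    fun L hL s h1 h2 h3 => ?_⟩
  have hL9 : (1 : ℝ) ≤ L ^ 9 := one_le_pow₀ (by linarith)
  rcases le_total |s.im| 1 with h | h
  · have h4 : min κ η / L ^ 9 ≤ η := (div_le_self (lt_min hκ hη).le hL9).trans (min_le_right _ _)
    have := hB s (by linarith) h2 h
    refine ⟨this.1, this.2.trans ?_⟩
    nlinarith [le_abs_self B, abs_nonneg B]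
  · have h4 : min κ η / L ^ 9 ≤ κ / L ^ 9 := by gcongr; exact min_le_left _ _
    obtain ⟨h5, h6, h7⟩ := hC L hL s (by linarith) h2 h h3
    have hs : s ≠ 1 := by rintro rfl; norm_num at h
    refine ⟨riemannZeta₁_ne_zero (Or.inr h5), ?_⟩
    rw [zetaDiff_eq hs h5]
    refine (norm_sub_le _ _).trans ?_
    rw [norm_neg]
    nlinarith [abs_nonneg B]

open ArithmeticFunction in
lemma zetaDiff_eq_LSeries {s : ℂ} (hs : 1 < s.re) :
    LSeriesHasSum (fun n => ((vonMangoldt n - (zeta n : ℝ) : ℝ) : ℂ)) s (zetaDiff s) := by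
  have hs1 : s ≠ 1 := by rintro rfl; simp at hs
  rw [zetaDiff_eq hs1 (riemannZeta_ne_zero_of_one_le_re hs.le)]
  have h1 := (LSeriesSummable_vonMangoldt hs).LSeriesHasSum
  rw [LSeries_vonMangoldt_eq_deriv_riemannZeta_div hs] at h1
  have h2 := h1.sub (LSeriesHasSum_zeta hs)
  rw [neg_div] at h2
  convert h2 using 1
  ext n
  simp
  split_ifs <;> simp

/-- The Gaussian weight `(e ^ u / n) ^ 2 * exp (-(u - log n) ^ 2 / (4 b))`. -/
noncomputable def gaussWeight (b u : ℝ) (n : ℕ) : ℝ :=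
  Real.exp (2 * (u - Real.log n) - (u - Real.log n) ^ 2 / (4 * b))

open ArithmeticFunction in
lemma hasSum_gaussWeight {b : ℝ} (hb : 0 < b) (u : ℝ) :
    HasSum (fun n : ℕ => (Real.pi / b) ^ (1 / 2 : ℝ) *
        ((vonMangoldt n - (zeta n : ℝ)) * gaussWeight b u n))
      (∫ t : ℝ, zetaDiff (2 + t * Complex.I) *
        Complex.exp (-b * t ^ 2 + u * (2 + t * Complex.I))).re := by
  set f : ℕ → ℂ := fun n => ((vonMangoldt n - (zeta n : ℝ) : ℝ) : ℂ) with hf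
  set F : ℕ → ℝ → ℂ := fun n t => LSeries.term f (2 + t * Complex.I) n *
        Complex.exp (-b * t ^ 2 + u * (2 + t * Complex.I)) with hF
  have hFeq : ∀ n t, F n t = f n * Complex.exp ((-b : ℂ) * t ^ 2 +
      (Complex.I * (u - Real.log n : ℝ)) * t + (2 * (u - Real.log n) : ℝ)) := by
    intro n t
    rcases eq_or_ne n 0 with rfl | hn
    · simp [hF, hf]
    · have hn' : (n : ℂ) ≠ 0 := by exact_mod_cast hn
      simp only [hF, LSeries.term_of_ne_zero hn]
      rw [Complex.cpow_def_of_ne_zero hn', div_mul_eq_mul_div, mul_div_assoc, ← Complex.exp_sub,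
        ← Complex.natCast_log]
      congr 2
      push_cast
      ring
  have hgint : ∀ n, ∫ t : ℝ, F n t = ((Real.pi / b) ^ (1 / 2 : ℝ) *
        ((vonMangoldt n - (zeta n : ℝ)) * gaussWeight b u n) : ℝ) := by
    intro n
    simp_rw [hFeq]
    rw [MeasureTheory.integral_const_mul, integral_cexp_quadratic (by simpa using hb)]
    have h1 : ((Real.pi : ℂ) / -(-b : ℂ)) ^ (1 / 2 : ℂ) = ((Real.pi / b) ^ (1 / 2 : ℝ) : ℝ) := by
      rw [Complex.ofReal_cpow (by positivity)]; push_cast; simp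
    rw [h1, gaussWeight]
    have h2 : ((2 * (u - Real.log n) : ℝ) : ℂ) - (Complex.I * (u - Real.log n : ℝ)) ^ 2 /
        (4 * (-b : ℂ)) = (2 * (u - Real.log n) - (u - Real.log n) ^ 2 / (4 * b) : ℝ) := by
      have : (b : ℂ) ≠ 0 := by exact_mod_cast hb.ne'
      rw [mul_pow, Complex.I_sq]
      push_cast
      field_simp
    rw [h2, hf]
    push_cast
    ring
  have hnorm : ∀ n t, ‖F n t‖ = ‖LSeries.term f 2 n‖ * Real.exp (2 * u) * Real.exp (-b * t ^ 2) := by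
    intro n t
    rw [hF]
    simp only [norm_mul, Complex.norm_exp, mul_assoc, ← Real.exp_add]
    congr 1
    · rw [LSeries.norm_term_eq, LSeries.norm_term_eq]; simp
    · congr 1
      have : ((-b : ℂ) * t ^ 2 + u * (2 + t * Complex.I)) =
        ((-b * t ^ 2 + 2 * u : ℝ) : ℂ) + ((u * t : ℝ) : ℂ) * Complex.I := by push_cast; ring
      rw [this, Complex.add_re, Complex.re_ofReal_mul, Complex.I_re, Complex.ofReal_re]
      ring
  have hI : ∀ n, MeasureTheory.Integrable (F n) := by
    intro n
    have h1 := (integrable_exp_neg_mul_sq hb).const_mul (‖LSeries.term f 2 n‖ * Real.exp (2 * u))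
    refine h1.mono' ?_ (Filter.Eventually.of_forall fun t => (hnorm n t).le)
    have : F n = fun t : ℝ => f n * Complex.exp ((-b : ℂ) * t ^ 2 +
      (Complex.I * (u - Real.log n : ℝ)) * t + (2 * (u - Real.log n) : ℝ)) := funext (hFeq n)
    rw [this]
    exact Continuous.aestronglyMeasurable (by fun_prop)
  have hS : Summable fun n => ∫ t : ℝ, ‖F n t‖ := by
    simp_rw [hnorm, MeasureTheory.integral_const_mul]
    have := (zetaDiff_eq_LSeries (s := 2) (by simp)).summable.norm
    exact (this.mul_right _).mul_right _
  have key := MeasureTheory.hasSum_integral_of_summable_integral_norm hI hS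
  simp_rw [hgint] at key
  have h3 : ∀ t : ℝ, ∑' n, F n t = zetaDiff (2 + t * Complex.I) *
        Complex.exp (-b * t ^ 2 + u * (2 + t * Complex.I)) := by
    intro t
    rw [hF]
    simp only
    rw [tsum_mul_right]
    congr 1
    exact (zetaDiff_eq_LSeries (s := 2 + t * Complex.I) (by simp)).tsum_eq
  simp_rw [h3] at key
  exact Complex.hasSum_re key

open ArithmeticFunction in
lemma tsum_gaussWeight_le {b u w δ : ℝ} (hb : 0 < b) (hδ : 0 < δ) (hδ1 : δ ≤ 1)
    (hbδ : δ ^ 2 ≤ b) (hw : 0 < w) (hw1 : w ≤ Real.log 2)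
    (hprime : ∀ p : ℕ, p.Prime → w < |u - Real.log p|) {S : ℝ}
    (hS : HasSum (fun n : ℕ => (vonMangoldt n - (zeta n : ℝ)) * gaussWeight b u n) S) :
    S ≤ 4 * (Chebyshev.psi (2 * Real.exp u) - Chebyshev.theta (2 * Real.exp u)) +
      Real.exp (2 * u - w ^ 2 / (4 * b)) * (∑' n : ℕ, vonMangoldt n / (n : ℝ) ^ 2) -
      (δ * Real.exp u - 1) / 16 := by
  set x := Real.exp u with hx
  have hx0 : 0 < x := Real.exp_pos u
  set A : Finset ℕ := {n ∈ Finset.Ioc 0 ⌊2 * x⌋₊ | ¬ n.Prime} with hA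
  set D : Finset ℕ := Finset.Ioc ⌊x⌋₊ ⌊(1 + δ) * x⌋₊ with hD
  have h1 : HasSum (fun n => if n ∈ A then 4 * vonMangoldt n else 0)
      (4 * (Chebyshev.psi (2 * x) - Chebyshev.theta (2 * x))) := by
    rw [Chebyshev.psi_sub_theta_eq_sum_not_prime, Finset.mul_sum, ← hA]
    have : HasSum (fun n => if n ∈ A then 4 * vonMangoldt n else 0)
        (∑ n ∈ A, if n ∈ A then 4 * vonMangoldt n else 0) :=
      hasSum_sum_of_ne_finset_zero fun n hn => if_neg hn
    convert this using 1
    exact Finset.sum_congr rfl fun n hn => (if_pos hn).symm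
  have hsum : Summable fun n : ℕ => vonMangoldt n / (n : ℝ) ^ 2 := by
    have := (LSeriesSummable_vonMangoldt (s := 2) (by simp)).norm
    refine this.congr fun n => ?_
    rw [LSeries.norm_term_eq]
    rcases eq_or_ne n 0 with rfl | hn
    · simp
    · simp [hn, abs_of_nonneg vonMangoldt_nonneg]
  have h2 := hsum.hasSum.mul_left (Real.exp (2 * u - w ^ 2 / (4 * b)))
  have h3 : HasSum (fun n => if n ∈ D then (1 / 16 : ℝ) else 0) (D.card * (1 / 16)) := by
    have : HasSum (fun n => if n ∈ D then (1 / 16 : ℝ) else 0)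
        (∑ n ∈ D, if n ∈ D then (1 / 16 : ℝ) else 0) :=
      hasSum_sum_of_ne_finset_zero fun n hn => if_neg hn
    convert this using 1
    rw [Finset.sum_congr rfl fun n hn => if_pos hn, Finset.sum_const, nsmul_eq_mul]
  have hcard : δ * x - 1 ≤ D.card := by
    rw [hD, Nat.card_Ioc, Nat.cast_sub (Nat.floor_le_floor (by nlinarith))]
    have h5 := Nat.lt_floor_add_one ((1 + δ) * x)
    have h6 := Nat.floor_le hx0.le
    linarith
  have hle := hasSum_le (f := fun n : ℕ => (vonMangoldt n - (zeta n : ℝ)) * gaussWeight b u n)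
    ?_ hS ((h1.add h2).sub h3)
  · refine hle.trans ?_
    linarith
  intro n
  rcases Nat.eq_zero_or_pos n with rfl | hn
  · simp [hA, hD]
  have hn0 : (0 : ℝ) < n := by exact_mod_cast hn
  have hΛ : 0 ≤ vonMangoldt n := vonMangoldt_nonneg
  have hW0 : 0 < gaussWeight b u n := Real.exp_pos _
  have hz : ((zeta n : ℕ) : ℝ) = 1 := by rw [zeta_apply_ne hn.ne']; simp
  have hlow : (if n ∈ D then (1 / 16 : ℝ) else 0) ≤ gaussWeight b u n := by
    split_ifs with h
    · rw [hD, Finset.mem_Ioc, Nat.floor_lt hx0.le, Nat.le_floor_iff (by positivity)] at h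
      have h4 : u ≤ Real.log n := by
        rw [← Real.log_exp u]; exact Real.log_le_log hx0 h.1.le
      have h5 : Real.log n ≤ u + δ := by
        calc Real.log n ≤ Real.log ((1 + δ) * x) := Real.log_le_log hn0 h.2
          _ = Real.log (1 + δ) + u := by rw [Real.log_mul (by positivity) hx0.ne', hx, Real.log_exp]
          _ ≤ u + δ := by
            have := Real.log_le_sub_one_of_pos (show 0 < 1 + δ by positivity)
            linarith
      have h6 : (u - Real.log n) ^ 2 / (4 * b) ≤ 1 / 4 := by
        rw [div_le_iff₀ (by positivity)]
        nlinarith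
      have h7 : Real.exp (-(9 / 4)) ≤ gaussWeight b u n := by
        refine Real.exp_le_exp.2 ?_
        linarith
      refine le_trans ?_ h7
      rw [Real.exp_neg, one_div]
      refine inv_anti₀ (Real.exp_pos _) ?_
      have h8 := Real.exp_one_lt_d9
      have h9 : Real.exp (9 / 4) = Real.exp 1 ^ 2 * Real.exp (1 / 4) := by
        rw [← Real.exp_nat_mul, ← Real.exp_add]; norm_num
      have h10 : Real.exp (1 / 4) ^ 4 = Real.exp 1 := by
        rw [← Real.exp_nat_mul]; norm_num
      have h11 : Real.exp (1 / 4) ≤ 1.3 := by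
        refine le_of_pow_le_pow_left₀ (n := 4) (by norm_num) (by norm_num) ?_
        rw [h10]; norm_num; linarith
      rw [h9]
      calc Real.exp 1 ^ 2 * Real.exp (1 / 4) ≤ 2.72 ^ 2 * 1.3 := by gcongr; linarith
        _ ≤ 16 := by norm_num
    · exact hW0.le
  have hup : vonMangoldt n * gaussWeight b u n ≤ (if n ∈ A then 4 * vonMangoldt n else 0) +
      Real.exp (2 * u - w ^ 2 / (4 * b)) * (vonMangoldt n / (n : ℝ) ^ 2) := by
    rcases lt_or_ge w |u - Real.log n| with h | h
    · have h4 : gaussWeight b u n ≤ Real.exp (2 * u - w ^ 2 / (4 * b)) / (n : ℝ) ^ 2 := by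
        have h5 : w ^ 2 ≤ (u - Real.log n) ^ 2 := by rw [← sq_abs (u - _)]; gcongr
        have h6 : ((n : ℝ) ^ 2) = Real.exp (2 * Real.log n) := by
          rw [two_mul, Real.exp_add, Real.exp_log hn0]; ring
        rw [h6, ← Real.exp_sub, gaussWeight]
        refine Real.exp_le_exp.2 ?_
        have : w ^ 2 / (4 * b) ≤ (u - Real.log n) ^ 2 / (4 * b) := by gcongr
        linarith
      have h7 : (0 : ℝ) ≤ if n ∈ A then 4 * vonMangoldt n else 0 := by
        split_ifs <;> positivity
      calc _ ≤ vonMangoldt n * (Real.exp (2 * u - w ^ 2 / (4 * b)) / (n : ℝ) ^ 2) := by gcongr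
        _ = Real.exp (2 * u - w ^ 2 / (4 * b)) * (vonMangoldt n / (n : ℝ) ^ 2) := by ring
        _ ≤ _ := by linarith
    · have hnp : ¬ n.Prime := fun hp => absurd (hprime n hp) (not_lt.2 h)
      have h4 := abs_le.1 h
      have hnA : n ∈ A := by
        rw [hA, Finset.mem_filter, Finset.mem_Ioc, Nat.le_floor_iff (by positivity)]
        refine ⟨⟨hn, ?_⟩, hnp⟩
        have : Real.log n ≤ Real.log (2 * x) := by
          rw [Real.log_mul (by norm_num) hx0.ne', hx, Real.log_exp]; linarith
        exact (Real.log_le_log_iff hn0 (by positivity)).1 this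
      rw [if_pos hnA]
      have h5 : gaussWeight b u n ≤ 4 := by
        have h6 : (4 : ℝ) = Real.exp (2 * Real.log 2) := by
          rw [two_mul, Real.exp_add, Real.exp_log (by norm_num)]; norm_num
        rw [h6, gaussWeight]
        refine Real.exp_le_exp.2 ?_
        have : 0 ≤ (u - Real.log n) ^ 2 / (4 * b) := by positivity
        linarith
      have h7 : 0 ≤ Real.exp (2 * u - w ^ 2 / (4 * b)) * (vonMangoldt n / (n : ℝ) ^ 2) := by
        positivity
      nlinarith
  simp only [hz, sub_mul, one_mul]
  linarith

lemma exists_norm_zetaDiff_two_le : ∃ K : ℝ, 0 < K ∧ ∀ t : ℝ,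
    ‖zetaDiff (2 + t * Complex.I)‖ ≤ K := by
  set f : ℕ → ℂ := fun n => ((ArithmeticFunction.vonMangoldt n -
    (ArithmeticFunction.zeta n : ℝ) : ℝ) : ℂ) with hf
  have h : Summable fun n => ‖LSeries.term f 2 n‖ :=
    (zetaDiff_eq_LSeries (s := 2) (by simp)).summable.norm
  refine ⟨(∑' n, ‖LSeries.term f 2 n‖) + 1, add_pos_of_nonneg_of_pos (tsum_nonneg fun n => norm_nonneg _) one_pos,
    fun t => ?_⟩
  have h2 : HasSum (LSeries.term f (2 + t * Complex.I)) _ :=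
    zetaDiff_eq_LSeries (s := 2 + t * Complex.I) (by simp)
  have h3 := tsum_of_norm_bounded h.hasSum (f := LSeries.term f (2 + t * Complex.I)) (fun n => by
    rw [LSeries.norm_term_eq, LSeries.norm_term_eq]; simp)
  rw [h2.tsum_eq] at h3
  linarith

lemma continuous_zetaDiff_two : Continuous fun t : ℝ => zetaDiff (2 + t * Complex.I) := by
  refine continuous_iff_continuousAt.2 fun t => ?_
  have h1 : riemannZeta₁ (2 + t * Complex.I) ≠ 0 :=
    riemannZeta₁_ne_zero (Or.inr (riemannZeta_ne_zero_of_one_le_re (by simp)))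
  exact ContinuousAt.comp (f := fun t : ℝ => (2 : ℂ) + t * Complex.I)
    (differentiableAt_zetaDiff h1).continuousAt (by fun_prop)

lemma norm_gaussian_eq (b u σ t : ℝ) :
    ‖Complex.exp (b * ((σ + t * Complex.I : ℂ) - 2) ^ 2 + u * (σ + t * Complex.I))‖ =
      Real.exp (b * ((σ - 2) ^ 2 - t ^ 2) + u * σ) := by
  rw [Complex.norm_exp]
  congr 1
  have : (b * ((σ + t * Complex.I : ℂ) - 2) ^ 2 + u * (σ + t * Complex.I)) =
      ((b * ((σ - 2) ^ 2 - t ^ 2) + u * σ : ℝ) : ℂ) +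
        ((b * 2 * (σ - 2) * t + u * t : ℝ) : ℂ) * Complex.I := by
    push_cast
    linear_combination (b * t ^ 2 : ℂ) * Complex.I_sq
  rw [this, Complex.add_re, Complex.re_ofReal_mul, Complex.I_re, Complex.ofReal_re]
  ring

lemma exists_abs_re_integral_le : ∃ κ B K : ℝ, 0 < κ ∧ 0 < B ∧ 0 < K ∧
    ∀ L u : ℝ, 2 ≤ L → 0 < u → u ≤ Real.exp L →
    |(∫ t : ℝ, zetaDiff (2 + t * Complex.I) *
        Complex.exp (-((u / Real.exp L) ^ 2 : ℝ) * t ^ 2 + u * (2 + t * Complex.I))).re| ≤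
      K * Real.exp (2 * u - u ^ 2 / 2) * (2 * (Real.pi / (u / Real.exp L) ^ 2) ^ (1 / 2 : ℝ)) +
      B * L ^ 9 * (4 * Real.exp (4 + 2 * u - u ^ 2) +
        2 * Real.exp L * Real.exp (4 + u * (1 - κ / L ^ 9))) := by
  obtain ⟨κ, B, hκ, hκ4, hB, hbound⟩ := exists_zetaDiff_bound
  obtain ⟨K, hK, hKb⟩ := exists_norm_zetaDiff_two_le
  refine ⟨κ, B, K, hκ, hB, hK, fun L u hL hu huT => ?_⟩
  set T := Real.exp L with hT
  have hT0 : 0 < T := Real.exp_pos L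
  set b : ℝ := (u / T) ^ 2 with hb
  have hb0 : 0 < b := by positivity
  have hb1 : b ≤ 1 := by
    rw [hb]
    exact pow_le_one₀ (by positivity) ((div_le_one hT0).2 huT)
  have hbT : b * T ^ 2 = u ^ 2 := by rw [hb]; field_simp
  set a := κ / L ^ 9 with ha
  have ha0 : 0 < a := by positivity
  have ha1 : a ≤ 1 / 4 := by
    rw [ha, div_le_iff₀ (by positivity)]
    have : 1 ≤ L ^ 9 := one_le_pow₀ (by linarith)
    nlinarith
  set f : ℂ → ℂ := fun s => zetaDiff s * Complex.exp (b * (s - 2) ^ 2 + u * s) with hf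
  set g : ℝ → ℂ := fun t => zetaDiff (2 + t * Complex.I) *
        Complex.exp (-(b : ℝ) * t ^ 2 + u * (2 + t * Complex.I)) with hg
  have hgf : ∀ t : ℝ, f (2 + t * Complex.I) = g t := by
    intro t
    simp only [hf, hg]
    congr 2
    linear_combination (b * t ^ 2 : ℂ) * Complex.I_sq
  have hfnorm : ∀ σ t : ℝ, 1 - a ≤ σ → σ ≤ 2 → |t| ≤ T → ‖f (σ + t * Complex.I)‖ ≤
      B * L ^ 9 * Real.exp (4 - b * t ^ 2 + u * σ) := by
    intro σ t h1 h2 h3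
    rw [hf]
    simp only [norm_mul]
    rw [norm_gaussian_eq]
    refine mul_le_mul (hbound L hL _ (by simpa using h1) (by simpa using h2) (by simpa using h3)).2
      (Real.exp_le_exp.2 ?_) (Real.exp_pos _).le (by positivity)
    have : (σ - 2) ^ 2 ≤ 4 := by nlinarith
    nlinarith [mul_nonneg hb0.le (sub_nonneg.2 this)]
  have hrect := Complex.integral_boundary_rect_eq_zero_of_differentiableOn f
    (((1 - a : ℝ) : ℂ) + ((-T : ℝ) : ℂ) * Complex.I) (((2 : ℝ) : ℂ) + (T : ℂ) * Complex.I) (by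
      intro s hs
      rw [Complex.mem_reProdIm] at hs
      simp only [Complex.add_re, Complex.re_ofReal_mul, Complex.I_re, Complex.ofReal_re, mul_zero,
        add_zero, Complex.add_im, Complex.im_ofReal_mul, Complex.I_im, Complex.ofReal_im, mul_one,
        zero_add] at hs
      rw [Set.uIcc_of_le (by linarith), Set.uIcc_of_le (by linarith)] at hs
      have := (hbound L hL s hs.1.1 hs.1.2 (abs_le.2 hs.2)).1
      exact ((differentiableAt_zetaDiff this).mul (by fun_prop)).differentiableWithinAt)
  simp only [Complex.add_re, Complex.re_ofReal_mul, Complex.I_re, Complex.ofReal_re, mul_zero,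
        add_zero, Complex.add_im, Complex.im_ofReal_mul, Complex.I_im, Complex.ofReal_im, mul_one,
        zero_add] at hrect
  have hH : ∀ τ : ℝ, |τ| = T → ‖∫ x in (1 - a)..2, f (x + τ * Complex.I)‖ ≤
      2 * (B * L ^ 9 * Real.exp (4 + 2 * u - u ^ 2)) := by
    intro τ hτ
    have := intervalIntegral.norm_integral_le_of_norm_le_const (a := 1 - a) (b := 2)
      (f := fun x : ℝ => f (x + τ * Complex.I))
      (C := B * L ^ 9 * Real.exp (4 + 2 * u - u ^ 2)) (by
        intro x hx
        rw [Set.uIoc_of_le (by linarith)] at hx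
        refine (hfnorm x τ hx.1.le hx.2 hτ.le).trans ?_
        gcongr
        rw [← sq_abs, hτ, hbT]
        nlinarith [hx.2])
    refine this.trans ?_
    rw [mul_comm]
    gcongr
    rw [abs_le]; constructor <;> linarith
  have hleft : ‖∫ y in (-T)..T, f (((1 - a : ℝ) : ℂ) + y * Complex.I)‖ ≤
      2 * T * (B * L ^ 9 * Real.exp (4 + u * (1 - a))) := by
    have := intervalIntegral.norm_integral_le_of_norm_le_const (a := -T) (b := T)
      (f := fun y : ℝ => f (((1 - a : ℝ) : ℂ) + y * Complex.I))
      (C := B * L ^ 9 * Real.exp (4 + u * (1 - a))) (by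
        intro y hy
        rw [Set.uIoc_of_le (by linarith)] at hy
        refine (hfnorm (1 - a) y le_rfl (by linarith) (abs_le.2 ⟨hy.1.le, hy.2⟩)).trans ?_
        gcongr
        nlinarith [mul_nonneg hb0.le (sq_nonneg y)])
    refine this.trans ?_
    rw [mul_comm]
    gcongr
    rw [abs_of_nonneg] <;> linarith
  have hmid : ‖∫ y in (-T)..T, g y‖ ≤ B * L ^ 9 * (4 * Real.exp (4 + 2 * u - u ^ 2) +
        2 * T * Real.exp (4 + u * (1 - a))) := by
    have e : ∫ y in (-T)..T, g y = ∫ y in (-T)..T, f (((2 : ℝ) : ℂ) + y * Complex.I) := by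
      refine intervalIntegral.integral_congr fun y _ => ?_
      rw [← hgf, Complex.ofReal_ofNat]
    rw [e]
    have h1 := hH (-T) (by rw [abs_neg, abs_of_pos hT0])
    have h2 := hH T (abs_of_pos hT0)
    have h3 : Complex.I • ∫ y in (-T)..T, f (((2 : ℝ) : ℂ) + y * Complex.I) =
        Complex.I • (∫ y in (-T)..T, f (((1 - a : ℝ) : ℂ) + y * Complex.I)) -
        (∫ x in (1 - a)..2, f (x + ((-T : ℝ) : ℂ) * Complex.I)) +
        (∫ x in (1 - a)..2, f (x + T * Complex.I)) := by
      linear_combination hrect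
    have h4 := congrArg norm h3
    rw [norm_smul, Complex.norm_I, one_mul] at h4
    rw [h4]
    refine (norm_add_le _ _).trans ((add_le_add (norm_sub_le _ _) le_rfl).trans ?_)
    rw [norm_smul, Complex.norm_I, one_mul]
    linarith
  have hgnorm : ∀ t, ‖g t‖ ≤ K * Real.exp (2 * u) * Real.exp (-b * t ^ 2) := by
    intro t
    rw [hg]
    simp only [norm_mul]
    have := norm_gaussian_eq b u 2 t
    have e2 : (b * (((2 : ℝ) + t * Complex.I : ℂ) - 2) ^ 2 + u * ((2 : ℝ) + t * Complex.I)) =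
        (-(b : ℝ) * t ^ 2 + u * (2 + t * Complex.I)) := by
      push_cast
      linear_combination (b * t ^ 2 : ℂ) * Complex.I_sq
    rw [e2] at this
    rw [this, mul_assoc K, ← Real.exp_add]
    refine mul_le_mul (hKb t) (Real.exp_le_exp.2 (by linarith)) (Real.exp_pos _).le hK.le
  have hgc : Continuous g := continuous_zetaDiff_two.mul (by fun_prop)
  have hgi : MeasureTheory.Integrable g :=
    ((integrable_exp_neg_mul_sq hb0).const_mul _).mono' hgc.aestronglyMeasurable
      (Filter.Eventually.of_forall hgnorm)
  have htail : ‖∫ t in (Set.Ioc (-T) T)ᶜ, g t‖ ≤ K * Real.exp (2 * u - u ^ 2 / 2) *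
      (2 * (Real.pi / b) ^ (1 / 2 : ℝ)) := by
    have hi := (integrable_exp_neg_mul_sq (half_pos hb0)).const_mul
      (K * Real.exp (2 * u - u ^ 2 / 2))
    calc _ ≤ ∫ t in (Set.Ioc (-T) T)ᶜ,
          K * Real.exp (2 * u - u ^ 2 / 2) * Real.exp (-(b / 2) * t ^ 2) := by
          refine MeasureTheory.norm_integral_le_of_norm_le hi.integrableOn ?_
          refine MeasureTheory.ae_restrict_of_forall_mem measurableSet_Ioc.compl fun t ht => ?_
          refine (hgnorm t).trans ?_
          rw [mul_assoc, mul_assoc, ← Real.exp_add, ← Real.exp_add]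
          refine mul_le_mul_of_nonneg_left (Real.exp_le_exp.2 ?_) hK.le
          have : T ^ 2 ≤ t ^ 2 := by
            rw [Set.mem_compl_iff, Set.mem_Ioc, not_and_or, not_lt, not_le] at ht
            rcases ht with h | h <;> nlinarith
          nlinarith [mul_le_mul_of_nonneg_left this hb0.le]
      _ ≤ ∫ t, K * Real.exp (2 * u - u ^ 2 / 2) * Real.exp (-(b / 2) * t ^ 2) :=
          MeasureTheory.setIntegral_le_integral hi (Filter.Eventually.of_forall fun t => by positivity)
      _ = K * Real.exp (2 * u - u ^ 2 / 2) * √(Real.pi / (b / 2)) := by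
          rw [MeasureTheory.integral_const_mul, integral_gaussian]
      _ ≤ _ := by
          gcongr
          rw [← Real.sqrt_eq_rpow, show Real.pi / (b / 2) = 2 * (Real.pi / b) by field_simp,
            Real.sqrt_mul (by norm_num)]
          gcongr
          rw [Real.sqrt_le_left (by norm_num)]; norm_num
  have hsplit : ∫ t, g t = (∫ y in (-T)..T, g y) + ∫ t in (Set.Ioc (-T) T)ᶜ, g t := by
    rw [intervalIntegral.integral_of_le (by linarith)]
    exact (MeasureTheory.integral_add_compl measurableSet_Ioc hgi).symm
  rw [show (∫ t : ℝ, zetaDiff (2 + t * Complex.I) *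
        Complex.exp (-(b : ℝ) * t ^ 2 + u * (2 + t * Complex.I))) = ∫ t, g t from rfl, hsplit]
  refine (Complex.abs_re_le_norm _).trans ((norm_add_le _ _).trans ?_)
  linarith

lemma exists_pow_le_mul_exp (k : ℕ) :
    ∃ F : ℝ, 0 < F ∧ ∀ x : ℝ, 0 ≤ x → x ^ k ≤ F * Real.exp x := by
  refine ⟨k.factorial, by positivity, fun x hx => ?_⟩
  have := Real.pow_div_factorial_le_exp x hx k
  rwa [div_le_iff₀ (by positivity), mul_comm] at this

set_option maxHeartbeats 1000000 in
theorem eventually_exists_prime_log_near : ∀ᶠ L : ℝ in Filter.atTop, ∀ u : ℝ, L ^ 20 ≤ u →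
    u ≤ 2 * L ^ 20 → ∃ p : ℕ, p.Prime ∧ |u - Real.log p| ≤ 2 * u ^ 2 / Real.exp L := by
  obtain ⟨κ, B, K, hκ, hB, hK, hI⟩ := exists_abs_re_integral_le
  set M : ℝ := ∑' n : ℕ, ArithmeticFunction.vonMangoldt n / (n : ℝ) ^ 2 with hM
  have hM0 : 0 ≤ M := tsum_nonneg fun n => by
    have := ArithmeticFunction.vonMangoldt_nonneg (n := n); positivity
  obtain ⟨F₁, hF₁, hpow₁⟩ := exists_pow_le_mul_exp 9
  obtain ⟨F₂, hF₂, hpow₂⟩ := exists_pow_le_mul_exp 41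
  set E : ℝ := B * F₁ * Real.exp 4 with hE
  set C : ℝ := 1 + 64 + M + 2 * K + 6 * E with hC
  have hE0 : 0 < E := by positivity
  filter_upwards [Filter.eventually_ge_atTop 2, Filter.eventually_ge_atTop (3 / κ),
    Filter.eventually_gt_atTop (16 * C),
    Filter.eventually_ge_atTop (16 * F₂)] with L hL2 hLκ hLC hLf u hu1 hu2
  by_contra! hprime
  have hL1 : 1 ≤ L := by linarith
  have hL0 : 0 < L := by linarith
  have hL20 : L ^ 2 ≤ L ^ 20 := pow_le_pow_right₀ hL1 (by norm_num)
  have hL6 : L ^ 3 ≤ L ^ 20 := pow_le_pow_right₀ hL1 (by norm_num)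
  have hu4L : 4 * L ≤ u := by nlinarith
  have hu0 : 0 < u := by linarith
  have husq : 8 * u ≤ u ^ 2 := by nlinarith
  have hT0 := Real.exp_pos L
  have hwle : 2 * u ^ 2 / Real.exp L ≤ 1 / 2 := by
    rw [div_le_iff₀ hT0]
    have h1 := hpow₂ L hL0.le
    have h2 : u ^ 2 ≤ 4 * L ^ 40 := by
      calc u ^ 2 ≤ (2 * L ^ 20) ^ 2 := by gcongr
        _ = 4 * L ^ 40 := by ring
    have h3 : (16 * F₂) * L ^ 40 ≤ F₂ * Real.exp L := by
      calc _ ≤ L * L ^ 40 := by gcongr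
        _ = L ^ 41 := by ring
        _ ≤ _ := h1
    have h4 : 16 * L ^ 40 ≤ Real.exp L := by
      refine le_of_mul_le_mul_left ?_ hF₂
      linarith
    linarith
  have huT : u ≤ Real.exp L := by
    rw [div_le_iff₀ hT0] at hwle
    nlinarith
  set δ := u / Real.exp L with hδ
  have hδ0 : 0 < δ := by positivity
  have hδ1 : δ ≤ 1 := (div_le_one hT0).2 huT
  have hb : 0 < δ ^ 2 := by positivity
  have hS := hasSum_gaussWeight hb u
  set V := (Real.pi / δ ^ 2) ^ (1 / 2 : ℝ) with hV
  have hV0 : 0 < V := by positivity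
  have hV1 : 1 ≤ V := by
    rw [hV]
    refine Real.one_le_rpow ?_ (by norm_num)
    rw [one_le_div hb]
    have := Real.pi_gt_three
    have : δ ^ 2 ≤ 1 := pow_le_one₀ hδ0.le hδ1
    linarith
  have hI' := hI L u hL2 hu0 huT
  rw [← hδ, ← hV] at hI'
  set I := (∫ t : ℝ, zetaDiff (2 + t * Complex.I) *
        Complex.exp (-(δ ^ 2 : ℝ) * t ^ 2 + u * (2 + t * Complex.I))).re with hIdef
  have hS' : HasSum (fun n : ℕ => (ArithmeticFunction.vonMangoldt n -
      (ArithmeticFunction.zeta n : ℝ)) * gaussWeight (δ ^ 2) u n) (V⁻¹ * I) := by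
    have := hS.mul_left V⁻¹
    simpa only [inv_mul_cancel_left₀ hV0.ne'] using this
  have hw : 2 * δ * u = 2 * u ^ 2 / Real.exp L := by rw [hδ]; ring
  have hkey := tsum_gaussWeight_le (w := 2 * δ * u) hb hδ0 hδ1 le_rfl (by positivity)
    (by rw [hw]; have := Real.log_two_gt_d9; linarith) (by rw [hw]; exact hprime) hS'
  have hexp : 2 * u - (2 * δ * u) ^ 2 / (4 * δ ^ 2) = 2 * u - u ^ 2 := by
    field_simp
    ring
  rw [hexp, ← hM] at hkey
  set X := Real.exp (u - L) with hX
  have hX0 : 0 < X := Real.exp_pos _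
  have hX1 : 1 ≤ X := Real.one_le_exp (by linarith)
  have e1 : Real.exp (2 * u - u ^ 2) ≤ X := Real.exp_le_exp.2 (by linarith)
  have e2 : Real.exp (2 * u - u ^ 2 / 2) ≤ X := Real.exp_le_exp.2 (by linarith)
  have hL9 : L ^ 9 ≤ F₁ * Real.exp L := hpow₁ L hL0.le
  have e3 : B * L ^ 9 * Real.exp (4 + 2 * u - u ^ 2) ≤ E * X := by
    calc _ ≤ B * (F₁ * Real.exp L) * (Real.exp 4 * Real.exp (u - 2 * L)) := by
          gcongr
          rw [← Real.exp_add]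
          exact Real.exp_le_exp.2 (by linarith)
      _ = E * (Real.exp L * Real.exp (u - 2 * L)) := by rw [hE]; ring
      _ = E * X := by rw [← Real.exp_add, hX]; ring_nf
  have e4 : B * L ^ 9 * (Real.exp L * Real.exp (4 + u * (1 - κ / L ^ 9))) ≤ E * X := by
    have h1 : 3 * L ≤ u * (κ / L ^ 9) := by
      have h2 : 3 ≤ κ * L := by rw [div_le_iff₀ hκ] at hLκ; linarith
      have h3 : 3 * L ^ 19 ≤ κ * L ^ 20 := by
        calc 3 * L ^ 19 ≤ (κ * L) * L ^ 19 := by gcongr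
          _ = _ := by ring
      rw [mul_div_assoc', le_div_iff₀ (by positivity)]
      calc 3 * L * L ^ 9 = 3 * L ^ 10 := by ring
        _ ≤ 3 * L ^ 19 := by gcongr ; norm_num [hL1]
        _ ≤ κ * L ^ 20 := h3
        _ ≤ u * κ := by nlinarith
    calc _ ≤ B * (F₁ * Real.exp L) *
          (Real.exp L * (Real.exp 4 * Real.exp (u - 3 * L))) := by
          gcongr
          rw [← Real.exp_add]
          exact Real.exp_le_exp.2 (by linarith)
      _ = E * (Real.exp L * (Real.exp L * Real.exp (u - 3 * L))) := by rw [hE]; ring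
      _ = E * X := by rw [← Real.exp_add, ← Real.exp_add, hX]; ring_nf
  have e5 : 4 * (Chebyshev.psi (2 * Real.exp u) - Chebyshev.theta (2 * Real.exp u)) ≤ 64 * X := by
    have h1 := Chebyshev.psi_sub_theta_le (x := 2 * Real.exp u)
      (by have := Real.one_le_exp hu0.le; linarith)
    have h2 : √(2 * Real.exp u) ≤ 2 * Real.exp (u / 2) := by
      rw [Real.sqrt_le_left (by positivity), mul_pow, ← Real.exp_nat_mul]
      rw [show ((2 : ℕ) : ℝ) * (u / 2) = u by push_cast; ring]
      have := Real.exp_pos u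
      linarith
    have h3 : Real.log (2 * Real.exp u) ≤ 4 * Real.exp (u / 4) := by
      rw [Real.log_mul (by norm_num) (Real.exp_pos u).ne', Real.log_exp]
      have := Real.add_one_le_exp (u / 4)
      have := Real.log_two_lt_d9
      linarith
    have h4 : 0 ≤ Real.log (2 * Real.exp u) := Real.log_nonneg
      (by have := Real.one_le_exp hu0.le; linarith)
    calc _ ≤ 4 * (2 * (2 * Real.exp (u / 2)) * (4 * Real.exp (u / 4))) := by
          have : 2 * √(2 * Real.exp u) * Real.log (2 * Real.exp u) ≤
            2 * (2 * Real.exp (u / 2)) * (4 * Real.exp (u / 4)) := by gcongr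
          linarith
      _ = 64 * Real.exp (3 * u / 4) := by
          rw [show 3 * u / 4 = u / 2 + u / 4 by ring, Real.exp_add]; ring
      _ ≤ 64 * X :=
          mul_le_mul_of_nonneg_left (Real.exp_le_exp.2 (by linarith)) (by norm_num)
  have e6 : δ * Real.exp u = u * X := by
    rw [hX, Real.exp_sub, hδ]; ring
  have e7 : |V⁻¹ * I| ≤ 2 * K * X + 6 * E * X := by
    rw [abs_mul, abs_of_pos (inv_pos.2 hV0), inv_mul_le_iff₀ hV0]
    calc |I| ≤ _ := hI'
      _ ≤ K * X * (2 * V) + V * (6 * E * X) := by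
        refine add_le_add (by gcongr) ?_
        calc _ = 4 * (B * L ^ 9 * Real.exp (4 + 2 * u - u ^ 2)) +
              2 * (B * L ^ 9 * (Real.exp L * Real.exp (4 + u * (1 - κ / L ^ 9)))) := by ring
          _ ≤ 6 * E * X := by linarith
          _ ≤ V * (6 * E * X) := le_mul_of_one_le_left (by positivity) hV1
      _ = _ := by ring
  have e8 := neg_abs_le (V⁻¹ * I)
  have e9 : Real.exp (2 * u - u ^ 2) * M ≤ M * X := by rw [mul_comm]; gcongr
  rw [e6] at hkey
  have e10 : u * X ≤ 16 * C * X := by rw [hC]; nlinarith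
  have e11 : u ≤ 16 * C := le_of_mul_le_mul_right e10 hX0
  linarith

/-- The number of divisors of `x` in the open interval `(n, m)`. -/
def divCount (n m x : ℕ) : ℕ := ((Finset.Ioo n m).filter (fun d => d ∣ x)).card

lemma Llcm_dvd_iff {n m M : ℕ} : Llcm n m ∣ M ↔ ∀ d, n < d → d < m → d ∣ M := by
  simp [Llcm, Finset.lcm_dvd_iff]

lemma divCount_periodic {n m M : ℕ} (hM : Llcm n m ∣ M) (r : ℕ) :
    Function.Periodic (fun x => divCount n m x = r) M := by
  intro x
  have : divCount n m (x + M) = divCount n m x := by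
    unfold divCount
    congr 1
    refine Finset.filter_congr fun d hd => ?_
    rw [Finset.mem_Ioo] at hd
    exact (Nat.dvd_add_left (Llcm_dvd_iff.1 hM d hd.1 hd.2))
  simp [this]

lemma card_filter_Icc_eq_count {p : ℕ → Prop} [DecidablePred p] {M : ℕ}
    (hp : Function.Periodic p M) : ((Finset.Icc 1 M).filter p).card = M.count p := by
  have := Nat.filter_Ico_card_eq_of_periodic 1 M p hp
  rw [← this]
  congr 2
  ext x
  simp only [Finset.mem_Icc, Finset.mem_Ico]
  omega

lemma count_mul_of_periodic {p : ℕ → Prop} [DecidablePred p] {M : ℕ}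
    (hp : Function.Periodic p M) (k : ℕ) : (k * M).count p = k * M.count p := by
  induction k with
  | zero => simp
  | succ k ih =>
    rw [Nat.add_mul, one_mul, Nat.count_add, ih, Nat.add_mul, one_mul]
    congr 2
    funext j
    rw [add_comm]
    simpa using hp.nat_mul k j

lemma card_filter_Icc_mul_of_periodic_s12 {p : ℕ → Prop} [DecidablePred p] {M : ℕ}
    (hp : Function.Periodic p M) (k : ℕ) :
    ((Finset.Icc 1 (k * M)).filter p).card = k * ((Finset.Icc 1 M).filter p).card := by
  have hk : Function.Periodic p (k * M) := by simpa using hp.nat_mul k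
  rw [card_filter_Icc_eq_count hp, card_filter_Icc_eq_count hk, count_mul_of_periodic hp]

/-- The density may be computed over any common period. -/
lemma delta_eq_of_dvd {n m M : ℕ} (hM : Llcm n m ∣ M) (hM0 : 0 < M) (r : ℕ) :
    delta r n m = (((Finset.Icc 1 M).filter (fun x => divCount n m x = r)).card : ℚ) / M := by
  obtain ⟨k, rfl⟩ := hM
  have hL := Llcm_pos n m
  have hk : 0 < k := Nat.pos_of_mul_pos_left hM0
  rw [mul_comm (Llcm n m) k, card_filter_Icc_mul_of_periodic_s12 (divCount_periodic dvd_rfl r)]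
  unfold delta divCount
  push_cast
  rw [mul_div_mul_left _ _ (by positivity)]

lemma divCount_succ_of_dvd {n m x : ℕ} (hm : n < m) (h : m ∣ x) :
    divCount n (m + 1) x = divCount n m x + 1 := by
  unfold divCount
  have : Finset.Ioo n (m + 1) = insert m (Finset.Ioo n m) := by
    ext; simp only [Finset.mem_insert, Finset.mem_Ioo]; omega
  rw [this, Finset.filter_insert, if_pos h, Finset.card_insert_of_notMem (by simp)]

lemma divCount_succ_of_not_dvd {n m x : ℕ} (hm : n < m) (h : ¬ m ∣ x) :
    divCount n (m + 1) x = divCount n m x := by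
  unfold divCount
  have : Finset.Ioo n (m + 1) = insert m (Finset.Ioo n m) := by
    ext; simp only [Finset.mem_insert, Finset.mem_Ioo]; omega
  rw [this, Finset.filter_insert, if_neg h]

lemma divCount_prime_mul {n m : ℕ} (hm : m.Prime) (y : ℕ) :
    divCount n m (m * y) = divCount n m y := by
  unfold divCount
  congr 1
  refine Finset.filter_congr fun d hd => ?_
  rw [Finset.mem_Ioo] at hd
  have : Nat.Coprime d m := (Nat.coprime_of_lt_prime (by omega) hd.2 hm).symm
  exact ⟨this.dvd_of_dvd_mul_left, fun h => h.mul_left m⟩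

lemma card_filter_dvd_and {n m M r : ℕ} (hm : m.Prime) :
    ((Finset.Icc 1 (m * M)).filter (fun x => m ∣ x ∧ divCount n m x = r)).card =
      ((Finset.Icc 1 M).filter (fun x => divCount n m x = r)).card := by
  symm
  refine Finset.card_bij (fun y _ => m * y) ?_ ?_ ?_
  · intro y hy
    simp only [Finset.mem_filter, Finset.mem_Icc] at hy ⊢
    refine ⟨⟨Nat.mul_pos hm.pos hy.1.1, Nat.mul_le_mul_left m hy.1.2⟩, dvd_mul_right m y, ?_⟩
    rw [divCount_prime_mul hm, hy.2]
  · intro a _ b _ h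
    exact Nat.eq_of_mul_eq_mul_left hm.pos h
  · intro x hx
    simp only [Finset.mem_filter, Finset.mem_Icc] at hx
    obtain ⟨⟨hx1, hx2⟩, ⟨y, rfl⟩, hx3⟩ := hx
    refine ⟨y, ?_, rfl⟩
    simp only [Finset.mem_filter, Finset.mem_Icc]
    refine ⟨⟨Nat.pos_of_mul_pos_left hx1, Nat.le_of_mul_le_mul_left hx2 hm.pos⟩, ?_⟩
    rwa [divCount_prime_mul hm] at hx3

lemma delta_one_lt_succ_of_prime {n m : ℕ} (hm : m.Prime) (hnm : n < m)
    (h : delta 1 n m < delta 0 n m) : delta 1 n m < delta 1 n (m + 1) := by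
  set M := Llcm n m with hM
  have hM0 : 0 < M := Llcm_pos n m
  have hd : Llcm n (m + 1) ∣ m * M := by
    refine Llcm_dvd_iff.2 fun d h1 h2 => ?_
    rcases Nat.lt_succ_iff_lt_or_eq.1 h2 with h3 | rfl
    · exact (Llcm_dvd_iff.1 (dvd_refl M) d h1 h3).mul_left m
    · exact dvd_mul_right _ _
  have hmM : 0 < m * M := Nat.mul_pos hm.pos hM0
  rw [delta_eq_of_dvd (dvd_refl M) hM0, delta_eq_of_dvd (dvd_refl M) hM0,
    div_lt_div_iff_of_pos_right (by positivity), Nat.cast_lt] at h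
  rw [delta_eq_of_dvd (dvd_mul_left M m) hmM, delta_eq_of_dvd hd hmM,
    div_lt_div_iff_of_pos_right (by positivity), Nat.cast_lt]
  rw [← card_filter_dvd_and (M := M) hm, ← card_filter_dvd_and (M := M) (r := 0) hm] at h
  have e : ∀ q : ℕ → Prop, ∀ [DecidablePred q], ((Finset.Icc 1 (m * M)).filter q).card =
      ((Finset.Icc 1 (m * M)).filter (fun x => m ∣ x ∧ q x)).card +
      ((Finset.Icc 1 (m * M)).filter (fun x => ¬ m ∣ x ∧ q x)).card := by
    intro q _
    rw [← Finset.card_filter_add_card_filter_not (s := (Finset.Icc 1 (m * M)).filter q)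
      (p := fun x => m ∣ x), Finset.filter_filter, Finset.filter_filter]
    simp only [and_comm]
  rw [e (fun x => divCount n m x = 1), e (fun x => divCount n (m + 1) x = 1)]
  have e1 : (Finset.Icc 1 (m * M)).filter (fun x => m ∣ x ∧ divCount n (m + 1) x = 1) =
      (Finset.Icc 1 (m * M)).filter (fun x => m ∣ x ∧ divCount n m x = 0) := by
    refine Finset.filter_congr fun x _ => and_congr_right fun hx => ?_
    rw [divCount_succ_of_dvd hnm hx]; omega
  have e2 : (Finset.Icc 1 (m * M)).filter (fun x => ¬ m ∣ x ∧ divCount n (m + 1) x = 1) =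
      (Finset.Icc 1 (m * M)).filter (fun x => ¬ m ∣ x ∧ divCount n m x = 1) := by
    refine Finset.filter_congr fun x _ => and_congr_right fun hx => ?_
    rw [divCount_succ_of_not_dvd hnm hx]
  rw [e1, e2]
  omega

lemma divCount_two_mul_prime {n p : ℕ} (hn : 2 ≤ n) (hp : p.Prime) (hnp : n < p) :
    divCount n (2 * p) (2 * p) = 1 := by
  unfold divCount
  rw [Finset.card_eq_one]
  refine ⟨p, ?_⟩
  ext d
  simp only [Finset.mem_filter, Finset.mem_Ioo, Finset.mem_singleton]
  constructor
  · rintro ⟨⟨h1, h2⟩, h3⟩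
    by_contra hd
    have hcop : Nat.Coprime d p := by
      refine Nat.Coprime.symm ((Nat.Prime.coprime_iff_not_dvd hp).2 ?_)
      rintro ⟨k, rfl⟩
      have : k < 2 := by
        by_contra hk
        nlinarith
      interval_cases k <;> simp_all
    have := Nat.le_of_dvd (by norm_num) (hcop.dvd_of_dvd_mul_right h3)
    omega
  · rintro rfl
    exact ⟨⟨hnp, by omega⟩, dvd_mul_left _ _⟩

lemma delta_one_succ_lt_of_two_mul_prime {n p : ℕ} (hn : 2 ≤ n) (hp : p.Prime) (hnp : n < p) :
    delta 1 n (2 * p + 1) < delta 1 n (2 * p) := by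
  set M := Llcm n (2 * p + 1) with hM
  have hM0 : 0 < M := Llcm_pos _ _
  have hd : Llcm n (2 * p) ∣ M :=
    Llcm_dvd_iff.2 fun d h1 h2 => Llcm_dvd_iff.1 (dvd_refl M) d h1 (by omega)
  have h2p : 2 * p ∣ M := Llcm_dvd_iff.1 (dvd_refl M) (2 * p) (by omega) (by omega)
  have h1 := divCount_two_mul_prime hn hp hnp
  rw [delta_eq_of_dvd (dvd_refl M) hM0, delta_eq_of_dvd hd hM0,
    div_lt_div_iff_of_pos_right (by positivity), Nat.cast_lt]
  refine Finset.card_lt_card ?_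
  rw [Finset.ssubset_iff_of_subset]
  · refine ⟨2 * p, ?_, ?_⟩
    · simp only [Finset.mem_filter, Finset.mem_Icc]
      exact ⟨⟨by omega, Nat.le_of_dvd hM0 h2p⟩, h1⟩
    · rw [Finset.mem_filter, divCount_succ_of_dvd (by omega) dvd_rfl, h1]
      simp
  · intro x hx
    rw [Finset.mem_filter] at hx ⊢
    refine ⟨hx.1, ?_⟩
    by_cases hdx : 2 * p ∣ x
    · have h3 := hx.2
      rw [divCount_succ_of_dvd (by omega) hdx] at h3
      have h4 : p ∈ (Finset.Ioo n (2 * p)).filter (fun d => d ∣ x) := by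
        simp only [Finset.mem_filter, Finset.mem_Ioo]
        exact ⟨⟨hnp, by omega⟩, (dvd_mul_left p 2).trans hdx⟩
      have := Finset.card_pos.2 ⟨p, h4⟩
      unfold divCount at h3
      omega
    · rw [← hx.2, divCount_succ_of_not_dvd (by omega) hdx]

lemma sum_inv_prime_dyadic_le {k : ℕ} (hk : 1 ≤ k) {S : Finset ℕ}
    (hS : ∀ p ∈ S, p.Prime ∧ Nat.log 2 p = k) : ∑ p ∈ S, (1 : ℝ) / p ≤ 4 / k := by
  have hk0 : (0 : ℝ) < k := by exact_mod_cast hk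
  have hl2 : 0 < Real.log 2 := Real.log_pos (by norm_num)
  have hx : (0 : ℝ) ≤ 2 ^ (k + 1) := by positivity
  have h1 : ∑ p ∈ S, Real.log p ≤ Chebyshev.theta (2 ^ (k + 1)) := by
    unfold Chebyshev.theta
    refine Finset.sum_le_sum_of_subset_of_nonneg (fun p hp => ?_) fun p hp _ =>
      Real.log_natCast_nonneg p
    obtain ⟨h1, h2⟩ := hS p hp
    rw [Finset.mem_filter, Finset.mem_Ioc, Nat.le_floor_iff hx]
    refine ⟨⟨h1.pos, ?_⟩, h1⟩
    have := Nat.lt_pow_succ_log_self (b := 2) (by norm_num) p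
    rw [h2] at this
    exact_mod_cast this.le
  have h2 := h1.trans (Chebyshev.theta_le_log4_mul_x hx)
  have h4 : Real.log 4 = 2 * Real.log 2 := by
    rw [show (4 : ℝ) = 2 ^ 2 by norm_num, Real.log_pow]; norm_num
  rw [h4] at h2
  have h3 : ∀ p ∈ S, (1 : ℝ) / p ≤ Real.log p / (k * Real.log 2 * 2 ^ k) := by
    intro p hp
    obtain ⟨hp1, hp2⟩ := hS p hp
    have hp0 : (0 : ℝ) < p := by exact_mod_cast hp1.pos
    have h5 : 2 ^ k ≤ p := by rw [← hp2]; exact Nat.pow_log_le_self 2 hp1.ne_zero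
    have h6 : (2 : ℝ) ^ k ≤ p := by exact_mod_cast h5
    have h7 : k * Real.log 2 ≤ Real.log p := by
      rw [← Real.log_pow]; exact Real.log_le_log (by positivity) h6
    rw [div_le_div_iff₀ hp0 (by positivity), one_mul]
    exact mul_le_mul h7 h6 (by positivity) (Real.log_natCast_nonneg p)
  calc ∑ p ∈ S, (1 : ℝ) / p ≤ ∑ p ∈ S, Real.log p / (k * Real.log 2 * 2 ^ k) :=
        Finset.sum_le_sum h3
    _ = (∑ p ∈ S, Real.log p) / (k * Real.log 2 * 2 ^ k) := (Finset.sum_div _ _ _).symm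
    _ ≤ (2 * Real.log 2 * 2 ^ (k + 1)) / (k * Real.log 2 * 2 ^ k) := by gcongr
    _ = 4 / k := by rw [pow_succ]; field_simp; norm_num

lemma sum_weighted_inv_prime_le {S T : Finset ℕ} (hS : ∀ p ∈ S, p.Prime)
    (hT : ∀ p ∈ S, Nat.log 2 p ∈ T) (hT1 : ∀ k ∈ T, 1 ≤ k) {g : ℕ → ℝ} (hg : ∀ k, 0 ≤ g k) :
    ∑ p ∈ S, g (Nat.log 2 p) * (1 / p) ≤ ∑ k ∈ T, g k * (4 / k) := by
  rw [← Finset.sum_fiberwise_of_maps_to hT]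
  refine Finset.sum_le_sum fun k hk => ?_
  have : ∑ p ∈ S with Nat.log 2 p = k, g (Nat.log 2 p) * (1 / (p : ℝ)) =
      g k * ∑ p ∈ S with Nat.log 2 p = k, (1 : ℝ) / p := by
    rw [Finset.mul_sum]
    refine Finset.sum_congr rfl fun p hp => ?_
    rw [(Finset.mem_filter.1 hp).2]
  rw [this]
  refine mul_le_mul_of_nonneg_left (sum_inv_prime_dyadic_le (hT1 k hk) fun p hp => ?_) (hg k)
  rw [Finset.mem_filter] at hp
  exact ⟨hS p hp.1, hp.2⟩

lemma sum_inv_Icc_eq_harmonic (n : ℕ) : ∑ s ∈ Finset.Icc 1 n, (1 : ℝ) / s = harmonic n := by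
  rw [harmonic_eq_sum_Icc]
  push_cast
  simp

lemma sum_inv_Icc_le (n : ℕ) : ∑ s ∈ Finset.Icc 1 n, (1 : ℝ) / s ≤ 1 + Real.log n := by
  rw [sum_inv_Icc_eq_harmonic]; exact harmonic_le_one_add_log n

lemma le_sum_inv_Icc (n : ℕ) : Real.log (n + 1) ≤ ∑ s ∈ Finset.Icc 1 n, (1 : ℝ) / s := by
  rw [sum_inv_Icc_eq_harmonic]; exact_mod_cast log_add_one_le_harmonic n

lemma sum_inv_prime_lt_le {S : Finset ℕ} {m : ℕ} (hS : ∀ p ∈ S, p.Prime ∧ p < m) :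
    ∑ p ∈ S, (1 : ℝ) / p ≤ 4 * (1 + Real.log (Nat.log 2 m)) := by
  have h := sum_weighted_inv_prime_le (S := S) (T := Finset.Icc 1 (Nat.log 2 m)) (g := fun _ => 1)
    (fun p hp => (hS p hp).1) (fun p hp => by
      obtain ⟨h1, h2⟩ := hS p hp
      exact Finset.mem_Icc.2 ⟨Nat.log_pos (by norm_num) h1.two_le, Nat.log_mono_right h2.le⟩)
    (fun k hk => (Finset.mem_Icc.1 hk).1) (fun _ => zero_le_one)
  simp only [one_mul] at h
  refine h.trans ?_
  have := sum_inv_Icc_le (Nat.log 2 m)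
  calc _ = 4 * ∑ s ∈ Finset.Icc 1 (Nat.log 2 m), (1 : ℝ) / s := by
        rw [Finset.mul_sum]; exact Finset.sum_congr rfl fun k _ => by ring
    _ ≤ _ := by gcongr

lemma sum_inv_prime_top_le {S : Finset ℕ} {n m k : ℕ} (hk : 1 ≤ k)
    (hkm : k + Nat.log 2 n + 1 = Nat.log 2 m)
    (hS : ∀ p ∈ S, p.Prime ∧ p < m ∧ m ≤ p * n) :
    ∑ p ∈ S, (1 : ℝ) / p ≤ 4 * (Nat.log 2 n + 2) / k := by
  have hk0 : (0 : ℝ) < k := by exact_mod_cast hk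
  have h := sum_weighted_inv_prime_le (S := S) (T := Finset.Icc k (Nat.log 2 m)) (g := fun _ => 1)
    (fun p hp => (hS p hp).1) (fun p hp => by
      obtain ⟨h1, h2, h3⟩ := hS p hp
      refine Finset.mem_Icc.2 ⟨?_, Nat.log_mono_right h2.le⟩
      have h4 := Nat.lt_pow_succ_log_self (b := 2) (by norm_num) p
      have h5 := Nat.lt_pow_succ_log_self (b := 2) (by norm_num) n
      have h6 : m < 2 ^ ((Nat.log 2 p + 1) + (Nat.log 2 n + 1)) := by
        rw [pow_add]
        exact h3.trans_lt (Nat.mul_lt_mul'' h4 h5)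
      have h7 := Nat.log_lt_of_lt_pow (by omega) h6
      simp only [Nat.succ_eq_add_one] at *
      omega)
    (fun j hj => hk.trans (Finset.mem_Icc.1 hj).1) (fun _ => zero_le_one)
  simp only [one_mul] at h
  refine h.trans ?_
  calc ∑ j ∈ Finset.Icc k (Nat.log 2 m), (4 : ℝ) / j ≤
      ∑ j ∈ Finset.Icc k (Nat.log 2 m), (4 : ℝ) / k := by
        refine Finset.sum_le_sum fun j hj => ?_
        have : (k : ℝ) ≤ j := by exact_mod_cast (Finset.mem_Icc.1 hj).1
        gcongr
    _ = 4 * (Nat.log 2 n + 2) / k := by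
        rw [Finset.sum_const, Nat.card_Icc, nsmul_eq_mul,
          show Nat.log 2 m + 1 - k = Nat.log 2 n + 2 by omega]
        push_cast
        ring

lemma sum_inv_prime_mul_log_le {S : Finset ℕ} {K : ℕ} (hK : 1 ≤ K)
    (hS : ∀ p ∈ S, p.Prime ∧ 2 ^ K ≤ p) :
    ∑ p ∈ S, (1 : ℝ) / (p * Real.log p) ≤ 8 / (K * Real.log 2) := by
  have hl2 : 0 < Real.log 2 := Real.log_pos (by norm_num)
  have hK0 : (0 : ℝ) < K := by exact_mod_cast hK
  set N := S.sup (fun p => Nat.log 2 p) with hN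
  have hlog : ∀ p ∈ S, K ≤ Nat.log 2 p := fun p hp =>
    (Nat.le_log_iff_pow_le (by norm_num) (hS p hp).1.ne_zero).2 (hS p hp).2
  have h := sum_weighted_inv_prime_le (S := S) (T := Finset.Ioo (K - 1) (N + 1))
    (g := fun k => 1 / (k * Real.log 2))
    (fun p hp => (hS p hp).1) (fun p hp => by
      have h1 := hlog p hp
      have h2 : Nat.log 2 p ≤ N := Finset.le_sup (f := fun p => Nat.log 2 p) hp
      exact Finset.mem_Ioo.2 ⟨by omega, by omega⟩)
    (fun j hj => by have := (Finset.mem_Ioo.1 hj).1; omega) (fun _ => by positivity)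
  calc ∑ p ∈ S, (1 : ℝ) / (p * Real.log p)
      ≤ ∑ p ∈ S, 1 / (Nat.log 2 p * Real.log 2) * (1 / (p : ℝ)) := by
        refine Finset.sum_le_sum fun p hp => ?_
        have hp1 := (hS p hp).1
        have hp0 : (0 : ℝ) < p := by exact_mod_cast hp1.pos
        have hl : (0 : ℝ) < Nat.log 2 p := by exact_mod_cast lt_of_lt_of_le hK (hlog p hp)
        have h6 : ((2 : ℝ) ^ Nat.log 2 p) ≤ p := by
          exact_mod_cast Nat.pow_log_le_self 2 hp1.ne_zero
        have h7 : Nat.log 2 p * Real.log 2 ≤ Real.log p := by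
          rw [← Real.log_pow]; exact Real.log_le_log (by positivity) h6
        rw [← one_div_mul_one_div, mul_comm]
        gcongr
    _ ≤ _ := h
    _ = 4 / Real.log 2 * ∑ k ∈ Finset.Ioo (K - 1) (N + 1), ((k : ℝ) ^ 2)⁻¹ := by
        rw [Finset.mul_sum]
        refine Finset.sum_congr rfl fun j hj => ?_
        have : (0 : ℝ) < j := by
          have := (Finset.mem_Ioo.1 hj).1
          exact_mod_cast (by omega : 0 < j)
        field_simp
    _ ≤ 4 / Real.log 2 * (2 / K) := by
        have := sum_Ioo_inv_sq_le (α := ℝ) (K - 1) (N + 1)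
        rw [Nat.cast_sub hK] at this
        simp only [Nat.cast_one, sub_add_cancel] at this
        gcongr
    _ = _ := by field_simp; norm_num

lemma eq_of_mul_eq_mul_of_rough {q a b a' b' : ℕ} (ha0 : 0 < a) (ha0' : 0 < a') (ha : a < q)
    (ha' : a' < q)
    (hb : ∀ r, r.Prime → r ∣ b → q ≤ r) (hb' : ∀ r, r.Prime → r ∣ b' → q ≤ r)
    (h : a * b = a' * b') : a = a' ∧ b = b' := by
  have cop : ∀ a b : ℕ, 0 < a → a < q → (∀ r, r.Prime → r ∣ b → q ≤ r) → Nat.Coprime a b := by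
    intro a b ha0 ha hb
    refine Nat.Coprime.symm (Nat.coprime_of_dvd fun r hr h1 h2 => ?_)
    have := Nat.le_of_dvd ha0 h2
    have := hb r hr h1
    omega
  have h1 : a ∣ a' := (cop a b' ha0 ha hb').dvd_of_dvd_mul_right (h ▸ dvd_mul_right a b)
  have h2 : a' ∣ a := (cop a' b ha0' ha' hb).dvd_of_dvd_mul_right (h ▸ dvd_mul_right a' b')
  obtain rfl := Nat.dvd_antisymm h1 h2
  exact ⟨rfl, Nat.eq_of_mul_eq_mul_left ha0 h⟩

lemma sum_inv_rough_le {n q : ℕ} (hq : 2 ≤ q) (hqn : q ≤ n) {R : Finset ℕ}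
    (hR : ∀ b ∈ R, 1 ≤ b ∧ b ≤ n ∧ ∀ r, r.Prime → r ∣ b → q ≤ r) :
    ∑ b ∈ R, (1 : ℝ) / b ≤ (1 + 2 * Real.log n) / Real.log q := by
  have hq1 : (1 : ℝ) < q := by exact_mod_cast hq
  have hlq : 0 < Real.log q := Real.log_pos hq1
  have h1 := le_sum_inv_Icc (q - 1)
  rw [Nat.cast_sub (by omega), Nat.cast_one, sub_add_cancel] at h1
  have h2 := sum_inv_Icc_le (n * n)
  have h3 : Real.log ((n * n : ℕ) : ℝ) = 2 * Real.log n := by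
    rw [← pow_two]; push_cast; rw [Real.log_pow]; norm_num
  rw [h3] at h2
  rw [le_div_iff₀ hlq]
  have h4 : 0 ≤ ∑ b ∈ R, (1 : ℝ) / b := Finset.sum_nonneg fun b _ => by positivity
  calc (∑ b ∈ R, (1 : ℝ) / b) * Real.log q
      ≤ (∑ b ∈ R, (1 : ℝ) / b) * ∑ a ∈ Finset.Icc 1 (q - 1), (1 : ℝ) / a := by gcongr
    _ = ∑ x ∈ Finset.Icc 1 (q - 1) ×ˢ R, (1 : ℝ) / (x.1 * x.2 : ℕ) := by
        rw [mul_comm, Finset.sum_mul_sum, ← Finset.sum_product']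
        refine Finset.sum_congr rfl fun x _ => ?_
        push_cast
        rw [one_div_mul_one_div]
    _ = ∑ c ∈ (Finset.Icc 1 (q - 1) ×ˢ R).image (fun x => x.1 * x.2), (1 : ℝ) / (c : ℕ) := by
        rw [Finset.sum_image]
        intro x hx y hy hxy
        simp only [Finset.coe_product, Set.mem_prod, Finset.mem_coe, Finset.mem_Icc] at hx hy
        have := eq_of_mul_eq_mul_of_rough (q := q) (by omega) (by omega) (by omega) (by omega)
          (hR _ hx.2).2.2 (hR _ hy.2).2.2 hxy
        exact Prod.ext this.1 this.2
    _ ≤ ∑ c ∈ Finset.Icc 1 (n * n), (1 : ℝ) / c := by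
        refine Finset.sum_le_sum_of_subset_of_nonneg ?_ fun _ _ _ => by positivity
        intro c hc
        rw [Finset.mem_image] at hc
        obtain ⟨x, hx, rfl⟩ := hc
        rw [Finset.mem_product, Finset.mem_Icc] at hx
        have := hR _ hx.2
        exact Finset.mem_Icc.2 ⟨Nat.mul_pos hx.1.1 this.1,
          Nat.mul_le_mul (by omega) this.2.1⟩
    _ ≤ _ := h2

/-- Splitting off the part of `x` composed of the primes dividing `V`. -/
lemma exists_smooth_mul_coprime (V : ℕ) {x : ℕ} (hx : 0 < x) :
    ∃ s y, x = s * y ∧ Nat.Coprime y V ∧ ∀ p, p.Prime → p ∣ s → p ∣ V := by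
  induction x using Nat.strong_induction_on with
  | _ x ih =>
    by_cases hc : Nat.Coprime x V
    · exact ⟨1, x, (one_mul x).symm, hc, fun p hp h => absurd (Nat.dvd_one.1 h) hp.ne_one⟩
    · obtain ⟨p, hp, ⟨k, rfl⟩, hpV⟩ := Nat.Prime.not_coprime_iff_dvd.1 hc
      have hk : 0 < k := Nat.pos_of_mul_pos_left hx
      obtain ⟨s, y, h1, h2, h3⟩ := ih k (by nlinarith [hp.two_le]) hk
      refine ⟨p * s, y, by rw [h1, mul_assoc], h2, fun r hr h => ?_⟩
      rcases (Nat.Prime.dvd_mul hr).1 h with h | h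
      · rwa [(Nat.prime_dvd_prime_iff_eq hr hp).1 h]
      · exact h3 r hr h

/-- The integers in `[1, M]` of the form `s * y` with `y` coprime to `V`. -/
def sieved (M s V : ℕ) : Finset ℕ :=
  (Finset.Icc 1 M).filter (fun x => s ∣ x ∧ Nat.Coprime (x / s) V)

lemma mem_sieved {M s V x : ℕ} (hs : 0 < s) :
    x ∈ sieved M s V ↔ (1 ≤ x ∧ x ≤ M) ∧ ∃ y, x = s * y ∧ Nat.Coprime y V := by
  rw [sieved, Finset.mem_filter, Finset.mem_Icc]
  refine and_congr_right fun _ => ⟨?_, ?_⟩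
  · rintro ⟨⟨y, rfl⟩, h⟩
    exact ⟨y, rfl, by rwa [Nat.mul_div_cancel_left _ hs] at h⟩
  · rintro ⟨y, rfl, h⟩
    exact ⟨dvd_mul_right _ _, by rwa [Nat.mul_div_cancel_left _ hs]⟩

lemma card_sieved {M s V : ℕ} (hs : 0 < s) (hV : 0 < V) (h : s * V ∣ M) :
    ((sieved M s V).card : ℝ) = M * ((V.totient : ℝ) / V) * (1 / s) := by
  obtain ⟨k, rfl⟩ := h
  have hper : Function.Periodic (fun y => Nat.Coprime y V) V := by
    intro y; simp
  have h1 : (sieved (s * V * k) s V).card =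
      ((Finset.Icc 1 (k * V)).filter (fun y => Nat.Coprime y V)).card := by
    symm
    refine Finset.card_bij (fun y _ => s * y) ?_ ?_ ?_
    · intro y hy
      rw [Finset.mem_filter, Finset.mem_Icc] at hy
      rw [mem_sieved hs]
      refine ⟨⟨Nat.mul_pos hs hy.1.1, ?_⟩, y, rfl, hy.2⟩
      calc s * y ≤ s * (k * V) := Nat.mul_le_mul_left s hy.1.2
        _ = s * V * k := by ring
    · intro a _ b _ hab
      exact Nat.eq_of_mul_eq_mul_left hs hab
    · intro x hx
      rw [mem_sieved hs] at hx
      obtain ⟨⟨hx1, hx2⟩, y, rfl, hy⟩ := hx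
      refine ⟨y, ?_, rfl⟩
      rw [Finset.mem_filter, Finset.mem_Icc]
      refine ⟨⟨Nat.pos_of_mul_pos_left hx1, Nat.le_of_mul_le_mul_left ?_ hs⟩, hy⟩
      calc s * y ≤ s * V * k := hx2
        _ = s * (k * V) := by ring
  have h2 : ((Finset.Icc 1 V).filter (fun y => Nat.Coprime y V)).card = V.totient := by
    rw [← Nat.filter_coprime_Ico_eq_totient V 1]
    congr 1
    ext y
    simp only [Finset.mem_filter, Finset.mem_Icc, Finset.mem_Ico, Nat.coprime_comm]
    omega
  rw [h1, card_filter_Icc_mul_of_periodic_s12 hper, h2]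
  have : (V : ℝ) ≠ 0 := by positivity
  have : (s : ℝ) ≠ 0 := by positivity
  push_cast
  field_simp

lemma prime_dvd_primorial_iff {p m : ℕ} (hp : p.Prime) : p ∣ primorial m ↔ p ≤ m := by
  unfold primorial
  rw [hp.prime.dvd_finsetProd_iff]
  simp only [Finset.mem_filter, Finset.mem_range]
  constructor
  · rintro ⟨q, ⟨h1, h2⟩, h3⟩
    rw [(Nat.prime_dvd_prime_iff_eq hp h2).1 h3]; omega
  · intro h
    exact ⟨p, ⟨by omega, hp⟩, dvd_rfl⟩

lemma coprime_of_lt_of_coprime_primorial {m d y : ℕ} (hd0 : 0 < d) (hd : d < m)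
    (hy : Nat.Coprime y (primorial (m - 1))) : Nat.Coprime d y := by
  refine Nat.coprime_of_dvd fun r hr h1 h2 => ?_
  have h3 : r ∣ primorial (m - 1) :=
    (prime_dvd_primorial_iff hr).2 (by have := Nat.le_of_dvd hd0 h1; omega)
  exact hr.ne_one (Nat.dvd_one.1 (hy ▸ Nat.dvd_gcd h2 h3))

lemma exists_minimal_divisor_gt {n e : ℕ} (he : n < e) :
    ∃ g, g ∣ e ∧ n < g ∧ ∀ r k, r.Prime → g = r * k → k ≤ n := by
  classical
  have hex : ∃ g, g ∣ e ∧ n < g := ⟨e, dvd_rfl, he⟩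
  refine ⟨Nat.find hex, (Nat.find_spec hex).1, (Nat.find_spec hex).2, fun r k hr h => ?_⟩
  by_contra hk
  have h0 := (Nat.find_spec hex).2
  refine Nat.find_min hex (m := k) ?_ ⟨(Dvd.intro_left r h.symm).trans (Nat.find_spec hex).1,
    by omega⟩
  rw [h] at h0 ⊢
  nlinarith [hr.two_le]

lemma coprime_primorial_div {p m : ℕ} (hp : p.Prime) (hpm : p ≤ m) :
    Nat.Coprime p (primorial m / p) := by
  have hmem : p ∈ (Finset.range (m + 1)).filter Nat.Prime :=
    Finset.mem_filter.2 ⟨Finset.mem_range.2 (by omega), hp⟩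
  have h : primorial m = p * ∏ q ∈ ((Finset.range (m + 1)).filter Nat.Prime).erase p, q :=
    (Finset.mul_prod_erase _ (fun q => q) hmem).symm
  rw [h, Nat.mul_div_cancel_left _ hp.pos]
  refine Nat.Coprime.prod_right fun q hq => ?_
  rw [Finset.mem_erase, Finset.mem_filter] at hq
  exact (Nat.coprime_primes hp hq.2.2).2 hq.1.symm

lemma totient_primorial_div {p m : ℕ} (hp : p.Prime) (hpm : p ≤ m) :
    (((primorial m / p).totient : ℝ) / (primorial m / p : ℕ)) ≤
      2 * ((primorial m).totient / (primorial m : ℝ)) := by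
  obtain ⟨V, hV⟩ := (prime_dvd_primorial_iff hp).2 hpm
  have hcop := coprime_primorial_div hp hpm
  have hW := primorial_pos m
  rw [hV] at hcop hW ⊢
  rw [Nat.mul_div_cancel_left _ hp.pos] at hcop ⊢
  have hV0 : 0 < V := Nat.pos_of_mul_pos_left hW
  rw [Nat.totient_mul hcop, Nat.totient_prime hp]
  have hp2 : (2 : ℝ) ≤ p := by exact_mod_cast hp.two_le
  have hV0' : (0 : ℝ) < V := by exact_mod_cast hV0
  push_cast [Nat.cast_sub hp.one_le]
  have h0 : (0 : ℝ) ≤ (V.totient : ℝ) := by positivity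
  rw [mul_div_assoc', div_le_div_iff₀ hV0' (by positivity)]
  nlinarith [mul_nonneg (mul_nonneg h0 hV0'.le) (sub_nonneg.2 hp2)]

lemma divCount_eq_one_cases {n m M x : ℕ} (hn : 2 ≤ n) (hm : n ^ 3 < m) (hx : 1 ≤ x) (hxM : x ≤ M)
    (h : divCount n m x = 1) :
    (∃ p e, p.Prime ∧ n < p ∧ p < m ∧ 1 ≤ e ∧ e ≤ n ∧ (e = 1 ∨ m ≤ p * n) ∧
      x ∈ sieved M (p * e) (primorial (m - 1) / p)) ∨
    (∃ q b, q.Prime ∧ q ≤ n ∧ 1 ≤ b ∧ b ≤ n ∧ n < q * b ∧ (∀ r, r.Prime → r ∣ b → q ≤ r) ∧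
      x ∈ sieved M (q * b) (primorial (m - 1))) := by
  have hn2 : n * n < m := by nlinarith [Nat.zero_le (n * n)]
  have hn3 : n * n * n < m := by calc n * n * n = n ^ 3 := by ring
                                  _ < m := hm
  obtain ⟨d₀, hd₀⟩ := Finset.card_eq_one.1 h
  have huniq : ∀ d, n < d → d < m → d ∣ x → d = d₀ := by
    intro d h1 h2 h3
    rw [← Finset.mem_singleton, ← hd₀, Finset.mem_filter, Finset.mem_Ioo]
    exact ⟨⟨h1, h2⟩, h3⟩
  have hd₀' : d₀ ∈ (Finset.Ioo n m).filter (fun d => d ∣ x) := by rw [hd₀]; simp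
  rw [Finset.mem_filter, Finset.mem_Ioo] at hd₀'
  obtain ⟨⟨hd1, hd2⟩, hd3⟩ := hd₀'
  by_cases hp : ∃ p, p.Prime ∧ n < p ∧ p < m ∧ p ∣ x
  · left
    obtain ⟨p, hp, hnp, hpm, hpx⟩ := hp
    obtain rfl := huniq p hnp hpm hpx
    have hcop := coprime_primorial_div hp (show p ≤ m - 1 by omega)
    obtain ⟨e, y, rfl, hy, he⟩ := exists_smooth_mul_coprime (primorial (m - 1) / p) hx
    have hdiv : primorial (m - 1) / p ∣ primorial (m - 1) :=
      Nat.div_dvd_of_dvd ((prime_dvd_primorial_iff hp).2 (by omega))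
    have hpe : Nat.Coprime p e := (Nat.Prime.coprime_iff_not_dvd hp).2 fun h' =>
      (Nat.Prime.coprime_iff_not_dvd hp).1 hcop (he p hp h')
    obtain ⟨z, rfl⟩ := hpe.dvd_of_dvd_mul_left hpx
    have hz : Nat.Coprime z (primorial (m - 1) / p) := Nat.Coprime.coprime_mul_left (by
      rwa [mul_comm] at hy)
    have he0 : 0 < e := Nat.pos_of_mul_pos_right hx
    have hprime : ∀ r, r.Prime → r ∣ e → r ≤ n := by
      intro r hr hre
      by_contra hrn
      have h1 : r ≤ m - 1 := (prime_dvd_primorial_iff hr).1 ((he r hr hre).trans hdiv)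
      have := huniq r (by omega) (by omega) (hre.mul_right _)
      rw [this] at hre
      exact (Nat.Prime.coprime_iff_not_dvd hp).1 hpe hre
    have hen : e ≤ n := by
      by_contra hne
      obtain ⟨g, hge, hng, hg⟩ := exists_minimal_divisor_gt (not_le.1 hne)
      obtain ⟨r, hr, k, rfl⟩ := Nat.exists_prime_and_dvd (show g ≠ 1 by omega)
      have h1 := hg r k hr rfl
      have h2 := hprime r hr ((dvd_mul_right r k).trans hge)
      have h3 := huniq (r * k) hng ((Nat.mul_le_mul h2 h1).trans_lt hn2) (hge.mul_right _)
      rw [h3] at hge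
      exact (Nat.Prime.coprime_iff_not_dvd hp).1 hpe hge
    refine ⟨p, e, hp, hnp, hpm, he0, hen, ?_, ?_⟩
    · by_cases he1 : e = 1
      · exact Or.inl he1
      · right
        obtain ⟨r, hr, hre⟩ := Nat.exists_prime_and_dvd he1
        have h1 := hprime r hr hre
        by_contra hlt
        have h2 : p * r ≤ p * n := Nat.mul_le_mul_left p h1
        have h3 : p * 2 ≤ p * r := Nat.mul_le_mul_left p hr.two_le
        have h4 : p * r ∣ e * (p * z) := by
          rw [mul_comm p r]
          exact Nat.mul_dvd_mul hre (dvd_mul_right p z)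
        have := huniq (p * r) (by omega) (by omega) h4
        omega
    · rw [mem_sieved (Nat.mul_pos hp.pos he0)]
      exact ⟨⟨hx, hxM⟩, z, by ring, hz⟩
  · right
    push Not at hp
    obtain ⟨s, y, rfl, hy, hs⟩ := exists_smooth_mul_coprime (primorial (m - 1)) hx
    have hs0 : 0 < s := Nat.pos_of_mul_pos_right hx
    have hd₀s : d₀ ∣ s :=
      (coprime_of_lt_of_coprime_primorial (by omega) hd2 hy).dvd_of_dvd_mul_right hd3
    have hprime : ∀ r, r.Prime → r ∣ s → r ≤ n := by
      intro r hr hrs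
      by_contra hrn
      have h1 : r ≤ m - 1 := (prime_dvd_primorial_iff hr).1 (hs r hr hrs)
      exact hp r hr (by omega) (by omega) (hrs.mul_right y)
    obtain ⟨g, hgs, hng, hg⟩ := exists_minimal_divisor_gt
      (hd1.trans_le (Nat.le_of_dvd hs0 hd₀s))
    have hg1 : g ≠ 1 := by omega
    have hq := Nat.minFac_prime hg1
    obtain ⟨b, hb⟩ := Nat.minFac_dvd g
    set q := g.minFac with hqdef
    have hqn : q ≤ n := hprime q hq ((Nat.minFac_dvd g).trans hgs)
    have hbn : b ≤ n := hg q b hq hb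
    have hgn : g ≤ n * n := by rw [hb]; exact Nat.mul_le_mul hqn hbn
    have hgd := huniq g hng (by omega) (hgs.mul_right y)
    have hsg : s = g := by
      obtain ⟨k, hk⟩ := hgs
      by_cases hk1 : k = 1
      · rw [hk, hk1, mul_one]
      · exfalso
        obtain ⟨r, hr, hrk⟩ := Nat.exists_prime_and_dvd hk1
        have hrs : g * r ∣ s := by rw [hk]; exact Nat.mul_dvd_mul_left g hrk
        have h1 := hprime r hr ((dvd_mul_left r g).trans hrs)
        have h2 : g * 2 ≤ g * r := Nat.mul_le_mul_left g hr.two_le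
        have h3 : g * r ≤ n * n * n := Nat.mul_le_mul hgn h1
        have := huniq (g * r) (by omega) (by omega) (hrs.mul_right y)
        omega
    refine ⟨q, b, hq, hqn, ?_, hbn, hb ▸ hng, ?_, ?_⟩
    · rcases Nat.eq_zero_or_pos b with h0 | h0
      · rw [h0] at hb; omega
      · exact h0
    · intro r hr hrb
      exact Nat.minFac_le_of_dvd hr.two_le (hrb.trans (Dvd.intro_left q hb.symm))
    · rw [← hb, mem_sieved (by omega)]
      exact ⟨⟨hx, hxM⟩, y, by rw [hsg], hy⟩

lemma card_divCount_zero_ge {n m M : ℕ} (hnm : n < m)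
    (hM : ∀ s, 1 ≤ s → s ≤ m * n → s * primorial (m - 1) ∣ M) :
    (M : ℝ) * ((primorial (m - 1)).totient / (primorial (m - 1) : ℝ)) *
        ∑ s ∈ Finset.Icc 1 n, (1 : ℝ) / s ≤
      (((Finset.Icc 1 M).filter (fun x => divCount n m x = 0)).card : ℝ) := by
  have hW := primorial_pos (m - 1)
  have hsub : (Finset.Icc 1 n).biUnion (fun s => sieved M s (primorial (m - 1))) ⊆
      (Finset.Icc 1 M).filter (fun x => divCount n m x = 0) := by
    intro x hx
    obtain ⟨s, hs, hx⟩ := Finset.mem_biUnion.1 hx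
    rw [Finset.mem_Icc] at hs
    obtain ⟨hxM, y, rfl, hy⟩ := (mem_sieved (by omega)).1 hx
    rw [Finset.mem_filter, Finset.mem_Icc]
    refine ⟨hxM, ?_⟩
    rw [divCount, Finset.card_eq_zero, Finset.filter_eq_empty_iff]
    intro d hd hdx
    rw [Finset.mem_Ioo] at hd
    have hc := coprime_of_lt_of_coprime_primorial (by omega) hd.2 hy
    have := Nat.le_of_dvd (by omega) (hc.dvd_of_dvd_mul_right hdx)
    omega
  have hdisj : ((Finset.Icc 1 n : Finset ℕ) : Set ℕ).PairwiseDisjoint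
      (fun s => sieved M s (primorial (m - 1))) := by
    intro s hs t ht hst
    rw [Finset.coe_Icc, Set.mem_Icc] at hs ht
    rw [Function.onFun, Finset.disjoint_left]
    intro x hx hx'
    obtain ⟨-, y, rfl, hy⟩ := (mem_sieved (by omega)).1 hx
    obtain ⟨-, z, h, hz⟩ := (mem_sieved (by omega)).1 hx'
    refine hst (Nat.dvd_antisymm ?_ ?_)
    · exact (coprime_of_lt_of_coprime_primorial (by omega) (by omega) hz).dvd_of_dvd_mul_right
        (h ▸ dvd_mul_right s y)
    · exact (coprime_of_lt_of_coprime_primorial (by omega) (by omega) hy).dvd_of_dvd_mul_right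
        (h ▸ dvd_mul_right t z)
  have h1 := Finset.card_le_card hsub
  rw [Finset.card_biUnion hdisj] at h1
  refine le_trans (le_of_eq ?_) (Nat.cast_le.2 h1)
  rw [Nat.cast_sum, Finset.mul_sum]
  refine Finset.sum_congr rfl fun s hs => (card_sieved ?_ hW ?_).symm
  · exact (Finset.mem_Icc.1 hs).1
  · rw [Finset.mem_Icc] at hs
    exact hM s hs.1 (hs.2.trans (Nat.le_mul_of_pos_left n (by omega)))

open Classical in
lemma card_divCount_one_le {n m M : ℕ} (hn : 2 ≤ n) (hm : n ^ 3 < m)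
    (hM : ∀ s, 1 ≤ s → s ≤ m * n → s * primorial (m - 1) ∣ M) :
    (((Finset.Icc 1 M).filter (fun x => divCount n m x = 1)).card : ℝ) ≤
      (M : ℝ) * ((primorial (m - 1)).totient / (primorial (m - 1) : ℝ)) *
        (2 * ∑ p ∈ (Finset.range m).filter Nat.Prime, (1 : ℝ) / p +
          2 * ((∑ p ∈ (Finset.range m).filter (fun p => p.Prime ∧ m ≤ p * n), (1 : ℝ) / p) *
            ∑ e ∈ Finset.Icc 1 n, (1 : ℝ) / e) +
          ∑ q ∈ (Finset.range (n + 1)).filter Nat.Prime, (1 : ℝ) / q *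
            ∑ b ∈ (Finset.Icc 1 n).filter
              (fun b => n < q * b ∧ ∀ r, r.Prime → r ∣ b → q ≤ r), (1 : ℝ) / b) := by
  have hW := primorial_pos (m - 1)
  have hnm : n < m := lt_of_le_of_lt (Nat.le_self_pow (by norm_num) n) hm
  set W := primorial (m - 1) with hWdef
  set D : ℝ := (W.totient : ℝ) / (W : ℝ) with hD
  have hprime : ∀ p e, p.Prime → p < m → 1 ≤ e → e ≤ n →
      ((sieved M (p * e) (W / p)).card : ℝ) ≤ M * D * (2 * (1 / p * (1 / e))) := by
    intro p e hp hpm he1 hen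
    have hpW : p ∣ W := (prime_dvd_primorial_iff hp).2 (by omega)
    rw [card_sieved (Nat.mul_pos hp.pos he1) (Nat.div_pos (Nat.le_of_dvd hW hpW) hp.pos)
      ((Nat.mul_dvd_mul_left _ (Nat.div_dvd_of_dvd hpW)).trans
        (hM _ (Nat.mul_pos hp.pos he1) (Nat.mul_le_mul hpm.le hen)))]
    have h1 := totient_primorial_div hp (show p ≤ m - 1 by omega)
    have h2 : (1 : ℝ) / ((p * e : ℕ) : ℝ) = 1 / p * (1 / e) := by push_cast; ring
    rw [h2]
    calc (M : ℝ) * (((W / p).totient : ℝ) / (W / p : ℕ)) * (1 / p * (1 / e))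
        ≤ M * (2 * D) * (1 / p * (1 / e)) := by gcongr
      _ = _ := by ring
  set A := ((Finset.range m).filter Nat.Prime).biUnion (fun p => sieved M (p * 1) (W / p))
  set B := ((Finset.range m).filter (fun p => p.Prime ∧ m ≤ p * n)).biUnion
    (fun p => (Finset.Icc 1 n).biUnion fun e => sieved M (p * e) (W / p))
  set C := ((Finset.range (n + 1)).filter Nat.Prime).biUnion
    (fun q => ((Finset.Icc 1 n).filter
              (fun b => n < q * b ∧ ∀ r, r.Prime → r ∣ b → q ≤ r)).biUnion
                fun b => sieved M (q * b) W)
  have hsub : (Finset.Icc 1 M).filter (fun x => divCount n m x = 1) ⊆ A ∪ B ∪ C := by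
    intro x hx
    rw [Finset.mem_filter, Finset.mem_Icc] at hx
    rw [Finset.mem_union, Finset.mem_union]
    rcases divCount_eq_one_cases hn hm hx.1.1 hx.1.2 hx.2 with
      ⟨p, e, hp, -, hpm, he1, hen, he, hxs⟩ | ⟨q, b, hq, hqn, hb1, hbn, hqb, hr, hxs⟩
    · rcases he with rfl | he
      · refine Or.inl (Or.inl (Finset.mem_biUnion.2 ⟨p, ?_, hxs⟩))
        simp [hp, hpm]
      · refine Or.inl (Or.inr (Finset.mem_biUnion.2 ⟨p, ?_, Finset.mem_biUnion.2 ⟨e, ?_, hxs⟩⟩))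
        · simp [hp, hpm, he]
        · simp [he1, hen]
    · refine Or.inr (Finset.mem_biUnion.2 ⟨q, ?_, Finset.mem_biUnion.2 ⟨b, ?_, hxs⟩⟩)
      · simp [hq]; omega
      · simpa [hb1, hbn, hqb] using hr
  have hA : (A.card : ℝ) ≤ M * D * (2 * ∑ p ∈ (Finset.range m).filter Nat.Prime, (1 : ℝ) / p) := by
    refine (Nat.cast_le.2 Finset.card_biUnion_le).trans ?_
    rw [Nat.cast_sum, Finset.mul_sum, Finset.mul_sum]
    refine Finset.sum_le_sum fun p hp => ?_
    rw [Finset.mem_filter, Finset.mem_range] at hp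
    simpa using hprime p 1 hp.2 hp.1 le_rfl (by omega)
  have hB : (B.card : ℝ) ≤ M * D * (2 * ((∑ p ∈ (Finset.range m).filter
      (fun p => p.Prime ∧ m ≤ p * n), (1 : ℝ) / p) * ∑ e ∈ Finset.Icc 1 n, (1 : ℝ) / e)) := by
    refine (Nat.cast_le.2 Finset.card_biUnion_le).trans ?_
    rw [Nat.cast_sum, Finset.sum_mul, Finset.mul_sum, Finset.mul_sum]
    refine Finset.sum_le_sum fun p hp => ?_
    rw [Finset.mem_filter, Finset.mem_range] at hp
    refine (Nat.cast_le.2 Finset.card_biUnion_le).trans ?_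
    rw [Nat.cast_sum, Finset.mul_sum, Finset.mul_sum, Finset.mul_sum]
    refine Finset.sum_le_sum fun e he => ?_
    rw [Finset.mem_Icc] at he
    exact hprime p e hp.2.1 hp.1 he.1 he.2
  have hC : (C.card : ℝ) ≤ M * D * ∑ q ∈ (Finset.range (n + 1)).filter Nat.Prime, (1 : ℝ) / q *
            ∑ b ∈ (Finset.Icc 1 n).filter
              (fun b => n < q * b ∧ ∀ r, r.Prime → r ∣ b → q ≤ r), (1 : ℝ) / b := by
    refine (Nat.cast_le.2 Finset.card_biUnion_le).trans ?_
    rw [Nat.cast_sum, Finset.mul_sum]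
    refine Finset.sum_le_sum fun q hq => ?_
    rw [Finset.mem_filter, Finset.mem_range] at hq
    refine (Nat.cast_le.2 Finset.card_biUnion_le).trans ?_
    rw [Nat.cast_sum, Finset.mul_sum, Finset.mul_sum]
    refine Finset.sum_le_sum fun b hb => le_of_eq ?_
    rw [Finset.mem_filter, Finset.mem_Icc] at hb
    have hqb : 0 < q * b := Nat.mul_pos hq.2.pos hb.1.1
    rw [card_sieved hqb hW (hM _ hqb (Nat.mul_le_mul (by omega) hb.1.2))]
    push_cast
    ring
  have h1 := (Finset.card_le_card hsub).trans
    ((Finset.card_union_le _ _).trans (Nat.add_le_add_right (Finset.card_union_le _ _) _))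
  have h2 : (((Finset.Icc 1 M).filter (fun x => divCount n m x = 1)).card : ℝ) ≤
      A.card + B.card + C.card := by exact_mod_cast h1
  linarith

open Classical in
lemma sum_sum_inv_rough_le {n K : ℕ} (hn : 2 ≤ n) (hK : 1 ≤ K) :
    ∑ q ∈ (Finset.range (n + 1)).filter Nat.Prime, (1 : ℝ) / q *
            ∑ b ∈ (Finset.Icc 1 n).filter
              (fun b => n < q * b ∧ ∀ r, r.Prime → r ∣ b → q ≤ r), (1 : ℝ) / b ≤
      2 ^ K + (1 + 2 * Real.log n) * (8 / (K * Real.log 2)) := by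
  have hln : 0 ≤ Real.log n := Real.log_natCast_nonneg n
  set P := (Finset.range (n + 1)).filter Nat.Prime with hP
  rw [← Finset.sum_filter_add_sum_filter_not P (fun q => q < 2 ^ K)]
  refine add_le_add ?_ ?_
  · have h1 : (P.filter (fun q => q < 2 ^ K)).card ≤ 2 ^ K := by
      have : P.filter (fun q => q < 2 ^ K) ⊆ Finset.range (2 ^ K) := fun q hq =>
        Finset.mem_range.2 (Finset.mem_filter.1 hq).2
      simpa using Finset.card_le_card this
    have h2 : ((P.filter (fun q => q < 2 ^ K)).card : ℝ) ≤ 2 ^ K := by exact_mod_cast h1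
    refine le_trans ?_ h2
    refine (Finset.sum_le_card_nsmul _ _ 1 fun q hq => ?_).trans (by simp)
    have hq0 : 0 < q := (Finset.mem_filter.1 (Finset.mem_filter.1 hq).1).2.pos
    have hqr : (0 : ℝ) < q := by exact_mod_cast hq0
    have hnr : (0 : ℝ) < n := by exact_mod_cast (by omega : 0 < n)
    have h3 : ∑ b ∈ (Finset.Icc 1 n).filter
        (fun b => n < q * b ∧ ∀ r, r.Prime → r ∣ b → q ≤ r), (1 : ℝ) / b ≤ n * (q / n) := by
      refine (Finset.sum_le_card_nsmul _ _ ((q : ℝ) / n) fun b hb => ?_).trans ?_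
      · rw [Finset.mem_filter, Finset.mem_Icc] at hb
        have hb0 : (0 : ℝ) < b := by exact_mod_cast hb.1.1
        rw [div_le_div_iff₀ hb0 hnr, one_mul]
        exact_mod_cast hb.2.1.le
      · rw [nsmul_eq_mul]
        gcongr
        exact (Finset.card_filter_le _ _).trans (by simp)
    calc (1 : ℝ) / q * _ ≤ 1 / q * (n * (q / n)) := by gcongr
      _ = 1 := by field_simp
  · have h1 : ∀ q ∈ P.filter (fun q => ¬ q < 2 ^ K), (1 : ℝ) / q *
            ∑ b ∈ (Finset.Icc 1 n).filter
              (fun b => n < q * b ∧ ∀ r, r.Prime → r ∣ b → q ≤ r), (1 : ℝ) / b ≤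
        (1 + 2 * Real.log n) * (1 / (q * Real.log q)) := by
      intro q hq
      rw [Finset.mem_filter, hP, Finset.mem_filter, Finset.mem_range] at hq
      have h2 := sum_inv_rough_le hq.1.2.two_le (show q ≤ n by omega)
        (R := (Finset.Icc 1 n).filter
              (fun b => n < q * b ∧ ∀ r, r.Prime → r ∣ b → q ≤ r)) (by
          intro b hb
          rw [Finset.mem_filter, Finset.mem_Icc] at hb
          exact ⟨hb.1.1, hb.1.2, hb.2.2⟩)
      calc (1 : ℝ) / q * _ ≤ 1 / q * ((1 + 2 * Real.log n) / Real.log q) := by gcongr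
        _ = _ := by rw [div_mul_div_comm, one_mul, mul_one_div]
    refine (Finset.sum_le_sum h1).trans ?_
    rw [← Finset.mul_sum]
    refine mul_le_mul_of_nonneg_left (sum_inv_prime_mul_log_le hK fun q hq => ?_) (by linarith)
    rw [Finset.mem_filter, hP, Finset.mem_filter] at hq
    exact ⟨hq.1.2, not_lt.1 hq.2⟩

theorem delta_one_lt_delta_zero {n m k K : ℕ} (hn : 2 ≤ n) (hm : n ^ 3 < m) (hK : 1 ≤ K)
    (hk : 1 ≤ k) (hkm : k + Nat.log 2 n + 1 = Nat.log 2 m)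
    (h : 8 * (1 + Real.log (Nat.log 2 m)) +
      8 * ((Nat.log 2 n + 2) / k) * (1 + Real.log n) +
      (2 ^ K + (1 + 2 * Real.log n) * (8 / (K * Real.log 2))) < Real.log n) :
    delta 1 n m < delta 0 n m := by
  have hnm : n < m := lt_of_le_of_lt (Nat.le_self_pow (by norm_num) n) hm
  set M := primorial (m - 1) * (m * n).factorial with hMdef
  have hM0 : 0 < M := Nat.mul_pos (primorial_pos _) (Nat.factorial_pos _)
  have hM : ∀ s, 1 ≤ s → s ≤ m * n → s * primorial (m - 1) ∣ M := by
    intro s h1 h2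
    rw [mul_comm]
    exact Nat.mul_dvd_mul_left _ (Nat.dvd_factorial h1 h2)
  have hL : Llcm n m ∣ M := Llcm_dvd_iff.2 fun d h1 h2 =>
    (Dvd.intro _ rfl).trans (hM d (by omega) (h2.le.trans (Nat.le_mul_of_pos_right m (by omega))))
  have hM0' : (0 : ℚ) < M := by exact_mod_cast hM0
  rw [delta_eq_of_dvd hL hM0, delta_eq_of_dvd hL hM0]
  refine div_lt_div_of_pos_right ?_ hM0'
  rw [Nat.cast_lt, ← Nat.cast_lt (α := ℝ)]
  refine (card_divCount_one_le hn hm hM).trans_lt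
    (lt_of_lt_of_le ?_ (card_divCount_zero_ge hnm hM))
  have hW := primorial_pos (m - 1)
  have hD : (0 : ℝ) < M * ((primorial (m - 1)).totient / (primorial (m - 1) : ℝ)) := by
    have h1 : (0 : ℝ) < (primorial (m - 1)).totient := by exact_mod_cast Nat.totient_pos.2 hW
    have h2 : (0 : ℝ) < primorial (m - 1) := by exact_mod_cast hW
    have h3 : (0 : ℝ) < M := by exact_mod_cast hM0
    positivity
  refine mul_lt_mul_of_pos_left ?_ hD
  have e1 := sum_inv_prime_lt_le (m := m) (S := (Finset.range m).filter Nat.Prime) (by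
    intro p hp; simp at hp; exact ⟨hp.2, hp.1⟩)
  have e2 := sum_inv_prime_top_le hk hkm
    (S := (Finset.range m).filter (fun p => p.Prime ∧ m ≤ p * n)) (by
    intro p hp; simp at hp; exact ⟨hp.2.1, hp.1, hp.2.2⟩)
  have e3 := sum_sum_inv_rough_le hn hK
  have e4 := sum_inv_Icc_le n
  have e5 := le_sum_inv_Icc n
  have e6 : Real.log n ≤ Real.log (n + 1) :=
    Real.log_le_log (by exact_mod_cast (by omega : 0 < n)) (by linarith)
  have hs0 : 0 ≤ ∑ e ∈ Finset.Icc 1 n, (1 : ℝ) / e := Finset.sum_nonneg fun _ _ => by positivity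
  have e7 := mul_le_mul e2 e4 hs0 (by positivity)
  have e8 : 2 * (4 * ((Nat.log 2 n : ℝ) + 2) / k * (1 + Real.log n)) =
      8 * (((Nat.log 2 n : ℝ) + 2) / k) * (1 + Real.log n) := by ring
  linarith

lemma delta_one_lt_delta_zero_of_log {n m : ℕ} {U : ℝ} (hn : 2 ^ 102 ≤ Real.log n)
    (hU : 32 * (1 + Real.log n) ^ 2 ≤ U) (hlog : Real.log U = Real.log n / 100)
    (h1 : U ≤ Real.log m) (h2 : Real.log m ≤ U + 3) :
    2 ≤ n ∧ n ^ 3 < m ∧ delta 1 n m < delta 0 n m := by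
  have hl2 := Real.log_two_gt_d9
  have hl2' := Real.log_two_lt_d9
  have hn2 : 2 ≤ n := by
    by_contra hlt
    have : n = 0 ∨ n = 1 := by omega
    rcases this with rfl | rfl <;> norm_num at hn
  have hnr : (0 : ℝ) < n := by exact_mod_cast (by omega : 0 < n)
  set l := Real.log n with hl
  have hl1 : 100 ≤ l := le_trans (by norm_num) hn
  have hU1 : 32 * (1 + l) ≤ U := by nlinarith
  have hm0 : 0 < m := by
    rcases Nat.eq_zero_or_pos m with rfl | h
    · simp at h1; linarith
    · exact h
  have hmr : (0 : ℝ) < m := by exact_mod_cast hm0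
  have hm3 : n ^ 3 < m := by
    have : Real.log ((n : ℝ) ^ 3) < Real.log m := by
      rw [Real.log_pow]; push_cast; linarith
    exact_mod_cast (Real.log_lt_log_iff (by positivity) hmr).1 this
  refine ⟨hn2, hm3, ?_⟩
  have up : ∀ a : ℕ, 0 < a → (Nat.log 2 a : ℝ) * Real.log 2 ≤ Real.log a := by
    intro a ha
    rw [← Real.log_pow]
    refine Real.log_le_log (by positivity) ?_
    exact_mod_cast Nat.pow_log_le_self 2 ha.ne'
  have low : Real.log m ≤ ((Nat.log 2 m : ℝ) + 1) * Real.log 2 := by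
    have := Real.log_le_log hmr (show (m : ℝ) ≤ 2 ^ (Nat.log 2 m + 1) by
      exact_mod_cast (Nat.lt_pow_succ_log_self (by norm_num) m).le)
    rw [Real.log_pow] at this
    exact_mod_cast this
  have um := up m hm0
  have un := up n (by omega)
  have g1 : (Nat.log 2 m : ℝ) ≤ 2 * U := by nlinarith
  have g2 : U - 1 ≤ (Nat.log 2 m : ℝ) := by nlinarith
  have g3 : (Nat.log 2 n : ℝ) ≤ 2 * l := by nlinarith [Nat.cast_nonneg (α := ℝ) (Nat.log 2 n)]
  obtain ⟨k, hk⟩ : ∃ k, Nat.log 2 m = Nat.log 2 n + 1 + k := by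
    refine Nat.exists_eq_add_of_le ?_
    have : ((Nat.log 2 n + 1 : ℕ) : ℝ) ≤ Nat.log 2 m := by push_cast; linarith
    exact_mod_cast this
  have hkr : (Nat.log 2 m : ℝ) = Nat.log 2 n + 1 + k := by exact_mod_cast hk
  have hkU : U / 2 ≤ k := by linarith
  have hk1 : 1 ≤ k := by
    have : (0 : ℝ) < k := by linarith
    exact_mod_cast this
  refine delta_one_lt_delta_zero (K := 100) hn2 hm3 (by norm_num) hk1 (by omega) ?_
  have hU0 : 0 < U := by linarith
  have i1 : Real.log (Nat.log 2 m) ≤ 0.7 + l / 100 := by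
    have : Real.log (Nat.log 2 m) ≤ Real.log (2 * U) := Real.log_le_log (by linarith) g1
    rw [Real.log_mul (by norm_num) hU0.ne', hlog] at this
    linarith
  have i2 : 8 * (((Nat.log 2 n : ℝ) + 2) / k) * (1 + Real.log n) ≤ 1 := by
    have hk0 : (0 : ℝ) < k := by linarith
    rw [← hl, mul_div_assoc', div_mul_eq_mul_div, div_le_one hk0]
    nlinarith
  have i3 : (8 : ℝ) / ((100 : ℕ) * Real.log 2) ≤ 0.116 := by
    rw [div_le_iff₀ (by positivity)]; push_cast; linarith
  have i4 : (1 + 2 * l) * ((8 : ℝ) / ((100 : ℕ) * Real.log 2)) ≤ (1 + 2 * l) * 0.116 :=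
    mul_le_mul_of_nonneg_left i3 (by linarith)
  norm_num at hn i4 i2 i1 ⊢
  linarith

lemma le_floor_inv_of_large {C F x : ℝ} (hC : 0 < C) (hx : 3 ≤ x)
    (hxF : x ^ 80 ≤ F * Real.exp x) (hx' : 36 * F * (C + 1) ≤ Real.exp x) :
    C * Real.exp x ≤ (⌊1 / (4 * (9 * x ^ 80 / Real.exp (x ^ 2)))⌋₊ : ℝ) := by
  have h1 := Nat.lt_floor_add_one (1 / (4 * (9 * x ^ 80 / Real.exp (x ^ 2))))
  suffices h : (C + 1) * Real.exp x ≤ 1 / (4 * (9 * x ^ 80 / Real.exp (x ^ 2))) by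
    have := Real.one_le_exp (show 0 ≤ x by linarith)
    linarith
  have hx0 : 0 < x ^ 80 := by positivity
  rw [show 1 / (4 * (9 * x ^ 80 / Real.exp (x ^ 2))) = Real.exp (x ^ 2) / (36 * x ^ 80) by
    field_simp; norm_num, le_div_iff₀ (by positivity)]
  calc (C + 1) * Real.exp x * (36 * x ^ 80)
      ≤ (C + 1) * Real.exp x * (36 * (F * Real.exp x)) := by gcongr
    _ = 36 * F * (C + 1) * (Real.exp x * Real.exp x) := by ring
    _ ≤ Real.exp x * (Real.exp x * Real.exp x) := by gcongr
    _ = Real.exp (x + (x + x)) := by rw [Real.exp_add, Real.exp_add]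
    _ ≤ Real.exp (x ^ 2) := Real.exp_le_exp.2 (by nlinarith)

lemma exists_interleaved_local_maxima {n t : ℕ} {x w : ℝ} (hx : 10 ^ 9 ≤ x)
    (hxn : (n : ℝ) = x ^ 4000) (hn : 2 ^ 102 ≤ Real.log n)
    (hp : ∀ u : ℝ, (x ^ 2) ^ 20 ≤ u → u ≤ 2 * (x ^ 2) ^ 20 →
      ∃ p : ℕ, p.Prime ∧ |u - Real.log p| ≤ 2 * u ^ 2 / Real.exp (x ^ 2))
    (hw : w = 9 * x ^ 80 / Real.exp (x ^ 2)) (ht : 4 * w * t ≤ 1) :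
    ∃ m m' : ℕ → ℕ,
        (∀ j : ℕ, 1 ≤ j → j ≤ t → n + 2 ≤ m j) ∧
        (∀ j : ℕ, 1 ≤ j → j ≤ t → m j < m' j) ∧
        (∀ j : ℕ, 1 ≤ j → j < t → m' j < m (j + 1)) ∧
        (∀ j : ℕ, 1 ≤ j → j ≤ t → delta 1 n (m j) < delta 1 n (m j + 1)) ∧
        (∀ j : ℕ, 1 ≤ j → j ≤ t → delta 1 n (m' j + 1) < delta 1 n (m' j)) := by
  have hx0 : 0 < x := by linarith
  have hw0 : 0 < w := by rw [hw]; positivity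
  obtain ⟨U, hU⟩ : ∃ U, U = x ^ 40 := ⟨_, rfl⟩
  have hlogn : Real.log n = 4000 * Real.log x := by rw [hxn, Real.log_pow]; norm_num
  have hlogU : Real.log U = Real.log n / 100 := by
    rw [hlogn, hU, Real.log_pow]; push_cast; ring
  have hUx : 32 * (1 + Real.log n) ^ 2 ≤ U := by
    have h1 := Real.log_le_sub_one_of_pos hx0
    have h2 : (1 + Real.log n) ^ 2 ≤ (4000 * x) ^ 2 :=
      pow_le_pow_left₀ (by have : (0 : ℝ) < 2 ^ 102 := by norm_num
                           linarith) (by linarith) 2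
    have h3 : x ^ 3 ≤ x ^ 40 := pow_le_pow_right₀ (by linarith) (by norm_num)
    have h4 : 10 ^ 9 * x ^ 2 ≤ x ^ 3 := by nlinarith [sq_nonneg x]
    rw [hU]
    nlinarith [sq_nonneg x]
  have hU2 : 32 ≤ U := by
    have : (0 : ℝ) < 2 ^ 102 := by norm_num
    nlinarith
  have hprime : ∀ u, U ≤ u → u ≤ U + 2 → ∃ p : ℕ, p.Prime ∧ |u - Real.log p| < w := by
    intro u h1 h2
    rw [← pow_mul, ← hU] at hp
    obtain ⟨p, hpp, h⟩ := hp u h1 (by linarith)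
    refine ⟨p, hpp, h.trans_lt ?_⟩
    rw [hw]
    refine div_lt_div_of_pos_right ?_ (Real.exp_pos _)
    have h3 : u ^ 2 ≤ (2 * x ^ 40) ^ 2 := pow_le_pow_left₀ (by linarith) (by linarith) 2
    have h4 : 0 < x ^ 80 := by positivity
    nlinarith
  have hl2 := Real.log_two_gt_d9
  have hl2' := Real.log_two_lt_d9
  have key : ∀ j : ℕ, ∃ m m' : ℕ, 1 ≤ j → j ≤ t →
      (0 < m ∧ 0 < m' ∧ n + 2 ≤ m ∧ |U + 1 + 4 * w * (j - 1) - Real.log m| < w ∧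
      |U + 1 + 4 * w * (j - 1) + 2 * w - Real.log m'| < w ∧
      delta 1 n m < delta 1 n (m + 1) ∧ delta 1 n (m' + 1) < delta 1 n m') := by
    intro j
    by_cases hj : 1 ≤ j ∧ j ≤ t
    · obtain ⟨hj1, hjt⟩ := hj
      have hj1' : (1 : ℝ) ≤ j := by exact_mod_cast hj1
      have hjt' : (j : ℝ) ≤ t := by exact_mod_cast hjt
      have a1 : 0 ≤ 4 * w * (j - 1) := mul_nonneg (by linarith) (by linarith)
      have a2 : 4 * w * (j - 1) + 4 * w ≤ 1 := by nlinarith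
      obtain ⟨m, hm, hmu⟩ := hprime (U + 1 + 4 * w * (j - 1)) (by linarith) (by linarith)
      obtain ⟨q, hq, hqu⟩ := hprime (U + 1 + 4 * w * (j - 1) + 2 * w - Real.log 2)
        (by linarith) (by linarith)
      have hq0 : (0 : ℝ) < q := by exact_mod_cast hq.pos
      have hq2 : Real.log ((2 * q : ℕ) : ℝ) = Real.log 2 + Real.log q := by
        push_cast
        exact Real.log_mul (by norm_num) hq0.ne'
      have hmu' := abs_lt.1 hmu
      have hqu' := abs_lt.1 hqu
      obtain ⟨hn2, hm3, hmd⟩ := delta_one_lt_delta_zero_of_log (m := m) hn hUx hlogU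
        (by linarith) (by linarith)
      obtain ⟨-, hq3, -⟩ := delta_one_lt_delta_zero_of_log (m := 2 * q) hn hUx hlogU
        (by rw [hq2]; linarith) (by rw [hq2]; linarith)
      have hn3 : 4 * n ≤ n ^ 3 := by nlinarith [Nat.mul_le_mul hn2 hn2]
      refine ⟨m, 2 * q, fun _ _ => ⟨hm.pos, by have := hq.pos; omega, by omega, hmu, ?_,
        delta_one_lt_succ_of_prime hm (by omega) hmd,
        delta_one_succ_lt_of_two_mul_prime hn2 hq (by omega)⟩⟩
      rw [hq2, abs_lt]
      constructor <;> linarith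
    · exact ⟨0, 0, fun h1 h2 => absurd ⟨h1, h2⟩ hj⟩
  choose m m' hmm using key
  refine ⟨m, m', fun j h1 h2 => (hmm j h1 h2).2.2.1, fun j h1 h2 => ?_, fun j h1 h2 => ?_,
    fun j h1 h2 => (hmm j h1 h2).2.2.2.2.2.1, fun j h1 h2 => (hmm j h1 h2).2.2.2.2.2.2⟩
  · obtain ⟨hm0, hm0', -, ha, hb, -⟩ := hmm j h1 h2
    rw [abs_lt] at ha hb
    have : Real.log (m j) < Real.log (m' j) := by linarith
    exact_mod_cast (Real.log_lt_log_iff (by exact_mod_cast hm0) (by exact_mod_cast hm0')).1 this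
  · obtain ⟨-, hm0', -, -, hb, -⟩ := hmm j h1 h2.le
    obtain ⟨hm0, -, -, ha, -⟩ := hmm (j + 1) (by omega) h2
    rw [abs_lt] at ha hb
    push_cast at ha
    have : Real.log (m' j) < Real.log (m (j + 1)) := by linarith
    exact_mod_cast (Real.log_lt_log_iff (by exact_mod_cast hm0') (by exact_mod_cast hm0)).1 this

/-- There is a constant `c > 0` such that for every `C > 0` and all sufficiently
large `n`, there are `t ≥ C·exp(n^c)` pairwise interleaved indices
`m_1 < m_1' < m_2 < m_2' < ⋯ < m_t < m_t'`, all at least `n+2`, with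
`δ_1(n, m_j + 1) > δ_1(n, m_j)` and `δ_1(n, m_j' + 1) < δ_1(n, m_j')` for all
`1 ≤ j ≤ t`: the sequence `(δ_1(n,m))_{m ≥ n+2}` has superpolynomially many
local maxima. -/
theorem delta_one_many_local_maxima :
    ∃ c : ℝ, 0 < c ∧ ∀ C : ℝ, 0 < C → ∃ N : ℕ, ∀ n : ℕ, N ≤ n →
      ∃ t : ℕ, C * Real.exp ((n : ℝ) ^ c) ≤ (t : ℝ) ∧
      ∃ m m' : ℕ → ℕ,
        (∀ j : ℕ, 1 ≤ j → j ≤ t → n + 2 ≤ m j) ∧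
        (∀ j : ℕ, 1 ≤ j → j ≤ t → m j < m' j) ∧
        (∀ j : ℕ, 1 ≤ j → j < t → m' j < m (j + 1)) ∧
        (∀ j : ℕ, 1 ≤ j → j ≤ t → delta 1 n (m j) < delta 1 n (m j + 1)) ∧
        (∀ j : ℕ, 1 ≤ j → j ≤ t → delta 1 n (m' j + 1) < delta 1 n (m' j)) := by
  refine ⟨1 / 4000, by norm_num, fun C hC => ?_⟩
  obtain ⟨F, hF, hFx⟩ := exists_pow_le_mul_exp 80
  have htn : Filter.Tendsto (fun n : ℕ => (n : ℝ) ^ (1 / 4000 : ℝ)) Filter.atTop Filter.atTop :=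
    (tendsto_rpow_atTop (by norm_num)).comp tendsto_natCast_atTop_atTop
  have hpr := ((Filter.tendsto_pow_atTop (α := ℝ) two_ne_zero).comp htn).eventually
    eventually_exists_prime_log_near
  have hlog := (Real.tendsto_log_atTop.comp (tendsto_natCast_atTop_atTop (R := ℝ))).eventually_ge_atTop
    (2 ^ 102)
  have hexp := (Real.tendsto_exp_atTop.comp htn).eventually_ge_atTop (36 * F * (C + 1))
  obtain ⟨N, hN⟩ := Filter.eventually_atTop.1
    (((hpr.and hlog).and hexp).and (htn.eventually_ge_atTop (10 ^ 9)))
  refine ⟨N, fun n hn => ?_⟩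
  obtain ⟨⟨⟨h1, h2⟩, h3⟩, h4⟩ := hN n hn
  set x := (n : ℝ) ^ (1 / 4000 : ℝ) with hx
  have hx3 : 3 ≤ x := le_trans (by norm_num) h4
  have hw0 : 0 < 4 * (9 * x ^ 80 / Real.exp (x ^ 2)) := by positivity
  refine ⟨⌊1 / (4 * (9 * x ^ 80 / Real.exp (x ^ 2)))⌋₊,
    le_floor_inv_of_large hC hx3 (hFx x (by linarith)) h3,
    exists_interleaved_local_maxima h4 ?_ h2 h1 rfl ?_⟩
  · rw [hx, ← Real.rpow_natCast, ← Real.rpow_mul (Nat.cast_nonneg n)]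
    norm_num
  · have := Nat.floor_le (show 0 ≤ 1 / (4 * (9 * x ^ 80 / Real.exp (x ^ 2))) by positivity)
    rw [le_div_iff₀ hw0] at this
    linarith
end
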